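/- arXiv:2309.16766 — 4 statements merged into one kernel-verified Lean document; each statement's English description precedes it below -/
import Mathlib

section
/- Let H be a complex Hilbert space, 𝒜 a von Neumann algebra on H, and Ω ∈ H a vector that is cyclic and separating for 𝒜. Then there exists an antiunitary operator J on H with J ∘ J = id such that for every a ∈ 𝒜 the operator J ∘ a ∘ J belongs to the commutant 𝒜', and for every a' ∈ 𝒜' the operator J ∘ a' ∘ J belongs to 𝒜 (so that J 𝒜 J = 𝒜'). (Existence of a modular conjugation.) -/
open scoped ComplexInnerProductSpace

noncomputable section

variable {H : Type*} [NormedAddCommGroup H] [InnerProductSpace ℂ H] [CompleteSpace H]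

/-- A vector `Ω` is cyclic for a set `S` of bounded operators if `{a Ω : a ∈ S}` is dense. -/
def IsCyclicVector (S : Set (H →L[ℂ] H)) (Ω : H) : Prop :=
  Dense {x : H | ∃ a ∈ S, a Ω = x}

set_option linter.unusedSectionVars false

namespace MT
open Filter Topology

theorem comm_apply {A : VonNeumannAlgebra H} {a a' : H →L[ℂ] H} (ha : a ∈ A)
    (ha' : a' ∈ A.commutant) (x : H) : a (a' x) = a' (a x) := by
  have := (VonNeumannAlgebra.mem_commutant_iff.1 ha') a ha
  exact DFunLike.congr_fun this x

theorem mem_of_comm {A : VonNeumannAlgebra H} {T : H →L[ℂ] H}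
    (h : ∀ y ∈ A.commutant, ∀ x, T (y x) = y (T x)) : T ∈ A := by
  rw [← VonNeumannAlgebra.commutant_commutant A, VonNeumannAlgebra.mem_commutant_iff]
  intro g hg
  ext x
  exact (h g hg x).symm

theorem mem_comm_of_comm {A : VonNeumannAlgebra H} {T : H →L[ℂ] H}
    (h : ∀ y ∈ A, ∀ x, T (y x) = y (T x)) : T ∈ A.commutant := by
  rw [VonNeumannAlgebra.mem_commutant_iff]
  intro g hg
  ext x
  exact (h g hg x).symm

theorem smul_memA {A : VonNeumannAlgebra H} {a : H →L[ℂ] H} (c : ℂ) (ha : a ∈ A) : c • a ∈ A := by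
  apply mem_of_comm
  intro y hy x
  simp [comm_apply ha hy]

theorem cfc_mem {A : VonNeumannAlgebra H} {a : H →L[ℂ] H} (ha : a ∈ A) (f : ℝ → ℝ) :
    cfc f a ∈ A := by
  by_cases hs : IsSelfAdjoint a
  · apply mem_of_comm
    intro y hy x
    have h1 : Commute a y := (VonNeumannAlgebra.mem_commutant_iff.1 hy) a ha
    have h2 : Commute (cfc f a) y := h1.cfc_real f
    exact DFunLike.congr_fun h2.eq x
  · rw [cfc_apply_of_not_predicate a hs]
    exact zero_mem A

theorem ext_cyc {S : Set (H →L[ℂ] H)} {Ω : H} (h : IsCyclicVector S Ω) {f g : H → H}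
    (hf : Continuous f) (hg : Continuous g) (hfg : ∀ a ∈ S, f (a Ω) = g (a Ω)) : f = g := by
  apply Continuous.ext_on h hf hg
  rintro _ ⟨a, ha, rfl⟩
  exact hfg a ha

theorem sep_ext {A : VonNeumannAlgebra H} {Ω : H}
    (hsep : IsCyclicVector (A.commutant : Set (H →L[ℂ] H)) Ω) {a b : H →L[ℂ] H}
    (ha : a ∈ A) (hb : b ∈ A) (h : a Ω = b Ω) : a = b := by
  ext x
  refine congrFun (ext_cyc hsep a.continuous b.continuous ?_) x
  intro y hy
  rw [comm_apply ha hy, comm_apply hb hy, h]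

theorem adj_inner (a : H →L[ℂ] H) (x y : H) : ⟪star a x, y⟫ = ⟪x, a y⟫ := by
  rw [ContinuousLinearMap.star_eq_adjoint, ContinuousLinearMap.adjoint_inner_left]

theorem adj_inner' (a : H →L[ℂ] H) (x y : H) : ⟪x, star a y⟫ = ⟪a x, y⟫ := by
  rw [ContinuousLinearMap.star_eq_adjoint, ContinuousLinearMap.adjoint_inner_right]

theorem inner_ext_cyc {S : Set (H →L[ℂ] H)} {Ω : H} (h : IsCyclicVector S Ω) {x y : H}
    (hh : ∀ a ∈ S, ⟪x, a Ω⟫ = ⟪y, a Ω⟫) : x = y := by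
  apply ext_inner_right ℂ
  intro v
  have hc : Continuous fun v : H => ⟪x, v⟫ := by fun_prop
  have hc' : Continuous fun v : H => ⟪y, v⟫ := by fun_prop
  refine congrFun (Continuous.ext_on h hc hc' ?_) v
  rintro _ ⟨a, ha, rfl⟩
  exact hh a ha

theorem cauchy_of_dense {D : Set H} (hD : Dense D) {h : ℕ → H →L[ℂ] H} (hb : ∀ n, ‖h n‖ ≤ 1)
    (hc : ∀ d ∈ D, CauchySeq fun n => h n d) (x : H) : CauchySeq fun n => h n x := by
  rw [Metric.cauchySeq_iff]
  intro ε hε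
  obtain ⟨d, hd, hdx⟩ := Metric.dense_iff.1 hD x (ε/3) (by positivity)
  obtain ⟨N, hN⟩ := Metric.cauchySeq_iff.1 (hc _ hdx) (ε/3) (by positivity)
  refine ⟨N, fun m hm n hn => ?_⟩
  have h1 := hN m hm n hn
  have h2 : ∀ m, dist (h m x) (h m d) < ε/3 := by
    intro m
    rw [dist_eq_norm, ← map_sub]
    calc _ ≤ ‖h m‖ * ‖x - d‖ := (h m).le_opNorm _
      _ ≤ 1 * ‖x - d‖ := by gcongr; exact hb m
      _ < ε/3 := by
        rw [Metric.mem_ball, dist_comm, dist_eq_norm] at hd; linarith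
  have h3 := dist_triangle (h m x) (h m d) (h n d)
  have h4 := dist_triangle (h m x) (h n d) (h n x)
  have := h2 m
  have := h2 n
  rw [dist_comm] at this
  linarith

theorem strong_lim {A : VonNeumannAlgebra H} {Ω : H}
    (hsep : IsCyclicVector (A.commutant : Set (H →L[ℂ] H)) Ω) {h : ℕ → H →L[ℂ] H}
    (hA : ∀ n, h n ∈ A) (hb : ∀ n, ‖h n‖ ≤ 1) {α β : H}
    (hα : Tendsto (fun n => h n Ω) atTop (𝓝 α)) (hβ : Tendsto (fun n => star (h n) Ω) atTop (𝓝 β)) :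
    ∃ g ∈ A, ‖g‖ ≤ 1 ∧ g Ω = α ∧ star g Ω = β := by
  have hcau : ∀ x, CauchySeq fun n => h n x := by
    apply cauchy_of_dense hsep hb
    rintro _ ⟨y, hy, rfl⟩
    have : (fun n => h n (y Ω)) = fun n => y (h n Ω) := by
      ext n; exact comm_apply (hA n) hy _
    rw [this]
    exact ((y.continuous.tendsto _).comp hα).cauchySeq
  choose g0 hg0 using fun x => cauchySeq_tendsto_of_complete (hcau x)
  let g : H →L[ℂ] H := ContinuousLinearMap.ofTendstoOfBoundedRange (𝕜 := ℂ) g0 h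
    (tendsto_pi_nhds.2 hg0)
    (by
      rw [isBounded_iff_forall_norm_le]
      exact ⟨1, by rintro _ ⟨n, rfl⟩; exact hb n⟩)
  have hg : ∀ x, Tendsto (fun n => h n x) atTop (𝓝 (g x)) := hg0
  refine ⟨g, ?_, ?_, tendsto_nhds_unique (hg Ω) hα, ?_⟩
  · apply mem_of_comm
    intro y hy x
    have h1 := hg (y x)
    have h2 := (y.continuous.tendsto _).comp (hg x)
    refine tendsto_nhds_unique h1 (h2.congr fun n => ?_)
    exact (comm_apply (hA n) hy x).symm
  · refine ContinuousLinearMap.opNorm_le_bound _ zero_le_one fun x => ?_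
    refine le_of_tendsto (hg x).norm (Eventually.of_forall fun n => ?_)
    exact (h n).le_of_opNorm_le (hb n) x
  · apply ext_inner_right ℂ
    intro v
    rw [adj_inner]
    have h1 : Tendsto (fun n => ⟪Ω, h n v⟫) atTop (𝓝 ⟪Ω, g v⟫) := tendsto_const_nhds.inner (hg v)
    have h2 : Tendsto (fun n => ⟪star (h n) Ω, v⟫) atTop (𝓝 ⟪β, v⟫) := hβ.inner tendsto_const_nhds
    refine tendsto_nhds_unique h1 (h2.congr fun n => ?_)
    rw [adj_inner]

end MT

namespace MT
open Filter Topology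

theorem amgm {c a b : ℝ} (hc : 0 < c) : 2 * (a * b) ≤ c * b ^ 2 + c⁻¹ * a ^ 2 := by
  have h : c * b ^ 2 + c⁻¹ * a ^ 2 - 2 * (a * b) = c⁻¹ * (c * b - a) ^ 2 := by field_simp; ring
  have : 0 ≤ c⁻¹ * (c * b - a) ^ 2 := by positivity
  linarith

theorem rn_key {A : VonNeumannAlgebra H} (Ω : H) {x' : H →L[ℂ] H} (hx' : x' ∈ A.commutant)
    (hx1 : ‖x'‖ ≤ 1) {c : ℝ} (hc : 0 < c) {k : H →L[ℂ] H} (hk : k ∈ A) {ε : ℝ} (hε : 0 < ε) :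
    ∃ h ∈ A, ‖h‖ ≤ 1 ∧ 2 * (⟪x' Ω, k Ω⟫).re - c⁻¹ * (ε * ‖Ω‖ ^ 2) ≤
      c * (⟪star h Ω, k Ω⟫).re + c⁻¹ * (⟪star k Ω, h Ω⟫).re := by
  set m := k * star k with hm
  have hmA : m ∈ A := mul_mem hk (star_mem hk)
  have hmsa : IsSelfAdjoint m := IsSelfAdjoint.mul_star_self k
  have hm0 : 0 ≤ m := mul_star_self_nonneg k
  have hsp : ∀ t ∈ spectrum ℝ m, 0 ≤ t := fun t ht => spectrum_nonneg_of_nonneg hm0 ht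
  set s : ℝ → ℝ := fun t => √√(ε ^ 2 + |t|) with hs
  have hsc : Continuous s := by fun_prop
  have hsp0 : ∀ t, 0 < s t := fun t => by positivity
  have hs2 : ∀ t, s t ^ 2 = √(ε ^ 2 + |t|) := fun t => Real.sq_sqrt (by positivity)
  have hs4 : ∀ t, s t ^ 4 = ε ^ 2 + |t| := fun t => by
    rw [show s t ^ 4 = (s t ^ 2) ^ 2 by ring, hs2, Real.sq_sqrt (by positivity)]
  have hs2ge : ∀ t, ε ≤ s t ^ 2 := fun t => by
    rw [hs2]; apply Real.le_sqrt_of_sq_le; linarith [abs_nonneg t]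
  have hsic : Continuous fun t => (s t)⁻¹ := hsc.inv₀ fun t => (hsp0 t).ne'
  set q := cfc s m
  set qi := cfc (fun t => (s t)⁻¹) m
  set gi := qi * qi with hgi
  have hq_sa : IsSelfAdjoint q := cfc_predicate _ _
  have hqi_sa : IsSelfAdjoint qi := cfc_predicate _ _
  have hgi_sa : IsSelfAdjoint gi := by
    rw [hgi, IsSelfAdjoint, star_mul, hqi_sa.star_eq]
  have hqA : q ∈ A := cfc_mem hmA _
  have hqiA : qi ∈ A := cfc_mem hmA _
  have hgiA : gi ∈ A := mul_mem hqiA hqiA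
  have hqqi : q * qi = 1 := by
    rw [← cfc_mul s (fun t => (s t)⁻¹) m hsc.continuousOn hsic.continuousOn]
    rw [show (fun x => s x * (s x)⁻¹) = fun _ => (1:ℝ) from
      funext fun t => mul_inv_cancel₀ (hsp0 t).ne']
    exact cfc_const_one ℝ m
  have hgi_eq : gi = cfc (fun t => (s t ^ 2)⁻¹) m := by
    rw [hgi, ← cfc_mul _ _ m hsic.continuousOn hsic.continuousOn]
    congr 1; ext t; rw [← mul_inv, sq]
  have hs2ic : Continuous fun t => (s t ^ 2)⁻¹ := (hsc.pow 2).inv₀ fun t => (pow_pos (hsp0 t) 2).ne'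
  have hmid : m = cfc (fun t : ℝ => t) m := (cfc_id' ℝ m).symm
  have hmgi : m * gi = q * q - (ε ^ 2 : ℝ) • gi := by
    rw [hgi_eq, ← cfc_mul _ _ m hsc.continuousOn hsc.continuousOn,
      ← cfc_smul (ε^2 : ℝ) _ m hs2ic.continuousOn,
      ← cfc_sub _ _ m (by fun_prop) (by simpa using (hs2ic.const_mul (ε^2)).continuousOn)]
    conv_lhs => rw [hmid]
    rw [cfc_id' ℝ m]
    conv_lhs => enter [1]; rw [hmid]
    rw [← cfc_mul _ _ m (by fun_prop) hs2ic.continuousOn]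
    apply cfc_congr
    intro t ht
    have h0 := hsp t ht
    have h4 := hs4 t
    have := hsp0 t
    rw [abs_of_nonneg h0] at h4
    simp only [smul_eq_mul]
    field_simp
    linarith
  have hgimgi : ‖gi * m * gi‖ ≤ 1 := by
    have : gi * m * gi = cfc (fun t => (s t ^ 2)⁻¹ * t * (s t ^ 2)⁻¹) m := by
      rw [cfc_mul _ _ m (by fun_prop) hs2ic.continuousOn,
        cfc_mul _ _ m hs2ic.continuousOn (by fun_prop), cfc_id' ℝ m, ← hgi_eq]
    rw [this]
    refine norm_cfc_le zero_le_one fun t ht => ?_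
    have h0 := hsp t ht
    have h4 := hs4 t
    have := hsp0 t
    rw [abs_of_nonneg h0] at h4
    rw [Real.norm_of_nonneg (by positivity)]
    have : (s t ^ 2)⁻¹ * t * (s t ^ 2)⁻¹ = t / s t ^ 4 := by field_simp
    rw [this, div_le_one (by positivity), h4]
    nlinarith
  have hgin : ‖gi‖ ≤ ε⁻¹ := by
    rw [hgi_eq]
    refine norm_cfc_le (by positivity) fun t ht => ?_
    have := hsp0 t
    rw [Real.norm_of_nonneg (by positivity)]
    exact inv_anti₀ hε (hs2ge t)
  refine ⟨star k * gi, mul_mem (star_mem hk) hgiA, ?_, ?_⟩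
  · have h1 : star (star k * gi) * (star k * gi) = gi * m * gi := by
      rw [star_mul, star_star, hgi_sa.star_eq, hm]; simp only [mul_assoc]
    have h2 : ‖star k * gi‖ * ‖star k * gi‖ ≤ 1 := by
      rw [← CStarRing.norm_star_mul_self, h1]; exact hgimgi
    nlinarith [norm_nonneg (star k * gi)]
  · have e1 : ⟪star (star k * gi) Ω, k Ω⟫ = ((‖qi (k Ω)‖ ^ 2 : ℝ) : ℂ) := by
      rw [star_mul, star_star, hgi_sa.star_eq, hgi]
      simp only [mul_apply_eq_comp]
      nth_rw 1 [← hqi_sa.star_eq]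
      rw [adj_inner, inner_self_eq_norm_sq_to_K]; norm_cast
    have e2 : ⟪star k Ω, (star k * gi) Ω⟫ = ((‖q Ω‖ ^ 2 : ℝ) : ℂ) - (ε ^ 2 : ℝ) * ⟪Ω, gi Ω⟫ := by
      rw [adj_inner]
      have : k ((star k * gi) Ω) = (m * gi) Ω := by rw [hm]; rfl
      rw [this, hmgi]
      simp only [sub_apply, mul_apply_eq_comp,
        smul_apply, inner_sub_right]
      congr 1
      · nth_rw 1 [← hq_sa.star_eq]
        rw [adj_inner', inner_self_eq_norm_sq_to_K]; norm_cast
      · rw [show (ε ^ 2 : ℝ) • gi Ω = ((ε ^ 2 : ℝ) : ℂ) • gi Ω from (Complex.coe_smul _ _).symm,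
          inner_smul_right]
    have e3 : (⟪Ω, gi Ω⟫).re ≤ ε⁻¹ * ‖Ω‖ ^ 2 := by
      calc (⟪Ω, gi Ω⟫).re ≤ ‖⟪Ω, gi Ω⟫‖ := Complex.re_le_norm _
        _ ≤ ‖Ω‖ * ‖gi Ω‖ := norm_inner_le_norm _ _
        _ ≤ ‖Ω‖ * (ε⁻¹ * ‖Ω‖) := by gcongr; exact gi.le_of_opNorm_le hgin _
        _ = _ := by ring
    have e4 : (⟪x' Ω, k Ω⟫).re ≤ ‖q Ω‖ * ‖qi (k Ω)‖ := by
      have : k Ω = q (qi (k Ω)) := by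
        rw [← mul_apply_eq_comp q qi, hqqi]; rfl
      have e : ⟪x' Ω, k Ω⟫ = ⟪x' (q Ω), qi (k Ω)⟫ := by
        conv_lhs => rw [this, ← hq_sa.star_eq]
        rw [adj_inner', comm_apply hqA hx']
      rw [e]
      calc _ ≤ ‖⟪x' (q Ω), qi (k Ω)⟫‖ := Complex.re_le_norm _
        _ ≤ ‖x' (q Ω)‖ * ‖qi (k Ω)‖ := norm_inner_le_norm _ _
        _ ≤ (1 * ‖q Ω‖) * ‖qi (k Ω)‖ := by gcongr; exact x'.le_of_opNorm_le hx1 _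
        _ = _ := by ring
    rw [e1, e2]
    have e5 := amgm (a := ‖q Ω‖) (b := ‖qi (k Ω)‖) hc
    have e6 : ε ^ 2 * (⟪Ω, gi Ω⟫).re ≤ ε * ‖Ω‖ ^ 2 := by
      calc _ ≤ ε ^ 2 * (ε⁻¹ * ‖Ω‖ ^ 2) := by gcongr
        _ = _ := by field_simp
    have e7 : c⁻¹ * (ε ^ 2 * (⟪Ω, gi Ω⟫).re) ≤ c⁻¹ * (ε * ‖Ω‖ ^ 2) := by gcongr
    simp only [Complex.sub_re, Complex.ofReal_re, Complex.re_ofReal_mul]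
    nlinarith

end MT

namespace MT
open Filter Topology

theorem sep_abstract {E : Type*} [NormedAddCommGroup E] [InnerProductSpace ℝ E] [CompleteSpace E]
    (D : Set E) (hne : D.Nonempty) (hcv : Convex ℝ D) (hcl : IsClosed D) {M : ℝ}
    (hM : ∀ e ∈ D, ‖e‖ ≤ M) (G : Submodule ℝ E) (hDG : D ⊆ G) (q : E)
    (hkey : ∀ κ ∈ G, ∀ ε > 0, ∃ e ∈ D, inner ℝ q κ - ε ≤ inner ℝ e κ) :
    ∃ d ∈ D, ∀ κ ∈ G, inner ℝ q κ = inner ℝ d κ := by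
  set C := G.topologicalClosure
  have hCc : IsClosed (C : Set E) := G.isClosed_topologicalClosure
  have : CompleteSpace C := hCc.completeSpace_coe
  set p := C.starProjection q
  have hp : ∀ κ ∈ C, inner ℝ p κ = inner ℝ q κ := by
    intro κ hκ
    have := C.starProjection_inner_eq_zero q κ hκ
    rw [inner_sub_left] at this
    linarith
  have hpC : p ∈ C := by exact C.starProjection_apply_mem q
  obtain ⟨d, hd, hmin⟩ := exists_norm_eq_iInf_of_complete_convex hne hcl.isComplete hcv p
  have hmin' := (norm_eq_iInf_iff_real_inner_le_zero hcv hd).1 hmin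
  have hM0 : 0 ≤ M := (norm_nonneg d).trans (hM d hd)
  set w := p - d with hw
  have hwC : w ∈ C := C.sub_mem hpC (G.le_topologicalClosure (hDG hd))
  have hle : ∀ ε > 0, inner ℝ p w - inner ℝ d w ≤ ε * (1 + ‖p‖ + M) := by
    intro ε hε
    have : w ∈ closure (G : Set E) := by rw [← Submodule.topologicalClosure_coe]; exact hwC
    obtain ⟨κ, hκ, hκw⟩ := Metric.mem_closure_iff.1 this ε hε
    rw [dist_eq_norm] at hκw
    obtain ⟨e, he, hek⟩ := hkey κ hκ ε hε
    have h1 := hmin' e he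
    rw [← hp κ (G.le_topologicalClosure hκ)] at hek
    have h2 : inner ℝ p w - inner ℝ p κ ≤ ‖p‖ * ε := by
      rw [← inner_sub_right]
      exact (real_inner_le_norm _ _).trans (by gcongr)
    have h3 : inner ℝ e κ - inner ℝ e w ≤ M * ε := by
      rw [← inner_sub_right]
      refine (real_inner_le_norm _ _).trans ?_
      rw [norm_sub_rev]
      gcongr
      exact hM e he
    rw [inner_sub_right, real_inner_comm e w, real_inner_comm d w] at h1
    nlinarith
  have hle0 : inner ℝ p w - inner ℝ d w ≤ 0 := by
    have hpos : 0 < 1 + ‖p‖ + M := by positivity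
    apply le_of_forall_pos_le_add
    intro ε hε
    have := hle (ε / (1 + ‖p‖ + M)) (by positivity)
    rw [div_mul_cancel₀ _ hpos.ne'] at this
    linarith
  rw [← inner_sub_left, ← hw, real_inner_self_eq_norm_sq] at hle0
  have hw0 : w = 0 := by
    rw [← norm_eq_zero]; nlinarith [norm_nonneg w]
  refine ⟨d, hd, fun κ hκ => ?_⟩
  rw [← hp κ (G.le_topologicalClosure hκ), sub_eq_zero.1 hw0]

attribute [local instance] InnerProductSpace.complexToReal

/-- graph vector -/
def gv (c : ℝ) (Ω : H) (k : H →L[ℂ] H) : WithLp 2 (H × H) :=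
  WithLp.toLp 2 (((√c)⁻¹ : ℝ) • k Ω, (√c : ℝ) • star k Ω)

theorem gv_add (c : ℝ) (Ω : H) (h k : H →L[ℂ] H) : gv c Ω (h + k) = gv c Ω h + gv c Ω k := by
  unfold gv
  rw [← WithLp.toLp_add]
  congr 1
  ext <;> simp [smul_add]

theorem gv_smul (c : ℝ) (Ω : H) (a : ℝ) (k : H →L[ℂ] H) :
    gv c Ω ((a : ℂ) • k) = a • gv c Ω k := by
  unfold gv
  rw [← WithLp.toLp_smul]
  congr 1
  rw [star_smul, Complex.star_def, Complex.conj_ofReal]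
  simp only [smul_apply, Complex.coe_smul, Prod.smul_mk]
  rw [smul_comm _ a, smul_comm _ a]

theorem gv_inner {c : ℝ} (hc : 0 < c) (Ω : H) (h k : H →L[ℂ] H) :
    inner ℝ (gv c Ω h) (gv c Ω (star k)) =
      c * (⟪star h Ω, k Ω⟫).re + c⁻¹ * (⟪star k Ω, h Ω⟫).re := by
  have h1 : √c * √c = c := Real.mul_self_sqrt hc.le
  rw [WithLp.prod_inner_apply]
  simp only [gv, real_inner_smul_left, real_inner_smul_right, star_star, ← mul_assoc, h1,
    ← mul_inv]
  rw [real_inner_comm]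
  rw [add_comm]
  rfl

theorem gv_convex (A : VonNeumannAlgebra H) (c : ℝ) (Ω : H) :
    Convex ℝ (gv c Ω '' {h | h ∈ A ∧ ‖h‖ ≤ 1}) := by
  rintro _ ⟨h, ⟨hA, h1⟩, rfl⟩ _ ⟨k, ⟨kA, k1⟩, rfl⟩ a b ha hb hab
  refine ⟨(a : ℂ) • h + (b : ℂ) • k, ⟨add_mem (smul_memA _ hA) (smul_memA _ kA), ?_⟩, ?_⟩
  · calc _ ≤ ‖(a : ℂ) • h‖ + ‖(b : ℂ) • k‖ := norm_add_le _ _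
      _ = a * ‖h‖ + b * ‖k‖ := by
        rw [norm_smul, norm_smul, Complex.norm_of_nonneg ha, Complex.norm_of_nonneg hb]
      _ ≤ a * 1 + b * 1 := by gcongr
      _ = 1 := by linarith
  · rw [gv_add, gv_smul, gv_smul]

theorem gv_closed {A : VonNeumannAlgebra H} {c : ℝ} (hc : 0 < c) {Ω : H}
    (hsep : IsCyclicVector (A.commutant : Set (H →L[ℂ] H)) Ω) :
    IsClosed (gv c Ω '' {h | h ∈ A ∧ ‖h‖ ≤ 1}) := by
  have hs : √c ≠ 0 := (Real.sqrt_pos.2 hc).ne'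
  apply IsSeqClosed.isClosed
  intro e p he hp
  choose h hh heq using he
  have h1 : Tendsto (fun n => h n Ω) atTop (𝓝 (√c • p.fst)) := by
    have : Tendsto (fun n => √c • (e n).fst) atTop (𝓝 (√c • p.fst)) :=
      (((WithLp.continuous_fst 2 H H).tendsto p).comp hp).const_smul _
    refine this.congr fun n => ?_
    rw [← heq n]; simp [gv, smul_smul, hs]
  have h2 : Tendsto (fun n => star (h n) Ω) atTop (𝓝 ((√c)⁻¹ • p.snd)) := by
    have : Tendsto (fun n => (√c)⁻¹ • (e n).snd) atTop (𝓝 ((√c)⁻¹ • p.snd)) :=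
      (((WithLp.continuous_snd 2 H H).tendsto p).comp hp).const_smul _
    refine this.congr fun n => ?_
    rw [← heq n]; simp [gv, smul_smul, hs]
  obtain ⟨g, gA, g1, gα, gβ⟩ := strong_lim hsep (fun n => (hh n).1) (fun n => (hh n).2) h1 h2
  refine ⟨g, ⟨gA, g1⟩, ?_⟩
  unfold gv
  rw [gα, gβ]
  simp only [smul_smul, inv_mul_cancel₀ hs, mul_inv_cancel₀ hs, one_smul]
  rfl

theorem rn {A : VonNeumannAlgebra H} {Ω : H}
    (hsep : IsCyclicVector (A.commutant : Set (H →L[ℂ] H)) Ω)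
    {x' : H →L[ℂ] H} (hx' : x' ∈ A.commutant)
    (hx1 : ‖x'‖ ≤ 1) {c : ℝ} (hc : 0 < c) :
    ∃ h ∈ A, ‖h‖ ≤ 1 ∧ ∀ k ∈ A,
      2 * ⟪x' Ω, k Ω⟫ = c * ⟪star h Ω, k Ω⟫ + (c : ℂ)⁻¹ * ⟪star k Ω, h Ω⟫ := by
  have hs : 0 < √c := Real.sqrt_pos.2 hc
  let G : Submodule ℝ (WithLp 2 (H × H)) :=
    { carrier := gv c Ω '' {h | h ∈ A}
      add_mem' := by
        rintro _ _ ⟨h, hA, rfl⟩ ⟨k, kA, rfl⟩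
        exact ⟨h + k, add_mem (S := VonNeumannAlgebra H) hA kA, gv_add _ _ _ _⟩
      zero_mem' := ⟨0, zero_mem A, by simp [gv]⟩
      smul_mem' := by
        rintro a _ ⟨h, hA, rfl⟩
        exact ⟨(a : ℂ) • h, smul_memA _ hA, gv_smul _ _ _ _⟩ }
  let q : WithLp 2 (H × H) := WithLp.toLp 2 (0, (2 * (√c)⁻¹ : ℝ) • x' Ω)
  have hq : ∀ k, inner ℝ q (gv c Ω (star k)) = 2 * (⟪x' Ω, k Ω⟫).re := by
    intro k
    rw [WithLp.prod_inner_apply]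
    simp only [q, gv, real_inner_smul_left, real_inner_smul_right, star_star, inner_zero_left,
      zero_add]
    rw [← mul_assoc, show √c * (2 * (√c)⁻¹) = 2 by field_simp]
    rfl
  obtain ⟨d, ⟨h, ⟨hA, h1⟩, rfl⟩, hd⟩ := sep_abstract (gv c Ω '' {h | h ∈ A ∧ ‖h‖ ≤ 1})
    ⟨_, 0, ⟨zero_mem A, by simp⟩, rfl⟩ (gv_convex A c Ω) (gv_closed hc hsep)
    (M := ‖(√c)⁻¹‖ * ‖Ω‖ + ‖√c‖ * ‖Ω‖)
    (by
      rintro _ ⟨h, ⟨hA, h1⟩, rfl⟩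
      have : gv c Ω h = WithLp.toLp 2 ((√c)⁻¹ • h Ω, 0) + WithLp.toLp 2 (0, √c • star h Ω) := by
        unfold gv
        rw [← WithLp.toLp_add]; simp
      rw [this]
      refine (norm_add_le _ _).trans ?_
      rw [WithLp.norm_toLp_fst, WithLp.norm_toLp_snd, norm_smul, norm_smul]
      have h2 : ‖h Ω‖ ≤ ‖Ω‖ := by simpa using h.le_of_opNorm_le h1 Ω
      have h3 : ‖star h Ω‖ ≤ ‖Ω‖ := by
        simpa using (star h).le_of_opNorm_le (c := 1) (by rwa [norm_star]) Ω
      gcongr)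
    G (Set.image_mono fun h hh => hh.1) q
    (by
      rintro _ ⟨k, kA, rfl⟩ ε hε
      obtain ⟨h, hA, h1, hh⟩ := rn_key Ω hx' hx1 hc (star_mem kA) (ε := ε * c / (1 + ‖Ω‖ ^ 2))
        (by positivity)
      refine ⟨_, ⟨h, ⟨hA, h1⟩, rfl⟩, ?_⟩
      have h5 := hq (star k)
      have h6 := gv_inner hc Ω h (star k)
      rw [star_star] at h5 h6
      rw [star_star] at hh
      rw [h5, h6]
      have : c⁻¹ * (ε * c / (1 + ‖Ω‖ ^ 2) * ‖Ω‖ ^ 2) ≤ ε := by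
        have : c⁻¹ * (ε * c / (1 + ‖Ω‖ ^ 2) * ‖Ω‖ ^ 2) = ε * (‖Ω‖ ^ 2 / (1 + ‖Ω‖ ^ 2)) := by
          field_simp
        rw [this]
        refine mul_le_of_le_one_right hε.le ?_
        rw [div_le_one (by positivity)]; linarith
      linarith)
  refine ⟨h, hA, h1, ?_⟩
  have hre : ∀ k ∈ A, 2 * (⟪x' Ω, k Ω⟫).re =
      c * (⟪star h Ω, k Ω⟫).re + c⁻¹ * (⟪star k Ω, h Ω⟫).re := by
    intro k kA
    rw [← gv_inner hc Ω h k, ← hq k]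
    exact hd _ ⟨star k, star_mem kA, rfl⟩
  intro k kA
  have r1 := hre k kA
  have r2 := hre (Complex.I • k) (smul_memA _ kA)
  simp only [smul_apply, star_smul, inner_smul_left, inner_smul_right] at r2
  simp at r2
  apply Complex.ext
  · rw [← Complex.ofReal_inv]
    simpa using r1
  · rw [← Complex.ofReal_inv]
    simp
    linarith

end MT

namespace MT
open Filter Topology

/-- diagonal action -/
def act (a : H →L[ℂ] H) (u : WithLp 2 (H × H)) : WithLp 2 (H × H) :=
  WithLp.toLp 2 (a u.fst, a u.snd)

theorem act_cont (a : H →L[ℂ] H) : Continuous (act a) := by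
  unfold act
  have h1 := WithLp.continuous_fst 2 H H
  have h2 := WithLp.continuous_snd 2 H H
  have h3 := WithLp.prod_continuous_toLp 2 H H
  exact h3.comp ((a.continuous.comp h1).prodMk (a.continuous.comp h2))

theorem act_inner (a : H →L[ℂ] H) (u v : WithLp 2 (H × H)) :
    ⟪act (star a) u, v⟫ = ⟪u, act a v⟫ := by
  rw [WithLp.prod_inner_apply, WithLp.prod_inner_apply]
  simp only [act]
  rw [adj_inner, adj_inner]
  rfl

theorem act_sub (a : H →L[ℂ] H) (u v : WithLp 2 (H × H)) :
    act a (u - v) = act a u - act a v := by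
  simp only [act]
  simp only [WithLp.sub_fst, WithLp.sub_snd, map_sub]
  rfl

theorem proj_act {A : VonNeumannAlgebra H} (G : Submodule ℂ (WithLp 2 (H × H)))
    [G.HasOrthogonalProjection] (hG : ∀ a ∈ A, ∀ u ∈ G, act a u ∈ G) {a : H →L[ℂ] H} (ha : a ∈ A)
    (u : WithLp 2 (H × H)) : G.starProjection (act a u) = act a (G.starProjection u) := by
  apply Submodule.eq_starProjection_of_mem_orthogonal
  · exact hG a ha _ (G.starProjection_apply_mem u)
  · rw [← act_sub, Submodule.mem_orthogonal]
    intro w hw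
    rw [← act_inner]
    exact (Submodule.mem_orthogonal _ _).1 (G.sub_starProjection_mem_orthogonal u) _
      (hG _ (star_mem ha) _ hw)

theorem proj_norm (G : Submodule ℂ (WithLp 2 (H × H)))
    [G.HasOrthogonalProjection] (u : WithLp 2 (H × H)) :
    ⟪G.starProjection u, u⟫ = ((‖G.starProjection u‖ ^ 2 : ℝ) : ℂ) := by
  have h : G.starProjection (G.starProjection u) = G.starProjection u :=
    Submodule.starProjection_eq_self_iff.2 (G.starProjection_apply_mem u)
  conv_lhs => rw [← h]
  rw [Submodule.inner_starProjection_left_eq_right, inner_self_eq_norm_sq_to_K]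
  norm_cast

theorem proj_norm' (G : Submodule ℂ (WithLp 2 (H × H)))
    [G.HasOrthogonalProjection] (u : WithLp 2 (H × H)) :
    ⟪u, u - G.starProjection u⟫ = ((‖u - G.starProjection u‖ ^ 2 : ℝ) : ℂ) := by
  have h : ⟪G.starProjection u, u - G.starProjection u⟫ = 0 :=
    (Submodule.mem_orthogonal _ _).1 (G.sub_starProjection_mem_orthogonal u) _
      (G.starProjection_apply_mem u)
  have : ⟪u, u - G.starProjection u⟫ = ⟪u - G.starProjection u, u - G.starProjection u⟫ := by
    conv_rhs => rw [inner_sub_left, h, sub_zero]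
  rw [this, inner_self_eq_norm_sq_to_K]
  norm_cast

theorem density {A : VonNeumannAlgebra H} {Ω : H}
    (hcyc : IsCyclicVector (A : Set (H →L[ℂ] H)) Ω) {ζ : H}
    (h1 : ∀ x ∈ A, ⟪x Ω, ζ⟫ = -⟪ζ, star x Ω⟫)
    (h2 : ∀ x ∈ A.commutant, ⟪x Ω, ζ⟫ = ⟪ζ, star x Ω⟫) : ζ = 0 := by
  let G0 : Submodule ℂ (WithLp 2 (H × H)) :=
    { carrier := {p | ∃ x ∈ A, WithLp.toLp 2 (x Ω, x ζ) = p}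
      add_mem' := by
        rintro _ _ ⟨h, hA, rfl⟩ ⟨k, kA, rfl⟩
        exact ⟨h + k, add_mem hA kA, by rw [← WithLp.toLp_add]; simp⟩
      zero_mem' := ⟨0, zero_mem A, by simp⟩
      smul_mem' := by
        rintro a _ ⟨h, hA, rfl⟩
        exact ⟨a • h, smul_memA _ hA, by rw [← WithLp.toLp_smul]; simp⟩ }
  set G := G0.topologicalClosure
  have hCc : IsClosed (G : Set (WithLp 2 (H × H))) := G0.isClosed_topologicalClosure
  have : CompleteSpace G := hCc.completeSpace_coe
  have hG : ∀ a ∈ A, ∀ u ∈ G, act a u ∈ G := by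
    intro a ha u hu
    have hu' : u ∈ closure (G0 : Set (WithLp 2 (H × H))) := by
      rw [← Submodule.topologicalClosure_coe]; exact hu
    have : act a u ∈ closure (G0 : Set (WithLp 2 (H × H))) := by
      refine map_mem_closure (act_cont a) hu' ?_
      rintro _ ⟨x, hx, rfl⟩
      exact ⟨a * x, mul_mem ha hx, rfl⟩
    rw [← Submodule.topologicalClosure_coe] at this
    exact this
  set p := G.starProjection
  have hp1 : p (WithLp.toLp 2 (Ω, ζ)) = WithLp.toLp 2 (Ω, ζ) := by
    rw [Submodule.starProjection_eq_self_iff]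
    exact G0.le_topologicalClosure ⟨1, one_mem A, rfl⟩
  have hp2 : p (WithLp.toLp 2 (ζ, Ω)) = 0 := by
    rw [Submodule.starProjection_apply_eq_zero_iff, Submodule.orthogonal_closure,
      Submodule.mem_orthogonal]
    rintro _ ⟨x, hx, rfl⟩
    rw [WithLp.prod_inner_apply]
    change ⟪x Ω, ζ⟫ + ⟪x ζ, Ω⟫ = 0
    rw [h1 x hx, ← adj_inner']
    ring
  let i1 : H →L[ℂ] WithLp 2 (H × H) :=
    (WithLp.prodContinuousLinearEquiv 2 ℂ H H).symm ∘L ContinuousLinearMap.inl ℂ H H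
  let i2 : H →L[ℂ] WithLp 2 (H × H) :=
    (WithLp.prodContinuousLinearEquiv 2 ℂ H H).symm ∘L ContinuousLinearMap.inr ℂ H H
  let f1 : WithLp 2 (H × H) →L[ℂ] H :=
    ContinuousLinearMap.fst ℂ H H ∘L (WithLp.prodContinuousLinearEquiv 2 ℂ H H)
  let f2 : WithLp 2 (H × H) →L[ℂ] H :=
    ContinuousLinearMap.snd ℂ H H ∘L (WithLp.prodContinuousLinearEquiv 2 ℂ H H)
  have hi1 : ∀ x, i1 x = WithLp.toLp 2 (x, 0) := fun x => rfl
  have hi2 : ∀ x, i2 x = WithLp.toLp 2 (0, x) := fun x => rfl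
  have hf1 : ∀ u, f1 u = u.fst := fun x => rfl
  have hf2 : ∀ u, f2 u = u.snd := fun x => rfl
  have hin1 : ∀ u x, ⟪u, i1 x⟫ = ⟪f1 u, x⟫ := by
    intro u x; rw [WithLp.prod_inner_apply, hi1, hf1]; simp
  have hin2 : ∀ u x, ⟪u, i2 x⟫ = ⟪f2 u, x⟫ := by
    intro u x; rw [WithLp.prod_inner_apply, hi2, hf2]; simp
  have hin2' : ∀ u x, ⟪i2 x, u⟫ = ⟪x, f2 u⟫ := by
    intro u x; rw [WithLp.prod_inner_apply, hi2, hf2]; simp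
  have hsum : ∀ x y, WithLp.toLp 2 (x, y) = i1 x + i2 y := by
    intro x y; rw [hi1, hi2, ← WithLp.toLp_add]; simp
  rw [hsum, map_add] at hp1 hp2
  set p12 : H →L[ℂ] H := f1 ∘L p ∘L i2
  have hp12 : ∀ x, p12 x = f1 (p (i2 x)) := fun _ => rfl
  have hstar : star p12 = f2 ∘L p ∘L i1 := by
    rw [ContinuousLinearMap.star_eq_adjoint]
    symm
    rw [ContinuousLinearMap.eq_adjoint_iff]
    intro x y
    change ⟪f2 (p (i1 x)), y⟫ = ⟪x, f1 (p (i2 y))⟫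
    rw [← hin2, Submodule.inner_starProjection_left_eq_right, ← inner_conj_symm, hin1,
      inner_conj_symm]
  have hp12m : p12 ∈ A.commutant := by
    apply mem_comm_of_comm
    intro y hy x
    rw [hp12, hp12]
    have : i2 (y x) = act y (i2 x) := by simp [hi2, act]
    rw [this, proj_act G hG hy]
    rfl
  have key := h2 p12 hp12m
  have e1 : p12 Ω = - f1 (p (i1 ζ)) := by
    rw [hp12, ← map_neg]; congr 1
    rw [eq_neg_iff_add_eq_zero, add_comm]; exact hp2
  have e2 : star p12 Ω = f2 (i2 ζ - p (i2 ζ)) := by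
    rw [hstar]
    change f2 (p (i1 Ω)) = _
    have : p (i1 Ω) = i1 Ω + i2 ζ - p (i2 ζ) := eq_sub_of_add_eq hp1
    rw [this, add_sub_assoc, map_add]
    have : f2 (i1 Ω) = 0 := rfl
    rw [this, zero_add]
  rw [e1, e2, inner_neg_left, ← hin1, ← hin2', proj_norm, proj_norm'] at key
  have key' : -‖p (i1 ζ)‖ ^ 2 = ‖i2 ζ - p (i2 ζ)‖ ^ 2 := by exact_mod_cast key
  have k1 : p (i1 ζ) = 0 := by
    rw [← norm_eq_zero]; nlinarith [norm_nonneg (p (i1 ζ)), sq_nonneg ‖i2 ζ - p (i2 ζ)‖]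
  have k2 : i2 ζ - p (i2 ζ) = 0 := by
    rw [← norm_eq_zero]; nlinarith [norm_nonneg (i2 ζ - p (i2 ζ)), sq_nonneg ‖p (i1 ζ)‖]
  rw [← sub_eq_zero.1 k2] at hp1
  have k3 : p (i1 Ω) = i1 Ω := add_right_cancel hp1
  have k4 : (f1 ∘L p ∘L i1 : H → H) = id := by
    refine ext_cyc hcyc (ContinuousLinearMap.continuous _) continuous_id ?_
    intro a ha
    change f1 (p (i1 (a Ω))) = a Ω
    have : i1 (a Ω) = act a (i1 Ω) := by simp [hi1, act]
    rw [this, proj_act G hG ha, k3]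
    rfl
  have k5 : f1 (p (i1 ζ)) = ζ := congrFun k4 ζ
  rw [← k5, k1, map_zero]

end MT

namespace MT
open Filter Topology

theorem sa_inner {a : H →L[ℂ] H} (h : IsSelfAdjoint a) (x y : H) : ⟪a x, y⟫ = ⟪x, a y⟫ := by
  conv_lhs => rw [← h.star_eq]
  exact adj_inner a x y

theorem dense_of_inj {a : H →L[ℂ] H} (h : IsSelfAdjoint a) (hi : ∀ x, a x = 0 → x = 0) :
    DenseRange a := by
  have : (LinearMap.range a.toLinearMap).topologicalClosure = ⊤ := by
    rw [Submodule.topologicalClosure_eq_top_iff, Submodule.eq_bot_iff]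
    intro x hx
    apply hi
    apply ext_inner_left ℂ
    intro v
    rw [inner_zero_right, ← sa_inner h]
    exact (Submodule.mem_orthogonal _ _).1 hx _ ⟨v, rfl⟩
  have h2 := (Submodule.dense_iff_topologicalClosure_eq_top).2 this
  exact h2

theorem sa_of_nonneg {a : H →L[ℂ] H} (h : 0 ≤ a) : IsSelfAdjoint a := IsSelfAdjoint.of_nonneg h

theorem nonneg_of {a : H →L[ℂ] H} (h : IsSelfAdjoint a) (h2 : ∀ x, 0 ≤ (⟪a x, x⟫).re) : 0 ≤ a := by
  rw [ContinuousLinearMap.nonneg_iff_isPositive, ContinuousLinearMap.isPositive_def']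
  exact ⟨h, h2⟩

theorem nonneg_re {a : H →L[ℂ] H} (h : 0 ≤ a) (x : H) : 0 ≤ (⟪a x, x⟫).re := by
  rw [ContinuousLinearMap.nonneg_iff_isPositive, ContinuousLinearMap.isPositive_def'] at h
  exact h.2 x

theorem polar {R S : H →L[ℂ] H} (hR : 0 ≤ R) (hS : 0 ≤ S) (hRS : R + S = 2)
    (iR : ∀ x, R x = 0 → x = 0) (iS : ∀ x, S x = 0 → x = 0)
    (V : H →ₛₗ[starRingEnd ℂ] H) (hVs : ∀ x y, ⟪V x, y⟫ = ⟪V y, x⟫)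
    (hVV : ∀ x, V (V x) = R (S x)) (hVR : ∀ x, V (R x) = S (V x)) :
    ∃ (T : H →L[ℂ] H) (J : H → H), 0 ≤ T ∧ T * T = R * S ∧ (∀ x y, J (x + y) = J x + J y) ∧
      (∀ (c : ℂ) x, J (c • x) = (starRingEnd ℂ c) • J x) ∧ (∀ x y, ⟪J x, J y⟫ = ⟪y, x⟫) ∧
      (∀ x, J (J x) = x) ∧ (∀ x, J (T x) = V x) ∧ (∀ x, T (J x) = V x) ∧
      (∀ x, J (R x) = S (J x)) ∧ (∀ x, J (S x) = R (J x)) := by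
  have hSeq : S = 2 - R := eq_sub_of_add_eq' hRS
  have hcomm : R * S = S * R := by rw [hSeq]; noncomm_ring
  have hRsa := sa_of_nonneg hR
  have hSsa := sa_of_nonneg hS
  have hRSsa : IsSelfAdjoint (R * S) := by
    rw [IsSelfAdjoint, star_mul, hRsa.star_eq, hSsa.star_eq, hcomm]
  have hRS0 : 0 ≤ R * S := by
    refine nonneg_of hRSsa fun x => ?_
    rw [mul_apply_eq_comp, ← hVV, hVs]
    exact inner_self_nonneg (𝕜 := ℂ)
  have hsp : ∀ t ∈ spectrum ℝ (R * S), 0 ≤ t := fun t ht => spectrum_nonneg_of_nonneg hRS0 ht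
  set T := cfc Real.sqrt (R * S)
  have hT0 : 0 ≤ T := cfc_nonneg fun t _ => Real.sqrt_nonneg t
  have hTsa := sa_of_nonneg hT0
  have hTT : T * T = R * S := by
    rw [← cfc_mul Real.sqrt Real.sqrt (R * S) (by fun_prop) (by fun_prop)]
    conv_rhs => rw [← cfc_id' ℝ (R * S)]
    exact cfc_congr fun t ht => Real.mul_self_sqrt (hsp t ht)
  have hTR : Commute T R := by
    apply Commute.cfc_real
    change R * S * R = R * (R * S)
    rw [mul_assoc, ← hcomm]
  have hTTa : ∀ x, T (T x) = V (V x) := fun x => by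
    rw [hVV]; exact DFunLike.congr_fun hTT x
  have iV : ∀ x, V x = 0 → x = 0 := by
    intro x hx
    apply iS; apply iR; rw [← hVV, hx, map_zero]
  have iT : ∀ x, T x = 0 → x = 0 := by
    intro x hx
    apply iV; apply iV; rw [← hTTa, hx, map_zero]
  have dT := dense_of_inj hTsa iT
  have hin : ∀ x y, ⟪V x, V y⟫ = ⟪T y, T x⟫ := by
    intro x y
    rw [hVs, ← hTTa, sa_inner hTsa]
  have hnorm : ∀ x, ‖V x‖ = ‖T x‖ := by
    intro x
    have := hin x x
    rw [inner_self_eq_norm_sq_to_K, inner_self_eq_norm_sq_to_K] at this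
    have : ‖V x‖ ^ 2 = ‖T x‖ ^ 2 := by exact_mod_cast this
    exact (pow_left_inj₀ (norm_nonneg _) (norm_nonneg _) two_ne_zero).1 this
  let Jc : H →SL[starRingEnd ℂ] H := V.extendOfNorm T.toLinearMap
  have hJT : ∀ x, Jc (T x) = V x := fun x =>
    LinearMap.extendOfNorm_eq (f := V) (e := T.toLinearMap) dT
      ⟨1, fun x => by rw [one_mul]; exact (hnorm x).le⟩ x
  have hJn : ∀ x, ‖Jc x‖ = ‖x‖ := by
    intro x
    refine congrFun (DenseRange.equalizer dT (g := fun x => ‖Jc x‖) (h := fun x => ‖x‖)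
      (by fun_prop) (by fun_prop) ?_) x
    ext x
    simp [hJT, hnorm]
  have hJi : ∀ x y, ⟪Jc x, Jc y⟫ = ⟪y, x⟫ := by
    have h1 : ∀ x y, ⟪Jc (T x), Jc y⟫ = ⟪y, T x⟫ := by
      intro x y
      refine congrFun (DenseRange.equalizer dT (g := fun y => ⟪Jc (T x), Jc y⟫)
        (h := fun y => ⟪y, T x⟫) (by fun_prop) (by fun_prop) ?_) y
      ext y
      simp only [Function.comp_apply, hJT, hin]
    intro x y
    refine congrFun (DenseRange.equalizer dT (g := fun x => ⟪Jc x, Jc y⟫)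
        (h := fun x => ⟪y, x⟫) (by fun_prop) (by fun_prop) ?_) x
    ext x
    simp only [Function.comp_apply, h1]
  let Ji : H →ₛₗᵢ[starRingEnd ℂ] H := ⟨Jc.toLinearMap, hJn⟩
  have hrange : LinearMap.range Ji.toLinearMap = ⊤ := by
    have hcl : IsClosed (LinearMap.range Ji.toLinearMap : Set H) := by
      have := Ji.isometry.isClosedEmbedding.isClosed_range
      exact this
    rw [← hcl.submodule_topologicalClosure_eq, Submodule.topologicalClosure_eq_top_iff,
      Submodule.eq_bot_iff]
    intro y hy
    apply iV
    apply ext_inner_right ℂ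
    intro v
    rw [inner_zero_left, hVs, ← hJT]
    exact (Submodule.mem_orthogonal _ _).1 hy _ ⟨T v, rfl⟩
  have hsurj : Function.Surjective Jc := LinearMap.range_eq_top.1 hrange
  choose K hK using hsurj
  have hinj : ∀ x y, Jc x = Jc y → x = y := fun x y h => by
    rw [← sub_eq_zero, ← norm_eq_zero, ← hJn, map_sub, h, sub_self, norm_zero]
  have hKJ : ∀ x, K (Jc x) = x := fun x => hinj _ _ (hK _)
  have hKadd : ∀ x y, K (x + y) = K x + K y := fun x y => hinj _ _ (by simp [hK])
  have hKsmul : ∀ (c : ℂ) x, K (c • x) = (starRingEnd ℂ c) • K x := fun c x =>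
    hinj _ _ (by simp [hK])
  have hKn : ∀ x, ‖K x‖ = ‖x‖ := fun x => by rw [← hJn, hK]
  have hTK : ∀ y, T (K y) = V y := by
    intro y
    apply ext_inner_right ℂ
    intro x
    rw [sa_inner hTsa, ← hJi, hK, hJT, hVs]
  let T' : H →L[ℂ] H := LinearMap.mkContinuous
    { toFun := fun x => Jc (T (K x))
      map_add' := fun x y => by simp [hKadd]
      map_smul' := fun c x => by simp [hKsmul] } ‖T‖ (fun x => by
        change ‖Jc (T (K x))‖ ≤ _
        rw [hJn, ← hKn x]; exact T.le_opNorm _)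
  have hT' : ∀ x, T' x = Jc (T (K x)) := fun x => rfl
  have hT'in : ∀ x y, ⟪T' x, y⟫ = ⟪K y, T (K x)⟫ := fun x y => by
    conv_lhs => rw [hT', ← hK y, hJi]
  have hT'sa : IsSelfAdjoint T' := by
    rw [ContinuousLinearMap.isSelfAdjoint_iff_isSymmetric]
    intro x y
    change ⟪T' x, y⟫ = ⟪x, T' y⟫
    rw [hT'in, ← inner_conj_symm x, hT'in, inner_conj_symm, sa_inner hTsa]
  have hT'0 : 0 ≤ T' := nonneg_of hT'sa fun x => by
    rw [hT'in, ← sa_inner hTsa]; exact nonneg_re hT0 _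
  have hT'T' : T' * T' = T * T := by
    ext x
    change T' (T' x) = T (T x)
    rw [hT', hT', hKJ, hTK, hTTa, hJT]
  have hTeq : T' = T := by
    rw [← CFC.sqrt_unique hT'T' hT'0, CFC.sqrt_unique rfl hT0]
  have hTJ : ∀ x, T (Jc x) = V x := fun x => by
    rw [← hTeq, hT', hKJ, hJT]
  have hJK : ∀ x, Jc x = K x := by
    intro x
    rw [← sub_eq_zero]
    apply iT
    rw [map_sub, hTJ, hTK, sub_self]
  have hJR : ∀ x, Jc (R x) = S (Jc x) := by
    intro x
    refine congrFun (DenseRange.equalizer dT (g := fun x => Jc (R x))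
        (h := fun x => S (Jc x)) (by fun_prop) (by fun_prop) ?_) x
    ext x
    simp only [Function.comp_apply]
    have : R (T x) = T (R x) := (DFunLike.congr_fun hTR.eq x).symm
    rw [this, hJT, hJT, hVR]
  have hJJ : ∀ x, Jc (Jc x) = x := fun x => by rw [hJK x, hK]
  refine ⟨T, Jc, hT0, hTT, by simp, by simp, hJi, hJJ, hJT, hTJ, hJR, ?_⟩
  intro x
  apply hinj
  rw [hJJ, hJR, hJJ]

end MT

namespace MT
open Filter Topology

theorem decomp {A : VonNeumannAlgebra H} {a : H →L[ℂ] H} (ha : a ∈ A) :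
    ∃ b ∈ A, ∃ c ∈ A, star b = b ∧ star c = c ∧ a = b + Complex.I • c ∧
      star a = b - Complex.I • c := by
  refine ⟨(1/2 : ℂ) • (a + star a), smul_memA _ (add_mem ha (star_mem ha)),
    (-Complex.I/2 : ℂ) • (a - star a), smul_memA _ (sub_mem ha (star_mem ha)), ?_, ?_, ?_, ?_⟩
  · simp [add_comm]
  · simp only [star_smul, star_sub, star_star]
    rw [← neg_sub a (star a), smul_neg, ← neg_smul]
    congr 1
    simp; ring
  · rw [smul_smul, show Complex.I * (-Complex.I / 2) = 1/2 by
      rw [mul_div_assoc', mul_neg, Complex.I_mul_I]; norm_num]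
    module
  · rw [smul_smul, show Complex.I * (-Complex.I / 2) = 1/2 by
      rw [mul_div_assoc', mul_neg, Complex.I_mul_I]; norm_num]
    module

attribute [local instance] InnerProductSpace.complexToReal

/-- real subspace -/
def K0 (A : VonNeumannAlgebra H) (Ω : H) : Submodule ℝ H where
  carrier := {x | ∃ a ∈ A, star a = a ∧ a Ω = x}
  add_mem' := by
    rintro _ _ ⟨a, ha, has, rfl⟩ ⟨b, hb, hbs, rfl⟩
    exact ⟨a + b, add_mem ha hb, by rw [star_add, has, hbs], rfl⟩
  zero_mem' := ⟨0, zero_mem A, star_zero _, rfl⟩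
  smul_mem' := by
    rintro c _ ⟨a, ha, has, rfl⟩
    exact ⟨(c : ℂ) • a, smul_memA _ ha, by simp [star_smul, has], by simp⟩

/-- closed real subspace -/
def KK (A : VonNeumannAlgebra H) (Ω : H) : Submodule ℝ H := (K0 A Ω).topologicalClosure

instance (A : VonNeumannAlgebra H) (Ω : H) : CompleteSpace (KK A Ω) :=
  (K0 A Ω).isClosed_topologicalClosure.completeSpace_coe

/-- real projection -/
def PP (A : VonNeumannAlgebra H) (Ω : H) : H →L[ℝ] H := (KK A Ω).starProjection

/-- projection on `iK` -/
def QQ (A : VonNeumannAlgebra H) (Ω : H) (x : H) : H := Complex.I • PP A Ω (-(Complex.I • x))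

section
variable (A : VonNeumannAlgebra H) (Ω : H)

theorem mem_KK {a : H →L[ℂ] H} (ha : a ∈ A) (has : star a = a) : a Ω ∈ KK A Ω :=
  (K0 A Ω).le_topologicalClosure ⟨a, ha, has, rfl⟩

theorem KK_ind {f g : H → ℂ} (hf : Continuous f) (hg : Continuous g)
    (h : ∀ a ∈ A, star a = a → f (a Ω) = g (a Ω)) {κ : H} (hκ : κ ∈ KK A Ω) : f κ = g κ := by
  have hu' : κ ∈ closure (K0 A Ω : Set H) := by
    rw [← Submodule.topologicalClosure_coe]; exact hκ
  have hc : IsClosed {x | f x = g x} := isClosed_eq hf hg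
  refine (closure_minimal ?_ hc) hu'
  rintro _ ⟨a, ha, has, rfl⟩
  exact h a ha has

theorem PP_mem (x : H) : PP A Ω x ∈ KK A Ω := (KK A Ω).starProjection_apply_mem x

theorem PP_self {x : H} (h : x ∈ KK A Ω) : PP A Ω x = x := Submodule.starProjection_eq_self_iff.2 h

theorem PP_orth (x : H) {κ : H} (hκ : κ ∈ KK A Ω) : (⟪x - PP A Ω x, κ⟫).re = 0 :=
  (KK A Ω).starProjection_inner_eq_zero x κ hκ

theorem PP_sym (x y : H) : (⟪PP A Ω x, y⟫).re = (⟪x, PP A Ω y⟫).re :=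
  (KK A Ω).inner_starProjection_left_eq_right x y

theorem PP_eq {x y : H} (h1 : y ∈ KK A Ω) (h2 : ∀ κ ∈ KK A Ω, (⟪x - y, κ⟫).re = 0) :
    PP A Ω x = y :=
  Submodule.eq_starProjection_of_mem_of_inner_eq_zero h1 h2

theorem PP_PP (x : H) : PP A Ω (PP A Ω x) = PP A Ω x := PP_self A Ω (PP_mem A Ω x)

theorem QQ_QQ (x : H) : QQ A Ω (QQ A Ω x) = QQ A Ω x := by
  unfold QQ
  rw [smul_smul, Complex.I_mul_I, neg_one_smul, neg_neg, PP_PP]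

theorem QQ_add (x y : H) : QQ A Ω (x + y) = QQ A Ω x + QQ A Ω y := by
  unfold QQ
  rw [smul_add, neg_add, map_add, smul_add]

theorem QQ_sub (x y : H) : QQ A Ω (x - y) = QQ A Ω x - QQ A Ω y := by
  unfold QQ
  rw [smul_sub, neg_sub', map_sub, smul_sub]

theorem QQ_smul (r : ℝ) (x : H) : QQ A Ω (r • x) = r • QQ A Ω x := by
  unfold QQ
  rw [smul_comm, ← smul_neg, map_smul, smul_comm]

theorem QQ_I (x : H) : QQ A Ω (Complex.I • x) = Complex.I • PP A Ω x := by
  unfold QQ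
  rw [smul_smul, Complex.I_mul_I, neg_one_smul, neg_neg]

theorem PP_I (x : H) : PP A Ω (Complex.I • x) = Complex.I • QQ A Ω x := by
  unfold QQ
  rw [smul_smul, Complex.I_mul_I, neg_one_smul, map_neg, neg_neg]

theorem QQ_sym (x y : H) : (⟪QQ A Ω x, y⟫).re = (⟪x, QQ A Ω y⟫).re := by
  have h := PP_sym A Ω (-(Complex.I • x)) (-(Complex.I • y))
  have e1 : ⟪QQ A Ω x, y⟫ = ⟪PP A Ω (-(Complex.I • x)), -(Complex.I • y)⟫ := by
    unfold QQ; simp [inner_smul_left, inner_smul_right]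
  have e2 : ⟪x, QQ A Ω y⟫ = ⟪-(Complex.I • x), PP A Ω (-(Complex.I • y))⟫ := by
    unfold QQ; simp [inner_smul_left, inner_smul_right]
  rw [e1, e2, h]

theorem re_add_im_smul (c : ℂ) (x : H) : c • x = c.re • x + c.im • (Complex.I • x) := by
  conv_lhs => rw [← Complex.re_add_im c]
  rw [add_smul, mul_smul, Complex.coe_smul, Complex.coe_smul]

theorem PP_c (c : ℂ) (x : H) : PP A Ω (c • x) = c.re • PP A Ω x + c.im • Complex.I • QQ A Ω x := by
  rw [re_add_im_smul, map_add, map_smul, map_smul, PP_I]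

theorem QQ_c (c : ℂ) (x : H) : QQ A Ω (c • x) = c.re • QQ A Ω x + c.im • Complex.I • PP A Ω x := by
  rw [re_add_im_smul, QQ_add, QQ_smul, QQ_smul, QQ_I]

theorem QQ_cont : Continuous (QQ A Ω) := by unfold QQ; fun_prop

/-- R -/
def RR : H →L[ℂ] H where
  toFun x := PP A Ω x + QQ A Ω x
  map_add' x y := by rw [map_add, QQ_add]; abel
  map_smul' c x := by
    rw [PP_c, QQ_c, RingHom.id_apply, re_add_im_smul c, smul_add, smul_add, smul_add]; abel
  cont := (PP A Ω).continuous.add (QQ_cont A Ω)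

/-- V -/
def VV : H →ₛₗ[starRingEnd ℂ] H where
  toFun x := PP A Ω x - QQ A Ω x
  map_add' x y := by rw [map_add, QQ_add]; abel
  map_smul' c x := by
    rw [PP_c, QQ_c, re_add_im_smul (starRingEnd ℂ c), Complex.conj_re, Complex.conj_im]
    simp only [smul_sub, neg_smul]; abel

theorem RR_apply (x : H) : RR A Ω x = PP A Ω x + QQ A Ω x := rfl
theorem VV_apply (x : H) : VV A Ω x = PP A Ω x - QQ A Ω x := rfl

theorem ext_re {x y : H} (h : ∀ v, (⟪x, v⟫).re = (⟪y, v⟫).re) : x = y := by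
  apply ext_inner_right ℝ
  exact h

theorem inner_ext_re {x y x' y' : H} (h1 : (⟪x, y⟫).re = (⟪x', y'⟫).re)
    (h2 : (⟪x, Complex.I • y⟫).re = (⟪x', Complex.I • y'⟫).re) : ⟪x, y⟫ = ⟪x', y'⟫ := by
  apply Complex.ext h1
  simpa [inner_smul_right] using h2

theorem RR_sa : IsSelfAdjoint (RR A Ω) := by
  rw [ContinuousLinearMap.isSelfAdjoint_iff_isSymmetric]
  have h : ∀ x y, (⟪RR A Ω x, y⟫).re = (⟪x, RR A Ω y⟫).re := by
    intro x y
    rw [RR_apply, RR_apply, inner_add_left, inner_add_right, Complex.add_re, Complex.add_re,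
      PP_sym, QQ_sym]
  intro x y
  apply inner_ext_re (h x y)
  have := h x (Complex.I • y)
  rwa [map_smul] at this

theorem VV_sym (x y : H) : ⟪VV A Ω x, y⟫ = ⟪VV A Ω y, x⟫ := by
  have h : ∀ x y, (⟪VV A Ω x, y⟫).re = (⟪VV A Ω y, x⟫).re := by
    intro x y
    rw [VV_apply, VV_apply, inner_sub_left, inner_sub_left, Complex.sub_re, Complex.sub_re,
      PP_sym, QQ_sym, ← inner_conj_symm, Complex.conj_re, ← inner_conj_symm x, Complex.conj_re]
  apply Complex.ext (h x y)
  have := h x (Complex.I • y)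
  rw [map_smulₛₗ] at this
  simpa [inner_smul_right, inner_smul_left] using this

theorem P_norm (x : H) : (⟪PP A Ω x, x⟫).re = ‖PP A Ω x‖ ^ 2 := by
  rw [← PP_PP, PP_sym, inner_self_eq_norm_sq_to_K, PP_PP]; norm_cast

theorem Q_norm (x : H) : (⟪QQ A Ω x, x⟫).re = ‖QQ A Ω x‖ ^ 2 := by
  rw [← QQ_QQ, QQ_sym, inner_self_eq_norm_sq_to_K, QQ_QQ]; norm_cast

theorem one_sub_norm (p : H → H) (hs : ∀ x, (⟪p x, x⟫).re = ‖p x‖ ^ 2) (x : H) :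
    (⟪x - p x, x⟫).re = ‖x - p x‖ ^ 2 := by
  have h1 : ‖x - p x‖ ^ 2 = ‖x‖ ^ 2 - 2 * (⟪x, p x⟫).re + ‖p x‖ ^ 2 := norm_sub_sq_real x (p x)
  have h3 : (⟪x, x⟫).re = ‖x‖ ^ 2 := by rw [inner_self_eq_norm_sq_to_K]; norm_cast
  have h4 : (⟪x, p x⟫).re = (⟪p x, x⟫).re := by rw [← inner_conj_symm, Complex.conj_re]
  rw [inner_sub_left, Complex.sub_re, h1, h3, h4, hs]; ring

theorem R_re (x : H) : (⟪RR A Ω x, x⟫).re = ‖PP A Ω x‖ ^ 2 + ‖QQ A Ω x‖ ^ 2 := by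
  rw [RR_apply, inner_add_left, Complex.add_re, P_norm, Q_norm]

/-- S -/
def SS : H →L[ℂ] H := 2 - RR A Ω

theorem SS_apply (x : H) : SS A Ω x = (x - PP A Ω x) + (x - QQ A Ω x) := by
  change (2 : H →L[ℂ] H) x - RR A Ω x = _
  have : (2 : H →L[ℂ] H) x = x + x := by
    rw [← one_add_one_eq_two]; rfl
  rw [this, RR_apply]; abel

theorem S_re (x : H) : (⟪SS A Ω x, x⟫).re = ‖x - PP A Ω x‖ ^ 2 + ‖x - QQ A Ω x‖ ^ 2 := by
  rw [SS_apply, inner_add_left, Complex.add_re, one_sub_norm _ (P_norm A Ω),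
    one_sub_norm _ (Q_norm A Ω)]

theorem SS_sa : IsSelfAdjoint (SS A Ω) := by
  unfold SS
  apply IsSelfAdjoint.sub _ (RR_sa A Ω)
  exact IsSelfAdjoint.ofNat 2

theorem VV_VV (x : H) : VV A Ω (VV A Ω x) = RR A Ω (SS A Ω x) := by
  simp only [VV_apply, RR_apply, SS_apply, map_add, map_sub, QQ_add, QQ_sub, PP_PP, QQ_QQ]
  abel

theorem VV_RR (x : H) : VV A Ω (RR A Ω x) = SS A Ω (VV A Ω x) := by
  simp only [VV_apply, RR_apply, SS_apply, map_add, map_sub, QQ_add, QQ_sub, PP_PP, QQ_QQ]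
  abel
end

end MT

namespace MT
open Filter Topology

/-- modular data -/
structure MD (A : VonNeumannAlgebra H) (Ω : H) (R S T : H →L[ℂ] H) (J : H → H) : Prop where
  cyc : IsCyclicVector (A : Set (H →L[ℂ] H)) Ω
  sep : IsCyclicVector (A.commutant : Set (H →L[ℂ] H)) Ω
  R0 : 0 ≤ R
  S0 : 0 ≤ S
  RS : R + S = 2
  iR : ∀ x, R x = 0 → x = 0
  iS : ∀ x, S x = 0 → x = 0
  T0 : 0 ≤ T
  TT : T * T = R * S
  Jadd : ∀ x y, J (x + y) = J x + J y
  Jsmul : ∀ (c : ℂ) x, J (c • x) = (starRingEnd ℂ c) • J x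
  Jin : ∀ x y, ⟪J x, J y⟫ = ⟪y, x⟫
  JJ : ∀ x, J (J x) = x
  JT : ∀ x, J (T x) = T (J x)
  JR : ∀ x, J (R x) = S (J x)
  JS : ∀ x, J (S x) = R (J x)
  h1 : ∀ a ∈ A, J (T (star a Ω)) = S (a Ω)
  h2 : ∀ a ∈ A.commutant, J (T (star a Ω)) = R (a Ω)
  h3 : ∀ α β, (∀ k ∈ A, ⟪α, k Ω⟫ = ⟪star k Ω, β⟫) → R α = J (T β)
  h3' : ∀ α β, (∀ k ∈ A.commutant, ⟪α, k Ω⟫ = ⟪star k Ω, β⟫) → S α = J (T β)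

theorem MD.symm {A : VonNeumannAlgebra H} {Ω : H} {R S T : H →L[ℂ] H} {J : H → H}
    (m : MD A Ω R S T J) : MD A.commutant Ω S R T J where
  cyc := m.sep
  sep := by rw [VonNeumannAlgebra.commutant_commutant]; exact m.cyc
  R0 := m.S0
  S0 := m.R0
  RS := by rw [add_comm]; exact m.RS
  iR := m.iS
  iS := m.iR
  T0 := m.T0
  TT := by
    rw [m.TT, show S = 2 - R from eq_sub_of_add_eq' m.RS]; noncomm_ring
  Jadd := m.Jadd
  Jsmul := m.Jsmul
  Jin := m.Jin
  JJ := m.JJ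
  JT := m.JT
  JR := m.JS
  JS := m.JR
  h1 := m.h2
  h2 := by rw [VonNeumannAlgebra.commutant_commutant]; exact m.h1
  h3 := m.h3'
  h3' := by rw [VonNeumannAlgebra.commutant_commutant]; exact m.h3

attribute [local instance] InnerProductSpace.complexToReal

section
variable (A : VonNeumannAlgebra H) (Ω : H)

theorem im_KK {a : H →L[ℂ] H} (ha : a ∈ A.commutant) (has : star a = a) {κ : H}
    (hκ : κ ∈ KK A Ω) : (⟪a Ω, κ⟫).im = 0 := by
  have := KK_ind A Ω (f := fun κ => ⟪a Ω, κ⟫) (g := fun κ => ⟪κ, a Ω⟫) (by fun_prop) (by fun_prop)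
    (by
      intro b hb hbs
      change ⟪a Ω, b Ω⟫ = ⟪b Ω, a Ω⟫
      calc ⟪a Ω, b Ω⟫ = ⟪star a Ω, b Ω⟫ := by rw [has]
        _ = ⟪Ω, a (b Ω)⟫ := adj_inner a Ω (b Ω)
        _ = ⟪Ω, b (a Ω)⟫ := by rw [comm_apply hb ha]
        _ = ⟪star b Ω, a Ω⟫ := (adj_inner b Ω (a Ω)).symm
        _ = ⟪b Ω, a Ω⟫ := by rw [hbs]) hκ
  change ⟪a Ω, κ⟫ = ⟪κ, a Ω⟫ at this
  rw [← inner_conj_symm κ] at this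
  have h2 := congrArg Complex.im this
  rw [Complex.conj_im] at h2
  linarith

variable {A Ω}

theorem RR_inj (hcyc : IsCyclicVector (A : Set (H →L[ℂ] H)) Ω) (x : H) (hx : RR A Ω x = 0) :
    x = 0 := by
  have h := R_re A Ω x
  rw [hx, inner_zero_left, Complex.zero_re] at h
  have hP : PP A Ω x = 0 := by
    rw [← norm_eq_zero]; nlinarith [norm_nonneg (PP A Ω x), sq_nonneg ‖QQ A Ω x‖]
  have hQ : QQ A Ω x = 0 := by
    rw [← norm_eq_zero]; nlinarith [norm_nonneg (QQ A Ω x), sq_nonneg ‖PP A Ω x‖]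
  have hQ' : PP A Ω (Complex.I • x) = 0 := by rw [PP_I, hQ, smul_zero]
  have key : ∀ a ∈ A, star a = a → ⟪x, a Ω⟫ = 0 := by
    intro a ha has
    have e1 := PP_orth A Ω x (mem_KK A Ω ha has)
    have e2 := PP_orth A Ω (Complex.I • x) (mem_KK A Ω ha has)
    rw [hP, sub_zero] at e1
    rw [hQ', sub_zero, inner_smul_left] at e2
    apply Complex.ext e1
    simpa using e2
  apply inner_ext_cyc hcyc
  intro a ha
  obtain ⟨b, hb, c, hc, bs, cs, rfl, -⟩ := decomp ha
  simp [inner_add_right, inner_smul_right, key b hb bs, key c hc cs]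

theorem SS_inj (hsep : IsCyclicVector (A.commutant : Set (H →L[ℂ] H)) Ω) (x : H)
    (hx : SS A Ω x = 0) : x = 0 := by
  have h := S_re A Ω x
  rw [hx, inner_zero_left, Complex.zero_re] at h
  have hP : x - PP A Ω x = 0 := by
    rw [← norm_eq_zero]; nlinarith [norm_nonneg (x - PP A Ω x), sq_nonneg ‖x - QQ A Ω x‖]
  have hQ : x - QQ A Ω x = 0 := by
    rw [← norm_eq_zero]; nlinarith [norm_nonneg (x - QQ A Ω x), sq_nonneg ‖x - PP A Ω x‖]
  have k1 : x ∈ KK A Ω := by rw [sub_eq_zero.1 hP]; exact PP_mem _ _ _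
  have k2 : Complex.I • x ∈ KK A Ω := by
    rw [sub_eq_zero.1 hQ, ← PP_I]; exact PP_mem _ _ _
  have key : ∀ a ∈ A.commutant, star a = a → ⟪x, a Ω⟫ = 0 := by
    intro a ha has
    have e1 := im_KK A Ω ha has k1
    have e2 := im_KK A Ω ha has k2
    rw [inner_smul_right] at e2
    rw [← inner_conj_symm, show ⟪a Ω, x⟫ = 0 from Complex.ext (by simpa using e2) e1, map_zero]
  apply inner_ext_cyc hsep
  intro a ha
  obtain ⟨b, hb, c, hc, bs, cs, rfl, -⟩ := decomp ha
  simp [inner_add_right, inner_smul_right, key b hb bs, key c hc cs]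

theorem VV_h1 {a : H →L[ℂ] H} (ha : a ∈ A) : VV A Ω (star a Ω) = SS A Ω (a Ω) := by
  have key : ∀ a ∈ A, star a = a → VV A Ω (a Ω) = SS A Ω (a Ω) := by
    intro a ha has
    rw [VV_apply, SS_apply, PP_self A Ω (mem_KK A Ω ha has)]; abel
  obtain ⟨b, hb, c, hc, bs, cs, e1, e2⟩ := decomp ha
  rw [e2, e1]
  simp only [sub_apply, add_apply, smul_apply, map_sub, map_add, map_smulₛₗ, key b hb bs,
    key c hc cs, Complex.conj_I, RingHom.id_apply]
  simp

theorem VV_h2 {a : H →L[ℂ] H} (ha : a ∈ A.commutant) : VV A Ω (star a Ω) = RR A Ω (a Ω) := by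
  have key : ∀ a ∈ A.commutant, star a = a → VV A Ω (a Ω) = RR A Ω (a Ω) := by
    intro a ha has
    have : QQ A Ω (a Ω) = 0 := by
      unfold QQ
      rw [PP_eq A Ω (y := 0) (zero_mem _), smul_zero]
      intro κ hκ
      have := im_KK A Ω ha has hκ
      simp [inner_smul_left, this]
    rw [VV_apply, RR_apply, this]; simp
  obtain ⟨b, hb, c, hc, bs, cs, e1, e2⟩ := decomp ha
  rw [e2, e1]
  simp only [sub_apply, add_apply, smul_apply, map_sub, map_add, map_smulₛₗ, key b hb bs,
    key c hc cs, Complex.conj_I, RingHom.id_apply]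
  simp

theorem VV_h3 {α β : H} (h : ∀ k ∈ A, ⟪α, k Ω⟫ = ⟪star k Ω, β⟫) : RR A Ω α = VV A Ω β := by
  have hK : ∀ κ ∈ KK A Ω, ⟪α, κ⟫ = ⟪κ, β⟫ := by
    intro κ hκ
    refine KK_ind A Ω (f := fun κ => ⟪α, κ⟫) (g := fun κ => ⟪κ, β⟫) (by fun_prop) (by fun_prop)
      (fun a ha has => ?_) hκ
    have := h a ha
    rwa [has] at this
  apply ext_re
  intro ξ
  have e1 : ⟪α, PP A Ω ξ⟫ = ⟪PP A Ω ξ, β⟫ := hK _ (PP_mem _ _ _)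
  have e2 : ⟪α, QQ A Ω ξ⟫ = -⟪QQ A Ω ξ, β⟫ := by
    unfold QQ
    rw [inner_smul_right, inner_smul_left, hK _ (PP_mem _ _ _)]
    simp
  rw [RR_apply, inner_add_left, Complex.add_re, PP_sym, QQ_sym, e1, e2, VV_sym, VV_apply,
    inner_sub_left]
  simp; ring

theorem PP'_eq (hsep : IsCyclicVector (A.commutant : Set (H →L[ℂ] H)) Ω) (x : H) :
    PP A.commutant Ω x = x - QQ A Ω x := by
  have orth : ∀ κ ∈ KK A.commutant Ω, ∀ y, (⟪QQ A Ω y, κ⟫).re = 0 := by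
    intro κ hκ y
    have : (⟪QQ A Ω y, κ⟫).re = (0 : ℂ).re := by
      have h2 := KK_ind A.commutant Ω (f := fun κ => ((⟪QQ A Ω y, κ⟫).re : ℂ)) (g := fun κ => 0)
        (by fun_prop) (by fun_prop) (fun a ha has => by
          have := im_KK A Ω ha has (PP_mem A Ω (-(Complex.I • y)))
          rw [← inner_conj_symm, Complex.conj_re]
          unfold QQ
          rw [inner_smul_right]
          rw [map_neg] at this
          simpa using this) hκ
      simpa using h2
    simpa using this
  apply PP_eq
  · set y := x - QQ A Ω x
    have hy : QQ A Ω y = 0 := by rw [QQ_sub, QQ_QQ, sub_self]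
    have hζ : y - PP A.commutant Ω y = 0 := by
      set ζ := y - PP A.commutant Ω y with hζdef
      have z1 : ∀ κ ∈ KK A.commutant Ω, (⟪ζ, κ⟫).re = 0 := fun κ hκ => PP_orth _ _ _ hκ
      have z2 : QQ A Ω ζ = 0 := by
        apply ext_re
        intro v
        rw [QQ_sym, hζdef, inner_sub_left, Complex.sub_re, ← QQ_sym, hy, ← QQ_sym, inner_zero_left]
        rw [QQ_sym, ← inner_conj_symm, Complex.conj_re, orth _ (PP_mem _ _ _)]
        simp
      have z3 : ∀ a ∈ A, star a = a → (⟪a Ω, ζ⟫).im = 0 := by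
        intro a ha has
        have : PP A Ω (Complex.I • ζ) = 0 := by rw [PP_I, z2, smul_zero]
        have e := PP_orth A Ω (Complex.I • ζ) (mem_KK A Ω ha has)
        rw [this, sub_zero, inner_smul_left] at e
        rw [← inner_conj_symm, Complex.conj_im, neg_eq_zero]
        simpa using e
      apply density hsep
      · intro a ha
        have key : ∀ a ∈ A.commutant, star a = a → ⟪a Ω, ζ⟫ = -⟪ζ, a Ω⟫ := by
          intro a ha has
          have := z1 _ (mem_KK _ Ω ha has)
          have hc := inner_conj_symm (𝕜 := ℂ) ζ (a Ω)
          have r1 := congrArg Complex.re hc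
          have r2 := congrArg Complex.im hc
          rw [Complex.conj_re] at r1
          rw [Complex.conj_im] at r2
          apply Complex.ext <;> simp only [Complex.neg_re, Complex.neg_im] <;> linarith
        obtain ⟨b, hb, c, hc, bs, cs, e1, e2⟩ := decomp ha
        rw [e2, e1]
        simp only [sub_apply, add_apply, smul_apply, inner_add_left, inner_sub_right,
          inner_smul_left, inner_smul_right, key b hb bs, key c hc cs, Complex.conj_I]
        ring
      · rw [VonNeumannAlgebra.commutant_commutant]
        intro a ha
        have key : ∀ a ∈ A, star a = a → ⟪a Ω, ζ⟫ = ⟪ζ, a Ω⟫ := by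
          intro a ha has
          have := z3 a ha has
          have hc := inner_conj_symm (𝕜 := ℂ) ζ (a Ω)
          have r1 := congrArg Complex.re hc
          have r2 := congrArg Complex.im hc
          rw [Complex.conj_re] at r1
          rw [Complex.conj_im] at r2
          apply Complex.ext <;> linarith
        obtain ⟨b, hb, c, hc, bs, cs, e1, e2⟩ := decomp ha
        rw [e2, e1]
        simp only [sub_apply, add_apply, smul_apply, inner_add_left, inner_sub_right,
          inner_smul_left, inner_smul_right, key b hb bs, key c hc cs, Complex.conj_I]
        ring
    rw [sub_eq_zero.1 hζ]
    exact PP_mem _ _ _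
  · intro κ hκ
    rw [sub_sub_cancel]
    exact orth κ hκ x

theorem exists_MD (hcyc : IsCyclicVector (A : Set (H →L[ℂ] H)) Ω)
    (hsep : IsCyclicVector (A.commutant : Set (H →L[ℂ] H)) Ω) : ∃ R S T J, MD A Ω R S T J := by
  have R0 : 0 ≤ RR A Ω := nonneg_of (RR_sa A Ω) fun x => by rw [R_re]; positivity
  have S0 : 0 ≤ SS A Ω := nonneg_of (SS_sa A Ω) fun x => by rw [S_re]; positivity
  have hRS : RR A Ω + SS A Ω = 2 := by unfold SS; abel
  obtain ⟨T, J, T0, TT, Jadd, Jsmul, Jin, JJ, JT, TJ, JR, JS⟩ := polar R0 S0 hRS (RR_inj hcyc)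
    (SS_inj hsep) (VV A Ω) (VV_sym A Ω) (VV_VV A Ω) (VV_RR A Ω)
  have hQ' : ∀ x, QQ A.commutant Ω x = x - PP A Ω x := by
    intro x
    have := PP'_eq hsep (Complex.I • x)
    rw [PP_I, QQ_I, ← smul_sub] at this
    exact smul_right_injective H Complex.I_ne_zero this
  refine ⟨RR A Ω, SS A Ω, T, J, hcyc, hsep, R0, S0, hRS, RR_inj hcyc, SS_inj hsep, T0, TT, Jadd,
    Jsmul, Jin, JJ, fun x => by rw [JT, TJ], JR, JS, ?_, ?_, ?_, ?_⟩
  · intro a ha; rw [JT, VV_h1 ha]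
  · intro a ha; rw [JT, VV_h2 ha]
  · intro α β h; rw [JT, VV_h3 h]
  · intro α β h
    have := VV_h3 h
    rw [RR_apply, VV_apply, PP'_eq hsep, hQ', PP'_eq hsep, hQ'] at this
    rw [JT, SS_apply, VV_apply, add_comm, this]; abel
end

end MT

namespace MT
open Filter Topology MeasureTheory Set

section
variable {𝔄 : Type*} [CStarAlgebra 𝔄]

def EE (δ : 𝔄) (p : ℝ) : 𝔄 := cfc (fun x : ℝ => Real.exp (-p * x)) δ

theorem EE_eq {δ : 𝔄} (hδ : IsSelfAdjoint δ) (p : ℝ) :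
    EE δ p = NormedSpace.exp (p • (-δ)) := by
  have h1 : IsSelfAdjoint (p • (-δ)) := (IsSelfAdjoint.all p).smul hδ.neg
  rw [← CFC.real_exp_eq_normedSpace_exp h1]
  have : p • (-δ) = cfc (fun x : ℝ => -p * x) δ := by
    rw [cfc_const_mul_id (-p) δ]; simp
  rw [this, ← cfc_comp' Real.exp (fun x : ℝ => -p * x) δ (by fun_prop) (by fun_prop)]
  rfl

theorem EE_deriv {δ : 𝔄} (hδ : IsSelfAdjoint δ) (p : ℝ) :
    HasDerivAt (EE δ) (-(EE δ p * δ)) p := by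
  have h := hasDerivAt_exp_smul_const (𝕂 := ℝ) (-δ) p
  rw [← EE_eq hδ] at h
  rw [← mul_neg]
  refine h.congr_of_eventuallyEq (Eventually.of_forall fun q => ?_)
  exact EE_eq hδ q

theorem EE_comm {δ : 𝔄} (hδ : IsSelfAdjoint δ) (p : ℝ) : EE δ p * δ = δ * EE δ p :=
  (((Commute.refl δ).cfc_real _).eq)

theorem EE_norm {δ : 𝔄} {e : ℝ} (h : ∀ x ∈ spectrum ℝ δ, e ≤ x) {p : ℝ}
    (hp : 0 ≤ p) : ‖EE δ p‖ ≤ Real.exp (-p * e) := by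
  apply norm_cfc_le (Real.exp_pos _).le
  intro x hx
  rw [Real.norm_eq_abs, abs_of_pos (Real.exp_pos _)]
  apply Real.exp_le_exp.2
  nlinarith [h x hx]

theorem EE_cont {δ : 𝔄} (hδ : IsSelfAdjoint δ) : Continuous (EE δ) :=
  continuous_iff_continuousAt.2 fun p => (EE_deriv hδ p).continuousAt

theorem EE_zero (δ : 𝔄) (hδ : IsSelfAdjoint δ) : EE δ 0 = 1 := by
  rw [EE_eq hδ]; simp

theorem EE_bd {δ : 𝔄} {e : ℝ} (h : ∀ x ∈ spectrum ℝ δ, e ≤ x) (k : 𝔄) {p v : ℝ} (hp : 0 ≤ p) :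
    ‖EE δ p * k * EE δ (v ^ 2 * p)‖ ≤ ‖k‖ * Real.exp (-((1 + v ^ 2) * e) * p) := by
  calc _ ≤ ‖EE δ p‖ * ‖k‖ * ‖EE δ (v ^ 2 * p)‖ :=
        (norm_mul_le _ _).trans (by gcongr; exact norm_mul_le _ _)
    _ ≤ Real.exp (-p * e) * ‖k‖ * Real.exp (-(v ^ 2 * p) * e) := by
        gcongr
        · exact EE_norm h hp
        · exact EE_norm h (by positivity)
    _ = ‖k‖ * (Real.exp (-p * e) * Real.exp (-(v ^ 2 * p) * e)) := by ring
    _ = _ := by rw [← Real.exp_add]; congr 2; ring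

theorem EE_tend {c : ℝ} (hc : 0 < c) : Tendsto (fun p : ℝ => Real.exp (-c * p)) atTop (𝓝 0) := by
  apply Real.tendsto_exp_atBot.comp
  exact tendsto_id.const_mul_atTop_of_neg (by linarith)

theorem f_int {δ : 𝔄} (hδ : IsSelfAdjoint δ) {e : ℝ} (he : 0 < e)
    (h : ∀ x ∈ spectrum ℝ δ, e ≤ x) (W : 𝔄) (v : ℝ) :
    IntegrableOn (fun p => EE δ p * W * EE δ (v ^ 2 * p)) (Ioi 0) := by
  have hc := EE_cont hδ
  have hd : 0 < (1 + v ^ 2) * e := by positivity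
  refine Integrable.mono' (g := fun p => ‖W‖ * Real.exp (-((1 + v ^ 2) * e) * p))
    ((exp_neg_integrableOn_Ioi 0 hd).const_mul _) ?_ ?_
  · exact Continuous.aestronglyMeasurable (by fun_prop)
  · refine ae_restrict_of_forall_mem measurableSet_Ioi fun p hp => ?_
    exact EE_bd h W hp.le

theorem k_eq {δ : 𝔄} (hδ : IsSelfAdjoint δ) {e : ℝ} (he : 0 < e)
    (h : ∀ x ∈ spectrum ℝ δ, e ≤ x) {W k : 𝔄} {v : ℝ} (hk : δ * k + (v ^ 2) • (k * δ) = W) :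
    ∫ p in Ioi (0 : ℝ), EE δ p * W * EE δ (v ^ 2 * p) = k := by
  have hd : ∀ p ∈ Ici (0 : ℝ), HasDerivAt (fun p => -(EE δ p * k * EE δ (v ^ 2 * p)))
      (EE δ p * W * EE δ (v ^ 2 * p)) p := by
    intro p _
    have h1 := EE_deriv hδ p
    have h2 : HasDerivAt (fun p : ℝ => EE δ (v ^ 2 * p)) (v ^ 2 • -(EE δ (v ^ 2 * p) * δ)) p := by
      have := (EE_deriv hδ (v ^ 2 * p)).scomp p ((hasDerivAt_id p).const_mul (v ^ 2))
      rw [mul_one] at this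
      exact this
    have h3 := ((h1.mul_const k).mul h2).neg
    convert! h3 using 1
    rw [← hk, EE_comm hδ (v ^ 2 * p)]
    simp only [mul_add, add_mul, smul_mul_assoc, mul_smul_comm, mul_assoc, neg_mul, mul_neg,
      smul_neg, neg_add, neg_neg]
  have ht : Tendsto (fun p => -(EE δ p * k * EE δ (v ^ 2 * p))) atTop (𝓝 0) := by
    rw [← neg_zero]
    apply Tendsto.neg
    apply squeeze_zero_norm' (a := fun p => ‖k‖ * Real.exp (-((1 + v ^ 2) * e) * p))
    · filter_upwards [eventually_ge_atTop 0] with p hp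
      exact EE_bd h k hp
    · have := (EE_tend (c := (1 + v ^ 2) * e) (by positivity)).const_mul ‖k‖
      simpa using this
  rw [integral_Ioi_of_hasDerivAt_of_tendsto' hd (f_int hδ he h W v) ht]
  simp [EE_zero δ hδ]

theorem f_int2 {δ : 𝔄} (hδ : IsSelfAdjoint δ) {e : ℝ} (he : 0 < e)
    (h : ∀ x ∈ spectrum ℝ δ, e ≤ x) (W : 𝔄) :
    Integrable (Function.uncurry fun v p : ℝ => EE δ p * W * EE δ (v ^ 2 * p))
      ((volume.restrict (Ioi 0)).prod (volume.restrict (Ioi 0))) := by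
  have hc := EE_cont hδ
  have hm : AEStronglyMeasurable (Function.uncurry fun v p : ℝ => EE δ p * W * EE δ (v ^ 2 * p))
      ((volume.restrict (Ioi 0)).prod (volume.restrict (Ioi 0))) := by
    apply Continuous.aestronglyMeasurable
    unfold Function.uncurry
    fun_prop
  rw [integrable_prod_iff hm]
  refine ⟨Eventually.of_forall fun v => f_int hδ he h W v, ?_⟩
  refine Integrable.mono' (g := fun v => ‖W‖ * e⁻¹ * (1 + v ^ 2)⁻¹)
    (integrable_inv_one_add_sq.integrableOn.const_mul _) ?_ ?_
  · exact hm.norm.integral_prod_right'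
  · refine Eventually.of_forall fun v => ?_
    have hd : 0 < (1 + v ^ 2) * e := by positivity
    have hi := ((exp_neg_integrableOn_Ioi 0 hd).const_mul ‖W‖)
    rw [Real.norm_of_nonneg (integral_nonneg fun _ => norm_nonneg _)]
    calc _ ≤ ∫ p in Ioi (0 : ℝ), ‖W‖ * Real.exp (-((1 + v ^ 2) * e) * p) := by
          refine setIntegral_mono_on (f_int hδ he h W v).norm hi measurableSet_Ioi fun p hp => ?_
          exact EE_bd h W (le_of_lt hp)
      _ = _ := by
          rw [integral_const_mul, integral_exp_mul_Ioi (by linarith)]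
          simp; field_simp

theorem csq {δ : 𝔄} {e : ℝ} (he : 0 < e) (h : ∀ x ∈ spectrum ℝ δ, e ≤ x) :
    ContinuousOn (fun x : ℝ => (√x)⁻¹) (spectrum ℝ δ) := by
  apply ContinuousOn.inv₀
  · fun_prop
  · intro x hx
    have hx0 : 0 < x := by linarith [h x hx]
    positivity

theorem E_gauss {δ : 𝔄} (hδ : IsSelfAdjoint δ) {e : ℝ} (he : 0 < e)
    (h : ∀ x ∈ spectrum ℝ δ, e ≤ x) {p : ℝ} (hp : 0 < p) :
    ∫ v in Ioi (0 : ℝ), EE δ (v ^ 2 * p) =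
      (√Real.pi / 2 * (√p)⁻¹) • cfc (fun x => (√x)⁻¹) δ := by
  have h0 : ∀ x ∈ spectrum ℝ δ, x ≠ 0 := fun x hx => by linarith [h x hx]
  unfold EE
  rw [← cfc_setIntegral measurableSet_Ioi (fun v x => Real.exp (-(v ^ 2 * p) * x))
    (fun v => Real.exp (-(p * e) * v ^ 2)) δ, ← cfc_smul _ _ _ (csq he h)]
  · apply cfc_congr
    intro x hx
    have hx0 : 0 < x := by linarith [h x hx]
    have := integral_gaussian_Ioi (p * x)
    simp only
    calc _ = ∫ v in Ioi (0 : ℝ), Real.exp (-(p * x) * v ^ 2) := by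
          congr 1; ext v; congr 1; ring
      _ = _ := by
          rw [this, Real.sqrt_div Real.pi_pos.le, Real.sqrt_mul hp.le]
          simp only [smul_eq_mul]
          field_simp
  · apply Continuous.continuousOn
    unfold Function.uncurry
    fun_prop
  · refine Eventually.of_forall fun v x hx => ?_
    rw [Real.norm_of_nonneg (Real.exp_pos _).le]
    apply Real.exp_le_exp.2
    have := mul_le_mul_of_nonneg_left (h x hx) (show 0 ≤ v ^ 2 * p by positivity)
    nlinarith
  · exact (integrable_exp_neg_mul_sq (by positivity)).integrableOn.2

theorem E_gamma {δ : 𝔄} (hδ : IsSelfAdjoint δ) {e : ℝ} (he : 0 < e)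
    (h : ∀ x ∈ spectrum ℝ δ, e ≤ x) :
    IntegrableOn (fun p : ℝ => (√p)⁻¹ • EE δ p) (Ioi 0) ∧
    ∫ p in Ioi (0 : ℝ), (√p)⁻¹ • EE δ p = √Real.pi • cfc (fun x => (√x)⁻¹) δ := by
  have key : ∀ x, 0 < x → ∀ p ∈ Ioi (0 : ℝ),
      (√p)⁻¹ * Real.exp (-p * x) = p ^ ((1 / 2 : ℝ) - 1) * Real.exp (-(x * p)) := by
    intro x hx p hp
    rw [show (1 / 2 : ℝ) - 1 = -(1 / 2) by norm_num, Real.rpow_neg (le_of_lt hp), Real.sqrt_eq_rpow]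
    congr 2; ring
  have hint : IntegrableOn (fun p : ℝ => (√p)⁻¹ * Real.exp (-p * e)) (Ioi 0) := by
    have h1 : IntegrableOn (fun p : ℝ => p ^ (-(1/2) : ℝ) * Real.exp (-e * p ^ (1 : ℝ))) (Ioi 0) :=
      integrableOn_rpow_mul_exp_neg_mul_rpow (by norm_num) one_pos he
    refine h1.congr_fun (fun p hp => ?_) measurableSet_Ioi
    simp only
    rw [key e he p hp, show (1 / 2 : ℝ) - 1 = -(1 / 2) by norm_num, Real.rpow_one]
    congr 2; ring
  have hsm : ∀ p : ℝ, (√p)⁻¹ • EE δ p = cfc (fun x => (√p)⁻¹ * Real.exp (-p * x)) δ := by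
    intro p
    unfold EE
    rw [← cfc_smul _ _ _ (by fun_prop)]; rfl
  have hcont : ContinuousOn (Function.uncurry fun (p x : ℝ) => (√p)⁻¹ * Real.exp (-p * x))
      (Ioi 0 ×ˢ spectrum ℝ δ) := by
    unfold Function.uncurry
    apply ContinuousOn.mul
    · apply ContinuousOn.inv₀ (by fun_prop)
      rintro ⟨p, x⟩ ⟨hp, -⟩
      exact (Real.sqrt_pos.2 hp).ne'
    · fun_prop
  have hb : ∀ᵐ p ∂(volume.restrict (Ioi (0 : ℝ))), ∀ z ∈ spectrum ℝ δ,
      ‖(√p)⁻¹ * Real.exp (-p * z)‖ ≤ (√p)⁻¹ * Real.exp (-p * e) := by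
    refine ae_restrict_of_forall_mem measurableSet_Ioi fun p hp x hx => ?_
    rw [Real.norm_of_nonneg (by positivity)]
    simp only [mem_Ioi] at hp
    refine mul_le_mul_of_nonneg_left (Real.exp_le_exp.2 ?_) (by positivity)
    nlinarith [h x hx]
  simp only [hsm]
  refine ⟨integrableOn_cfc measurableSet_Ioi _ _ δ hcont hb hint.2, ?_⟩
  rw [← cfc_setIntegral measurableSet_Ioi _ _ δ hcont hb hint.2, ← cfc_smul _ _ _ (csq he h)]
  · apply cfc_congr
    intro x hx
    have hx0 : 0 < x := by linarith [h x hx]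
    simp only
    rw [setIntegral_congr_fun measurableSet_Ioi (key x hx0),
      Real.integral_rpow_mul_exp_neg_mul_Ioi (by norm_num) hx0, Real.Gamma_one_half_eq,
      ← Real.sqrt_eq_rpow, Real.sqrt_div zero_le_one]
    simp [mul_comm]

theorem sylv {δ : 𝔄} (hδ : IsSelfAdjoint δ) {e : ℝ} (he : 0 < e)
    (h : ∀ x ∈ spectrum ℝ δ, e ≤ x) {W : 𝔄} {k : ℝ → 𝔄}
    (hk : ∀ v, 0 < v → δ * k v + (v ^ 2) • (k v * δ) = W) :
    IntegrableOn k (Ioi 0) ∧ ∫ v in Ioi (0 : ℝ), k v =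
      (Real.pi / 2) • (cfc (fun x => (√x)⁻¹) δ * W * cfc (fun x => (√x)⁻¹) δ) := by
  have hkv : ∀ v ∈ Ioi (0 : ℝ), ∫ p in Ioi (0 : ℝ), EE δ p * W * EE δ (v ^ 2 * p) = k v :=
    fun v hv => k_eq hδ he h (hk v hv)
  have hI := f_int2 hδ he h W
  constructor
  · have h1 := hI.integral_prod_left
    exact (integrable_congr (ae_restrict_of_forall_mem measurableSet_Ioi hkv)).1 h1
  · rw [← setIntegral_congr_fun measurableSet_Ioi hkv, integral_integral_swap hI]
    set G := cfc (fun x => (√x)⁻¹) δ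
    have h2 : ∀ p ∈ Ioi (0 : ℝ), ∫ v in Ioi (0 : ℝ), EE δ p * W * EE δ (v ^ 2 * p) =
        ((√p)⁻¹ • EE δ p) * ((√Real.pi / 2) • (W * G)) := by
      intro p hp
      have hint : IntegrableOn (fun v : ℝ => EE δ (v ^ 2 * p)) (Ioi 0) := by
        have hc := EE_cont hδ
        refine Integrable.mono' (g := fun v => Real.exp (-(p * e) * v ^ 2))
          (integrable_exp_neg_mul_sq (mul_pos hp he)).integrableOn ?_ ?_
        · exact Continuous.aestronglyMeasurable (by fun_prop)
        · refine Eventually.of_forall fun v => ?_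
          simp only [mem_Ioi] at hp
          refine (EE_norm h (by positivity)).trans (le_of_eq ?_)
          congr 1; ring
      have := (ContinuousLinearMap.mul ℝ 𝔄 (EE δ p * W)).integral_comp_comm hint
      simp only [ContinuousLinearMap.mul_apply'] at this
      rw [this, E_gauss hδ he h hp, mul_smul_comm, smul_mul_smul_comm, mul_comm, mul_assoc]
    rw [setIntegral_congr_fun measurableSet_Ioi h2]
    obtain ⟨i1, i2⟩ := E_gamma hδ he h
    have := ((ContinuousLinearMap.mul ℝ 𝔄).flip ((√Real.pi / 2) • (W * G))).integral_comp_comm i1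
    simp only [ContinuousLinearMap.flip_apply, ContinuousLinearMap.mul_apply'] at this
    rw [this, i2, smul_mul_smul_comm, mul_assoc]
    congr 1
    rw [← mul_div_assoc, Real.mul_self_sqrt Real.pi_pos.le]
end
end MT

namespace MT
open Filter Topology MeasureTheory Set

section
variable {𝔄 : Type*} [CStarAlgebra 𝔄]

theorem cfc_mul3 {R : 𝔄} {f g k : ℝ → ℝ} (hf : ContinuousOn f (spectrum ℝ R))
    (hg : ContinuousOn g (spectrum ℝ R)) (h : ∀ x ∈ spectrum ℝ R, f x * g x = k x) :
    cfc f R * cfc g R = cfc k R := by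
  rw [← cfc_mul f g R hf hg]
  exact cfc_congr h

def th (ε x : ℝ) : ℝ := max 0 (x * (2 - x) - ε)
def gg (ε x : ℝ) : ℝ := th ε x / max x (ε / 2)
def dd (ε x : ℝ) : ℝ := max (2 - x) (ε / 2) / max x (ε / 2)

theorem th_cont (ε : ℝ) : Continuous (th ε) := by unfold th; fun_prop

theorem gg_cont {ε : ℝ} (hε : 0 < ε) : Continuous (gg ε) := by
  unfold gg
  refine (th_cont ε).div (by fun_prop) fun x => ?_
  have : 0 < max x (ε / 2) := lt_max_of_lt_right (by positivity)
  exact this.ne'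

theorem dd_cont {ε : ℝ} (hε : 0 < ε) : Continuous (dd ε) := by
  unfold dd
  refine Continuous.div (by fun_prop) (by fun_prop) fun x => ?_
  have : 0 < max x (ε / 2) := lt_max_of_lt_right (by positivity)
  exact this.ne'

theorem th_cases (ε : ℝ) {x : ℝ} (hx : 0 ≤ x) (hx2 : x ≤ 2) :
    th ε x = 0 ∨ (ε / 2 ≤ x ∧ ε / 2 ≤ 2 - x) := by
  unfold th
  rcases le_or_gt (x * (2 - x) - ε) 0 with h | h
  · left; exact max_eq_left h
  · right; constructor <;> nlinarith

theorem gg1 {ε : ℝ} {x : ℝ} (hε : 0 < ε) (hx : 0 ≤ x) (hx2 : x ≤ 2) : gg ε x * x = th ε x := by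
  unfold gg
  rcases th_cases ε hx hx2 with h | ⟨h1, h2⟩
  · simp [h]
  · rw [max_eq_left h1]
    have : x ≠ 0 := by linarith
    field_simp

theorem gg2 {ε : ℝ} {x : ℝ} (hx : 0 ≤ x) (hx2 : x ≤ 2) :
    gg ε x * (2 - x) = dd ε x * th ε x := by
  unfold gg dd
  rcases th_cases ε hx hx2 with h | ⟨h1, h2⟩
  · simp [h]
  · rw [max_eq_left h1, max_eq_left h2]
    ring

theorem gg3 {ε : ℝ} {x : ℝ} (hε : 0 < ε) (hx : 0 ≤ x) (hx2 : x ≤ 2) :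
    gg ε x * √(x * (2 - x)) = √(dd ε x) * th ε x := by
  unfold gg dd
  rcases th_cases ε hx hx2 with h | ⟨h1, h2⟩
  · simp [h]
  · rw [max_eq_left h1, max_eq_left h2, Real.sqrt_mul hx, Real.sqrt_div (by linarith)]
    have hx0 : 0 < x := by linarith
    have : √x * √x = x := Real.mul_self_sqrt hx
    have h3 : 0 < √x := Real.sqrt_pos.2 hx0
    field_simp
    rw [sq, this]

theorem dd_ge {ε x : ℝ} (hε : 0 < ε) (hε1 : ε ≤ 1) (hx2 : x ≤ 2) : ε / 4 ≤ dd ε x := by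
  unfold dd
  have h0 : 0 < max x (ε / 2) := lt_max_of_lt_right (by positivity)
  have h1 : max x (ε / 2) ≤ 2 := max_le hx2 (by linarith)
  have h2 : ε / 2 ≤ max (2 - x) (ε / 2) := le_max_right _ _
  rw [le_div_iff₀ h0]
  nlinarith

theorem step1 {R X : 𝔄} (hR : IsSelfAdjoint R) (hsp : ∀ x ∈ spectrum ℝ R, 0 ≤ x ∧ x ≤ 2)
    {h : ℝ → 𝔄} {S T : 𝔄} (hS : S = cfc (fun x : ℝ => 2 - x) R)
    (hT : T = cfc (fun x : ℝ => √(x * (2 - x))) R)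
    (op : ∀ v, 0 < v → (2 : ℝ) • (T * X * T) = v⁻¹ • (S * h v * R) + v • (R * h v * S))
    {ε : ℝ} (hε : 0 < ε) (hε1 : ε ≤ 1) :
    IntegrableOn (fun v => v⁻¹ • (cfc (th ε) R * h v * cfc (th ε) R)) (Ioi 0) ∧
    ∫ v in Ioi (0 : ℝ), v⁻¹ • (cfc (th ε) R * h v * cfc (th ε) R) =
      Real.pi • (cfc (th ε) R * X * cfc (th ε) R) := by
  set θ := cfc (th ε) R with hθ
  set δ := cfc (dd ε) R with hδdef
  set s := cfc (fun x => √(dd ε x)) R with hs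
  set g := cfc (gg ε) R with hg
  have cth := (th_cont ε).continuousOn (s := spectrum ℝ R)
  have cgg := (gg_cont hε).continuousOn (s := spectrum ℝ R)
  have cdd := (dd_cont hε).continuousOn (s := spectrum ℝ R)
  have csd : ContinuousOn (fun x => √(dd ε x)) (spectrum ℝ R) :=
    (Real.continuous_sqrt.comp (dd_cont hε)).continuousOn
  have hRid : R = cfc (fun x : ℝ => x) R := (cfc_id' ℝ R).symm
  have gR : g * R = θ := by
    conv_lhs => rw [hRid]
    exact cfc_mul3 cgg (by fun_prop) fun x hx => gg1 hε (hsp x hx).1 (hsp x hx).2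
  have Rg : R * g = θ := by
    conv_lhs => rw [hRid]
    exact cfc_mul3 (by fun_prop) cgg fun x hx => by
      rw [mul_comm]; exact gg1 hε (hsp x hx).1 (hsp x hx).2
  have gS : g * S = δ * θ := by
    rw [hS, hδdef, hθ, cfc_mul3 cdd cth fun x _ => rfl]
    exact cfc_mul3 cgg (by fun_prop) fun x hx => gg2 (hsp x hx).1 (hsp x hx).2
  have Sg : S * g = θ * δ := by
    rw [hS, hδdef, hθ, cfc_mul3 (k := fun x => dd ε x * th ε x) cth cdd fun x _ => mul_comm _ _]
    exact cfc_mul3 (by fun_prop) cgg fun x hx => by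
      rw [mul_comm]; exact gg2 (hsp x hx).1 (hsp x hx).2
  have gT : g * T = s * θ := by
    rw [hT, hs, hθ, cfc_mul3 csd cth fun x _ => rfl]
    exact cfc_mul3 cgg (by fun_prop) fun x hx => gg3 hε (hsp x hx).1 (hsp x hx).2
  have Tg : T * g = θ * s := by
    rw [hT, hs, hθ, cfc_mul3 (k := fun x => √(dd ε x) * th ε x) cth csd fun x _ => mul_comm _ _]
    exact cfc_mul3 (by fun_prop) cgg fun x hx => by
      rw [mul_comm]; exact gg3 hε (hsp x hx).1 (hsp x hx).2
  have hδsa : IsSelfAdjoint δ := cfc_predicate _ _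
  have hδsp : ∀ x ∈ spectrum ℝ δ, ε / 4 ≤ x := by
    rw [hδdef, cfc_map_spectrum (dd ε) R (hf := cdd)]
    rintro _ ⟨x, hx, rfl⟩
    exact dd_ge hε hε1 (hsp x hx).2
  have hk : ∀ v, 0 < v → δ * (v⁻¹ • (θ * h v * θ)) + (v ^ 2) • ((v⁻¹ • (θ * h v * θ)) * δ) =
      (2 : ℝ) • (s * θ * X * (θ * s)) := by
    intro v hv
    have e := congrArg (fun z => g * z * g) (op v hv)
    simp only [mul_add, add_mul, smul_mul_assoc, mul_smul_comm] at e
    have e1 : g * (T * X * T) * g = s * θ * X * (θ * s) := by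
      rw [← gT, ← Tg]; simp only [mul_assoc]
    have e2 : g * (S * h v * R) * g = δ * (θ * h v * θ) := by
      calc _ = (g * S) * h v * (R * g) := by simp only [mul_assoc]
        _ = _ := by rw [gS, Rg]; simp only [mul_assoc]
    have e3 : g * (R * h v * S) * g = θ * h v * θ * δ := by
      calc _ = (g * R) * h v * (S * g) := by simp only [mul_assoc]
        _ = _ := by rw [gR, Sg]; simp only [mul_assoc]
    rw [e1, e2, e3] at e
    rw [e, mul_smul_comm, smul_mul_assoc, smul_smul]
    congr 2
    field_simp
  obtain ⟨i1, i2⟩ := sylv hδsa (by positivity) hδsp hk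
  refine ⟨i1, ?_⟩
  rw [i2]
  have hpos : ∀ x ∈ spectrum ℝ R, 0 < dd ε x := fun x hx => by
    linarith [dd_ge hε hε1 (hsp x hx).2]
  have hG : cfc (fun x => (√x)⁻¹) δ = cfc (fun x => (√(dd ε x))⁻¹) R := by
    have hcc : ContinuousOn (fun x : ℝ => (√x)⁻¹) (dd ε '' spectrum ℝ R) := by
      rw [← cfc_map_spectrum (dd ε) R (hf := cdd)]
      exact csq (by positivity) hδsp
    rw [hδdef, ← cfc_comp' (fun x => (√x)⁻¹) (dd ε) R hcc cdd]
  have cG : ContinuousOn (fun x => (√(dd ε x))⁻¹) (spectrum ℝ R) := by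
    apply csd.inv₀
    intro x hx
    exact (Real.sqrt_pos.2 (hpos x hx)).ne'
  have h1 : cfc (fun x => (√x)⁻¹) δ * s = 1 := by
    rw [hG, hs, cfc_mul3 (k := fun _ => 1) cG csd, cfc_const_one ℝ R]
    intro x hx
    exact inv_mul_cancel₀ (Real.sqrt_pos.2 (hpos x hx)).ne'
  have h2 : s * cfc (fun x => (√x)⁻¹) δ = 1 := by
    rw [hG, hs, cfc_mul3 (k := fun _ => 1) csd cG, cfc_const_one ℝ R]
    intro x hx
    exact mul_inv_cancel₀ (Real.sqrt_pos.2 (hpos x hx)).ne'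
  set G := cfc (fun x => (√x)⁻¹) δ
  rw [mul_smul_comm, smul_mul_assoc, smul_smul]
  congr 1
  · ring
  · calc _ = (G * s) * (θ * X * θ) * (s * G) := by simp only [mul_assoc]
      _ = _ := by rw [h1, h2]; simp

theorem th_norm {R : 𝔄} (hR : IsSelfAdjoint R) (hsp : ∀ x ∈ spectrum ℝ R, 0 ≤ x ∧ x ≤ 2)
    {ε : ℝ} (hε : 0 < ε) : ‖cfc (th ε) R - cfc (fun x : ℝ => x * (2 - x)) R‖ ≤ ε := by
  rw [← cfc_sub (th ε) (fun x : ℝ => x * (2 - x)) R (th_cont ε).continuousOn (by fun_prop)]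
  apply norm_cfc_le hε.le
  intro x hx
  have : 0 ≤ x * (2 - x) := mul_nonneg (hsp x hx).1 (by linarith [(hsp x hx).2])
  unfold th
  rw [Real.norm_eq_abs, abs_le]
  constructor
  · linarith [le_max_right 0 (x * (2 - x) - ε)]
  · rcases max_cases 0 (x * (2 - x) - ε) with h | h <;> linarith

theorem th_fac {R : 𝔄} (hR : IsSelfAdjoint R) (hsp : ∀ x ∈ spectrum ℝ R, 0 ≤ x ∧ x ≤ 2)
    {ε : ℝ} (hε : 0 < ε) : ∃ t : 𝔄, ‖t‖ ≤ 1 ∧ cfc (th ε) R = t * cfc (fun x : ℝ => x * (2 - x)) R ∧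
      cfc (th ε) R = cfc (fun x : ℝ => x * (2 - x)) R * t := by
  have hc : Continuous fun x => th ε x / max (x * (2 - x)) ε := by
    refine (th_cont ε).div (by fun_prop) fun x => ?_
    have : 0 < max (x * (2 - x)) ε := lt_max_of_lt_right (by positivity)
    exact this.ne'
  have key : ∀ x, th ε x / max (x * (2 - x)) ε * (x * (2 - x)) = th ε x := by
    intro x
    unfold th
    rcases le_or_gt (x * (2 - x) - ε) 0 with h | h
    · rw [max_eq_left h]; simp
    · have : x * (2 - x) ≠ 0 := by linarith
      rw [max_eq_left (b := ε) (by linarith), div_mul_cancel₀ _ this]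
  refine ⟨cfc (fun x => th ε x / max (x * (2 - x)) ε) R, ?_, ?_, ?_⟩
  · apply norm_cfc_le zero_le_one
    intro x hx
    have h0 : 0 < max (x * (2 - x)) ε := lt_max_of_lt_right (by positivity)
    have h1 : 0 ≤ th ε x := le_max_left _ _
    rw [Real.norm_of_nonneg (by positivity), div_le_one h0]
    unfold th
    exact max_le h0.le (by linarith [le_max_left (x * (2 - x)) ε])
  · exact (cfc_mul3 hc.continuousOn (by fun_prop) fun x _ => key x).symm
  · exact (cfc_mul3 (by fun_prop) hc.continuousOn fun x _ => by rw [mul_comm]; exact key x).symm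

theorem bound_U {R S T U X h : 𝔄} (h1 : ‖h‖ ≤ 1) (U1 : U = R * S) (U2 : U = S * R)
    {v : ℝ} (hv : 0 < v)
    (op : (2 : ℝ) • (T * X * T) = v⁻¹ • (S * h * R) + v • (R * h * S)) :
    ‖v⁻¹ • (U * h * U)‖ ≤ 2 * (‖R‖ * ‖S‖ * (2 * ‖T * X * T‖ + ‖R‖ * ‖S‖)) * (1 + v ^ 2)⁻¹ := by
  have n3 : ∀ a b c : 𝔄, ‖a * b * c‖ ≤ ‖a‖ * ‖b‖ * ‖c‖ := fun a b c =>
    (norm_mul_le _ _).trans (by gcongr; exact norm_mul_le _ _)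
  set N := 2 * ‖T * X * T‖
  set M := ‖R‖ * ‖S‖
  have hN : 0 ≤ N := by positivity
  have hM : 0 ≤ M := by positivity
  have b1 : ‖S * h * R‖ ≤ M := by
    calc _ ≤ ‖S‖ * ‖h‖ * ‖R‖ := n3 _ _ _
      _ ≤ ‖S‖ * 1 * ‖R‖ := by gcongr
      _ = M := by simp only [M]; ring
  have b2 : ‖R * h * S‖ ≤ M := by
    calc _ ≤ ‖R‖ * ‖h‖ * ‖S‖ := n3 _ _ _
      _ ≤ ‖R‖ * 1 * ‖S‖ := by gcongr
      _ = M := by simp only [M]; ring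
  have hNn : ‖(2 : ℝ) • (T * X * T)‖ = N := by rw [norm_smul]; simp [N]
  rw [norm_smul, Real.norm_of_nonneg (by positivity)]
  have hvi : v⁻¹ * v = 1 := inv_mul_cancel₀ hv.ne'
  have hvp : 0 < v⁻¹ := by positivity
  suffices hh : ‖U * h * U‖ * (1 + v ^ 2) ≤ 2 * (M * (N + M)) * v by
    rw [← div_eq_mul_inv, le_div_iff₀ (by positivity)]
    calc _ = v⁻¹ * (‖U * h * U‖ * (1 + v ^ 2)) := by ring
      _ ≤ v⁻¹ * (2 * (M * (N + M)) * v) := by gcongr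
      _ = 2 * (M * (N + M)) * (v⁻¹ * v) := by ring
      _ = _ := by rw [hvi, mul_one]
  have hMN : 0 ≤ M * (N + M) := by positivity
  rcases le_or_gt v 1 with hv1 | hv1
  · have e : S * h * R = v • ((2 : ℝ) • (T * X * T) - v • (R * h * S)) := by
      rw [op, add_sub_cancel_right, smul_smul, mul_inv_cancel₀ hv.ne', one_smul]
    have b3 : ‖S * h * R‖ ≤ v * (N + M) := by
      rw [e, norm_smul, Real.norm_of_nonneg hv.le]
      gcongr
      refine (norm_sub_le _ _).trans ?_
      rw [hNn, norm_smul, Real.norm_of_nonneg hv.le]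
      nlinarith [norm_nonneg (R * h * S)]
    have b4 : ‖U * h * U‖ ≤ M * (v * (N + M)) := by
      calc ‖U * h * U‖ = ‖R * (S * h * R) * S‖ := by
            conv_lhs => rw [U1]
            simp only [mul_assoc]
        _ ≤ ‖R‖ * ‖S * h * R‖ * ‖S‖ := n3 _ _ _
        _ ≤ ‖R‖ * (v * (N + M)) * ‖S‖ := by gcongr
        _ = _ := by simp only [M]; ring
    have : 1 + v ^ 2 ≤ 2 := by nlinarith
    calc _ ≤ M * (v * (N + M)) * 2 := by gcongr
      _ = _ := by ring
  · have e : R * h * S = v⁻¹ • ((2 : ℝ) • (T * X * T) - v⁻¹ • (S * h * R)) := by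
      rw [op, add_sub_cancel_left, smul_smul, hvi, one_smul]
    have hv2 : v⁻¹ ≤ 1 := inv_le_one_of_one_le₀ hv1.le
    have b3 : ‖R * h * S‖ ≤ v⁻¹ * (N + M) := by
      rw [e, norm_smul, Real.norm_of_nonneg hvp.le]
      gcongr
      refine (norm_sub_le _ _).trans ?_
      rw [hNn, norm_smul, Real.norm_of_nonneg hvp.le]
      nlinarith [norm_nonneg (S * h * R)]
    have b4 : ‖U * h * U‖ ≤ M * (v⁻¹ * (N + M)) := by
      calc ‖U * h * U‖ = ‖S * (R * h * S) * R‖ := by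
            conv_lhs => rw [U2]
            simp only [mul_assoc]
        _ ≤ ‖S‖ * ‖R * h * S‖ * ‖R‖ := n3 _ _ _
        _ ≤ ‖S‖ * (v⁻¹ * (N + M)) * ‖R‖ := by gcongr
        _ = _ := by simp only [M]; ring
    have : 1 + v ^ 2 ≤ 2 * v ^ 2 := by nlinarith
    calc _ ≤ M * (v⁻¹ * (N + M)) * (2 * v ^ 2) := by gcongr
      _ = 2 * (M * (N + M)) * v * (v⁻¹ * v) := by ring
      _ = _ := by rw [hvi, mul_one]

theorem inversion {R X : 𝔄} (hR : IsSelfAdjoint R) (hsp : ∀ x ∈ spectrum ℝ R, 0 ≤ x ∧ x ≤ 2)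
    {h : ℝ → 𝔄} {S T U : 𝔄} (hS : S = cfc (fun x : ℝ => 2 - x) R)
    (hT : T = cfc (fun x : ℝ => √(x * (2 - x))) R) (hU : U = R * S)
    (h1 : ∀ v, 0 < v → ‖h v‖ ≤ 1)
    (op : ∀ v, 0 < v → (2 : ℝ) • (T * X * T) = v⁻¹ • (S * h v * R) + v • (R * h v * S)) :
    IntegrableOn (fun v => v⁻¹ • (U * h v * U)) (Ioi 0) ∧
    ∫ v in Ioi (0 : ℝ), v⁻¹ • (U * h v * U) = Real.pi • (U * X * U) := by
  have hRid : R = cfc (fun x : ℝ => x) R := (cfc_id' ℝ R).symm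
  have U1 : U = cfc (fun x : ℝ => x * (2 - x)) R := by
    rw [hU, hS]
    conv_lhs => lhs; rw [hRid]
    exact cfc_mul3 (by fun_prop) (by fun_prop) fun x _ => rfl
  have U2 : U = S * R := by
    rw [U1, hS]
    conv_rhs => rhs; rw [hRid]
    exact (cfc_mul3 (by fun_prop) (by fun_prop) fun x _ => by ring).symm
  set C := 2 * (‖R‖ * ‖S‖ * (2 * ‖T * X * T‖ + ‖R‖ * ‖S‖)) with hC
  have bU : ∀ v, 0 < v → ‖v⁻¹ • (U * h v * U)‖ ≤ C * (1 + v ^ 2)⁻¹ := fun v hv =>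
    bound_U (h1 v hv) hU U2 hv (op v hv)
  let e : ℕ → ℝ := fun n => 1 / (n + 1)
  have he : ∀ n, 0 < e n := fun n => by simp only [e]; positivity
  have he1 : ∀ n, e n ≤ 1 := fun n => by
    simp only [e]; rw [div_le_one (by positivity)]; linarith [Nat.cast_nonneg (α := ℝ) n]
  have het : Tendsto e atTop (𝓝 0) := tendsto_one_div_add_atTop_nhds_zero_nat
  have hθ : Tendsto (fun n => cfc (th (e n)) R) atTop (𝓝 U) := by
    rw [tendsto_iff_norm_sub_tendsto_zero]
    refine squeeze_zero (fun _ => norm_nonneg _) (fun n => ?_) het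
    rw [U1]; exact th_norm hR hsp (he n)
  have hst := fun n => step1 hR hsp hS hT op (he n) (he1 n)
  have bF : ∀ n v, 0 < v → ‖v⁻¹ • (cfc (th (e n)) R * h v * cfc (th (e n)) R)‖ ≤
      C * (1 + v ^ 2)⁻¹ := by
    intro n v hv
    refine le_trans ?_ (bU v hv)
    obtain ⟨t, t1, t2, t3⟩ := th_fac hR hsp (he n)
    rw [norm_smul, norm_smul]
    gcongr
    calc _ = ‖t * (U * h v * U) * t‖ := by
          congr 1
          calc _ = (t * U) * h v * (U * t) := by rw [U1, ← t2, ← t3]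
            _ = _ := by simp only [mul_assoc]
      _ ≤ ‖t‖ * ‖U * h v * U‖ * ‖t‖ := (norm_mul_le _ _).trans (by gcongr; exact norm_mul_le _ _)
      _ ≤ 1 * ‖U * h v * U‖ * 1 := by gcongr
      _ = _ := by ring
  have hlim : ∀ v, Tendsto (fun n => v⁻¹ • (cfc (th (e n)) R * h v * cfc (th (e n)) R)) atTop
      (𝓝 (v⁻¹ • (U * h v * U))) := fun v =>
    ((hθ.mul_const (h v)).mul hθ).const_smul v⁻¹
  have hgi : IntegrableOn (fun v : ℝ => C * (1 + v ^ 2)⁻¹) (Ioi 0) :=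
    integrable_inv_one_add_sq.integrableOn.const_mul _
  have hm := aestronglyMeasurable_of_tendsto_ae (μ := volume.restrict (Ioi (0 : ℝ))) atTop
    (fun n => (hst n).1.aestronglyMeasurable) (Eventually.of_forall hlim)
  refine ⟨Integrable.mono' hgi hm (ae_restrict_of_forall_mem measurableSet_Ioi bU), ?_⟩
  have hd := tendsto_integral_of_dominated_convergence (μ := volume.restrict (Ioi (0 : ℝ)))
    (fun v : ℝ => C * (1 + v ^ 2)⁻¹) (fun n => (hst n).1.aestronglyMeasurable) hgi
    (fun n => ae_restrict_of_forall_mem measurableSet_Ioi (bF n)) (Eventually.of_forall hlim)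
  refine tendsto_nhds_unique hd ?_
  simp only [(hst _).2]
  exact ((hθ.mul_const X).mul hθ).const_smul _
end
end MT

namespace MT
open Filter Topology MeasureTheory Set

def FF (v x : ℝ) : ℝ := 2 * √(x * (2 - x)) * (x * (2 - x)) / ((2 - x) + v ^ 2 * x)

theorem den_pos {v x : ℝ} (hv : 0 < v) (hx : 0 ≤ x) (hx2 : x ≤ 2) : 0 < (2 - x) + v ^ 2 * x := by
  rcases hx.eq_or_lt with h | h
  · rw [← h]; norm_num
  · have : 0 < v ^ 2 * x := by positivity
    linarith

theorem FF_int {x : ℝ} (hx : 0 ≤ x) (hx2 : x ≤ 2) :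
    ∫ v in Ioi (0 : ℝ), FF v x = Real.pi * (x * (2 - x)) := by
  rcases (mul_nonneg hx (by linarith : 0 ≤ 2 - x)).eq_or_lt with h | h
  · simp [FF, ← h]
  · have hb : 0 < x := by
      rcases hx.eq_or_lt with h' | h'
      · rw [← h'] at h; simp at h
      · exact h'
    have ha : 0 < 2 - x := pos_of_mul_pos_right h hx
    have hc : 0 < √x / √(2 - x) := by positivity
    have e : ∀ v : ℝ, FF v x = 2 * (√x / √(2 - x)) * (x * (2 - x)) *
        (1 + ((√x / √(2 - x)) * v) ^ 2)⁻¹ := by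
      intro v
      unfold FF
      have h1 : √(2 - x) ^ 2 = 2 - x := Real.sq_sqrt ha.le
      have h2 : √x ^ 2 = x := Real.sq_sqrt hx
      rw [Real.sqrt_mul hx]
      set a := √(2 - x)
      set b := √x
      have ha' : 0 < a := Real.sqrt_pos.2 ha
      have hb' : 0 < b := Real.sqrt_pos.2 hb
      rw [← h1, ← h2]
      field_simp
    simp only [e]
    rw [integral_const_mul, integral_comp_mul_left_Ioi (fun w : ℝ => (1 + w ^ 2)⁻¹) 0 hc, mul_zero,
      integral_Ioi_inv_one_add_sq]
    simp only [smul_eq_mul, Real.arctan_zero, sub_zero]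
    field_simp

theorem FF_bd {v x : ℝ} (hv : 0 < v) (hx : 0 ≤ x) (hx2 : x ≤ 2) :
    ‖FF v x‖ ≤ 4 * (1 + v ^ 2)⁻¹ := by
  have hd := den_pos hv hx hx2
  have ha : 0 ≤ 2 - x := by linarith
  have hab := mul_nonneg hx ha
  unfold FF
  rw [Real.norm_of_nonneg (by positivity), ← div_eq_mul_inv, div_le_div_iff₀ hd (by positivity)]
  have h1 : √(x * (2 - x)) ≤ 1 := by
    rw [Real.sqrt_le_left zero_le_one]; nlinarith [sq_nonneg (x - 1)]
  have h2 : x * (2 - x) * (1 + v ^ 2) ≤ 2 * (2 - x + v ^ 2 * x) := by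
    have : 0 ≤ v ^ 2 * x * x := by positivity
    nlinarith
  calc _ = √(x * (2 - x)) * (2 * (x * (2 - x) * (1 + v ^ 2))) := by ring
    _ ≤ 1 * (2 * (x * (2 - x) * (1 + v ^ 2))) := by gcongr
    _ ≤ _ := by linarith

section
variable {𝔄 : Type*} [CStarAlgebra 𝔄]

theorem FF_cont {R : 𝔄} (hsp : ∀ x ∈ spectrum ℝ R, 0 ≤ x ∧ x ≤ 2) :
    ContinuousOn (Function.uncurry FF) (Ioi 0 ×ˢ spectrum ℝ R) := by
  unfold Function.uncurry FF
  apply ContinuousOn.div (by fun_prop) (by fun_prop)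
  rintro ⟨v, x⟩ ⟨hv, hx⟩
  exact (den_pos hv (hsp x hx).1 (hsp x hx).2).ne'

theorem FF_op {R : 𝔄} (hR : IsSelfAdjoint R) (hsp : ∀ x ∈ spectrum ℝ R, 0 ≤ x ∧ x ≤ 2) :
    IntegrableOn (fun v => cfc (FF v) R) (Ioi 0) ∧
    ∫ v in Ioi (0 : ℝ), cfc (FF v) R = Real.pi • cfc (fun x : ℝ => x * (2 - x)) R := by
  have hb : ∀ᵐ v ∂(volume.restrict (Ioi (0 : ℝ))), ∀ x ∈ spectrum ℝ R,
      ‖FF v x‖ ≤ 4 * (1 + v ^ 2)⁻¹ :=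
    ae_restrict_of_forall_mem measurableSet_Ioi fun v hv x hx =>
      FF_bd hv (hsp x hx).1 (hsp x hx).2
  have hi : IntegrableOn (fun v : ℝ => 4 * (1 + v ^ 2)⁻¹) (Ioi 0) :=
    integrable_inv_one_add_sq.integrableOn.const_mul _
  refine ⟨integrableOn_cfc measurableSet_Ioi FF _ R (FF_cont hsp) hb hi.2, ?_⟩
  rw [← cfc_setIntegral measurableSet_Ioi FF _ R (FF_cont hsp) hb hi.2,
    ← cfc_smul _ _ _ (by fun_prop)]
  exact cfc_congr fun x hx => FF_int (hsp x hx).1 (hsp x hx).2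

theorem FF_inv {R : 𝔄} (hR : IsSelfAdjoint R) (hsp : ∀ x ∈ spectrum ℝ R, 0 ≤ x ∧ x ≤ 2)
    {S T U : 𝔄} (hS : S = cfc (fun x : ℝ => 2 - x) R)
    (hT : T = cfc (fun x : ℝ => √(x * (2 - x))) R) (hU : U = cfc (fun x : ℝ => x * (2 - x)) R)
    {v : ℝ} (hv : 0 < v) :
    ∃ K : 𝔄, K * (S + v ^ 2 • R) = 1 ∧ K * ((2 : ℝ) • (T * U)) = cfc (FF v) R := by
  have hne : ∀ x ∈ spectrum ℝ R, (2 - x) + v ^ 2 * x ≠ 0 := fun x hx =>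
    (den_pos hv (hsp x hx).1 (hsp x hx).2).ne'
  have hc : ContinuousOn (fun x : ℝ => ((2 - x) + v ^ 2 * x)⁻¹) (spectrum ℝ R) :=
    ContinuousOn.inv₀ (by fun_prop) hne
  refine ⟨cfc (fun x : ℝ => ((2 - x) + v ^ 2 * x)⁻¹) R, ?_, ?_⟩
  · have : S + v ^ 2 • R = cfc (fun x : ℝ => (2 - x) + v ^ 2 * x) R := by
      rw [cfc_add (a := R) (fun x : ℝ => 2 - x) (fun x => v ^ 2 * x) (by fun_prop) (by fun_prop),
        cfc_const_mul_id (v ^ 2) R, hS]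
    rw [this, cfc_mul3 (k := fun _ => 1) hc (by fun_prop) fun x hx => inv_mul_cancel₀ (hne x hx),
      cfc_const_one ℝ R]
  · have : (2 : ℝ) • (T * U) = cfc (fun x : ℝ => 2 * (√(x * (2 - x)) * (x * (2 - x)))) R := by
      rw [hT, hU, cfc_mul3 (k := fun x => √(x * (2 - x)) * (x * (2 - x))) (by fun_prop)
        (by fun_prop) (fun x _ => rfl), ← cfc_smul _ _ _ (by fun_prop)]
      rfl
    rw [this]
    refine cfc_mul3 hc (by fun_prop) fun x hx => ?_
    unfold FF
    rw [div_eq_mul_inv]; ring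
end
end MT

namespace MT
open Filter Topology MeasureTheory Set

namespace MD
variable {A : VonNeumannAlgebra H} {Ω : H} {R S T : H →L[ℂ] H} {J : H → H}

theorem Rsa (m : MD A Ω R S T J) : IsSelfAdjoint R := sa_of_nonneg m.R0
theorem Ssa (m : MD A Ω R S T J) : IsSelfAdjoint S := sa_of_nonneg m.S0
theorem Tsa (m : MD A Ω R S T J) : IsSelfAdjoint T := sa_of_nonneg m.T0

theorem S_cfc (m : MD A Ω R S T J) : S = cfc (fun x : ℝ => 2 - x) R := by
  have hR := m.Rsa
  rw [eq_sub_of_add_eq' m.RS, cfc_sub (fun _ : ℝ => (2 : ℝ)) (fun x => x) R, cfc_id' ℝ R,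
    cfc_const (2 : ℝ) R]
  rw [map_ofNat (algebraMap ℝ (H →L[ℂ] H)) 2]

theorem sp (m : MD A Ω R S T J) : ∀ x ∈ spectrum ℝ R, 0 ≤ x ∧ x ≤ 2 := by
  intro x hx
  have hR := m.Rsa
  refine ⟨spectrum_nonneg_of_nonneg m.R0 hx, ?_⟩
  have h0 := m.S0
  rw [m.S_cfc, cfc_nonneg_iff (fun x : ℝ => 2 - x) R] at h0
  have := h0 x hx
  linarith

theorem RS_cfc (m : MD A Ω R S T J) : R * S = cfc (fun x : ℝ => x * (2 - x)) R := by
  have hR := m.Rsa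
  rw [m.S_cfc]
  conv_lhs => lhs; rw [← cfc_id' ℝ R]
  exact cfc_mul3 (by fun_prop) (by fun_prop) fun x _ => rfl

theorem T_cfc (m : MD A Ω R S T J) : T = cfc (fun x : ℝ => √(x * (2 - x))) R := by
  have h1 : cfc (fun x : ℝ => √(x * (2 - x))) R * cfc (fun x : ℝ => √(x * (2 - x))) R = R * S := by
    rw [m.RS_cfc]
    refine cfc_mul3 (by fun_prop) (by fun_prop) fun x hx => Real.mul_self_sqrt ?_
    have := m.sp x hx
    nlinarith
  have h2 : 0 ≤ cfc (fun x : ℝ => √(x * (2 - x))) R := cfc_nonneg fun x _ => Real.sqrt_nonneg _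
  rw [← CFC.sqrt_unique h1 h2, CFC.sqrt_unique m.TT m.T0]

theorem RS_comm (m : MD A Ω R S T J) (x : H) : R (S x) = S (R x) := by
  have : R * S = S * R := by rw [eq_sub_of_add_eq' m.RS]; noncomm_ring
  exact DFunLike.congr_fun this x

theorem TT_ap (m : MD A Ω R S T J) (x : H) : T (T x) = R (S x) := DFunLike.congr_fun m.TT x

theorem TR (m : MD A Ω R S T J) (x : H) : T (R x) = R (T x) := by
  have : Commute T R := by
    rw [m.T_cfc]; exact (Commute.refl R).cfc_real _
  exact DFunLike.congr_fun this.eq x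

theorem TS (m : MD A Ω R S T J) (x : H) : T (S x) = S (T x) := m.symm.TR x

theorem iT (m : MD A Ω R S T J) (x : H) (h : T x = 0) : x = 0 := by
  apply m.iS; apply m.iR; rw [← m.TT_ap, h, map_zero]

theorem inj {B : H →L[ℂ] H} (h : ∀ x, B x = 0 → x = 0) {x y : H} (e : B x = B y) : x = y := by
  rw [← sub_eq_zero]; apply h; rw [map_sub, e, sub_self]

theorem Jinj (m : MD A Ω R S T J) {x y : H} (e : J x = J y) : x = y := by
  rw [← m.JJ x, e, m.JJ]

theorem Jneg (m : MD A Ω R S T J) (x : H) : J (-x) = -J x := by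
  have := m.Jsmul (-1) x
  simpa using this

theorem Jsub (m : MD A Ω R S T J) (x y : H) : J (x - y) = J x - J y := by
  rw [sub_eq_add_neg, m.Jadd, m.Jneg, ← sub_eq_add_neg]

theorem Jnorm (m : MD A Ω R S T J) (x : H) : ‖J x‖ = ‖x‖ := by
  have := m.Jin x x
  rw [inner_self_eq_norm_sq_to_K, inner_self_eq_norm_sq_to_K] at this
  have : ‖J x‖ ^ 2 = ‖x‖ ^ 2 := by exact_mod_cast this
  exact (pow_left_inj₀ (norm_nonneg _) (norm_nonneg _) two_ne_zero).1 this

theorem Jcont (m : MD A Ω R S T J) : Continuous J := by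
  have : Isometry J := Isometry.of_dist_eq fun x y => by
    rw [dist_eq_norm, dist_eq_norm, ← m.Jsub, m.Jnorm]
  exact this.continuous

theorem Jin' (m : MD A Ω R S T J) (x y : H) : ⟪x, J y⟫ = ⟪y, J x⟫ := by
  rw [← m.Jin, m.JJ]

theorem Jin'' (m : MD A Ω R S T J) (x y : H) : ⟪J x, y⟫ = ⟪J y, x⟫ := by
  rw [← m.Jin, m.JJ]

theorem ROm (m : MD A Ω R S T J) : R Ω = Ω := by
  have e1 := m.h1 1 (one_mem A)
  have e2 := m.h2 1 (one_mem A.commutant)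
  rw [e1] at e2
  have e2 : S Ω = R Ω := by simpa using e2
  have e3 : R Ω + S Ω = (2 : ℂ) • Ω := by
    have := DFunLike.congr_fun m.RS Ω
    rw [add_apply] at this
    rw [this, two_smul, ← one_add_one_eq_two]; simp
  rw [e2, ← two_smul ℂ] at e3
  exact smul_right_injective H (two_ne_zero (α := ℂ)) e3

theorem SOm (m : MD A Ω R S T J) : S Ω = Ω := m.symm.ROm

theorem TOm (m : MD A Ω R S T J) : T Ω = Ω := by
  have e : T (T Ω) = Ω := by rw [m.TT_ap, m.SOm, m.ROm]
  have h0 := nonneg_re m.T0 (T Ω - Ω)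
  have e2 : T (T Ω - Ω) = -(T Ω - Ω) := by rw [map_sub, e]; abel
  rw [e2, inner_neg_left, inner_self_eq_norm_sq_to_K] at h0
  have h1 : ‖T Ω - Ω‖ ^ 2 ≤ 0 := by
    have h3 : (((‖T Ω - Ω‖ : ℂ) ^ 2)).re = ‖T Ω - Ω‖ ^ 2 := by
      rw [← Complex.ofReal_pow, Complex.ofReal_re]
    have h4 : 0 ≤ -(((‖T Ω - Ω‖ : ℂ) ^ 2)).re := h0
    rw [h3] at h4
    linarith
  have h2 : ‖T Ω - Ω‖ = 0 := by nlinarith [norm_nonneg (T Ω - Ω)]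
  rw [norm_eq_zero] at h2
  exact sub_eq_zero.1 h2

theorem JOm (m : MD A Ω R S T J) : J Ω = Ω := by
  have e1 := m.h1 1 (one_mem A)
  have e1 : J (T Ω) = S Ω := by simpa using e1
  rwa [m.TOm, m.SOm] at e1

/-- conjugation by `J` as a bounded linear operator -/
def X (m : MD A Ω R S T J) (x : H →L[ℂ] H) : H →L[ℂ] H := LinearMap.mkContinuous
    { toFun := fun y => J (x (J y))
      map_add' := fun y z => by rw [m.Jadd, map_add, m.Jadd]
      map_smul' := fun c y => by rw [m.Jsmul, map_smul, m.Jsmul]; simp } ‖x‖ (fun y => by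
        change ‖J (x (J y))‖ ≤ _
        rw [m.Jnorm, ← m.Jnorm y]; exact x.le_opNorm _)

theorem X_ap (m : MD A Ω R S T J) (x : H →L[ℂ] H) (y : H) : m.X x y = J (x (J y)) := rfl

theorem vec (m : MD A Ω R S T J) {x' h : H →L[ℂ] H} (hh : h ∈ A)
    {c : ℝ} (hrn : ∀ k ∈ A,
      2 * ⟪x' Ω, k Ω⟫ = c * ⟪star h Ω, k Ω⟫ + (c : ℂ)⁻¹ * ⟪star k Ω, h Ω⟫) :
    (c : ℂ) • S (h Ω) + (c : ℂ)⁻¹ • R (h Ω) = (2 : ℂ) • T (J (x' Ω)) := by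
  have e1 : R ((2 : ℂ) • x' Ω - (c : ℂ) • star h Ω) = J (T ((c : ℂ)⁻¹ • h Ω)) := by
    apply m.h3
    intro k hk
    have := hrn k hk
    rw [inner_sub_left, inner_smul_left, inner_smul_left, inner_smul_right]
    simp only [map_ofNat, Complex.conj_ofReal]
    rw [this]; ring
  have e2 : T (star h Ω) = R (J (h Ω)) := by
    apply m.Jinj
    rw [m.h1 h hh, m.JR, m.JJ]
  have e3 := congrArg T e1
  have e4 : T (J (T (h Ω))) = R (S (J (h Ω))) := by
    rw [← m.JT, m.TT_ap, m.JR, m.JS, m.RS_comm]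
  rw [m.TR, map_sub, map_smul, map_smul, e2, map_smul, m.Jsmul, map_smul, e4] at e3
  simp only [map_inv₀, Complex.conj_ofReal] at e3
  rw [← map_smul R ((c : ℂ)⁻¹) (S (J (h Ω)))] at e3
  have e5 := inj m.iR e3
  rw [sub_eq_iff_eq_add] at e5
  have e6 := congrArg J e5
  simp only [m.Jadd, m.Jsmul, m.JT, m.JR, m.JS, m.JJ, map_smul, map_inv₀, Complex.conj_ofReal,
    map_ofNat] at e6
  rw [e6, add_comm]

theorem ex1 (m : MD A Ω R S T J) {x' : H →L[ℂ] H} (hx : x' ∈ A.commutant) :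
    ∃ h ∈ A, h Ω = T (J (x' Ω)) := by
  set n : ℝ := ‖x'‖ + 1
  have hn : 0 < n := by positivity
  have hn0 : (n : ℂ) ≠ 0 := by exact_mod_cast hn.ne'
  obtain ⟨h, hh, -, hrn⟩ := rn m.sep (smul_memA ((n : ℂ)⁻¹) hx) (by
    rw [norm_smul, norm_inv, Complex.norm_real, Real.norm_of_nonneg hn.le, inv_mul_le_iff₀ hn]
    simp [n]) (one_pos)
  have e := m.vec hh hrn
  simp only [Complex.ofReal_one, inv_one, one_smul] at e
  have e2 : S (h Ω) + R (h Ω) = (2 : ℂ) • h Ω := by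
    have := DFunLike.congr_fun m.RS (h Ω)
    rw [add_apply] at this
    rw [add_comm, this, two_smul, ← one_add_one_eq_two]; simp
  rw [e2] at e
  have e3 := smul_right_injective H (two_ne_zero (α := ℂ)) e
  refine ⟨(n : ℂ) • h, smul_memA _ hh, ?_⟩
  rw [smul_apply, e3, smul_apply, m.Jsmul, map_smul, smul_smul]
  simp [hn0]

theorem star_of (m : MD A Ω R S T J) {b : H →L[ℂ] H} (hb : b ∈ A) {η : H}
    (e : b Ω = T (J η)) : star b Ω = R η := by
  apply inj m.iS
  rw [← m.h1 _ (star_mem hb), star_star, e, m.JT, m.JT, m.JJ, m.TT_ap, m.RS_comm]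

theorem op (m : MD A Ω R S T J) {x' h : H →L[ℂ] H} (hx : x' ∈ A.commutant) (hh : h ∈ A)
    {c : ℝ} (hrn : ∀ k ∈ A,
      2 * ⟪x' Ω, k Ω⟫ = c * ⟪star h Ω, k Ω⟫ + (c : ℂ)⁻¹ * ⟪star k Ω, h Ω⟫) :
    (2 : ℝ) • (T * m.X x' * T) = c • (S * h * R) + c⁻¹ • (R * h * S) := by
  ext η
  refine congrFun (ext_cyc m.sep (f := ⇑((2 : ℝ) • (T * m.X x' * T)))
    (g := ⇑(c • (S * h * R) + c⁻¹ • (R * h * S))) (by fun_prop) (by fun_prop) ?_) η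
  intro z hz
  apply inner_ext_cyc m.sep
  intro y hy
  obtain ⟨a, ha, ea⟩ := m.ex1 hy
  obtain ⟨b, hb, eb⟩ := m.ex1 hz
  have sa := m.star_of ha ea
  have sb := m.star_of hb eb
  have e0 : ⟪y Ω, T (J (x' (J (T (z Ω)))))⟫ = ⟪x' Ω, (star b * a) Ω⟫ := by
    rw [← sa_inner m.Tsa, m.Jin', m.JT, m.JT, ← ea, ← eb, mul_apply_eq_comp, adj_inner',
      comm_apply hb hx]
  have t1 : ⟪star h Ω, (star b * a) Ω⟫ = ⟪y Ω, S (h (R (z Ω)))⟫ := by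
    have k1 := m.h1 (h * star b) (mul_mem hh (star_mem hb))
    rw [star_mul, star_star, mul_apply_eq_comp, mul_apply_eq_comp, sb] at k1
    rw [mul_apply_eq_comp, adj_inner', ea, ← m.JT, m.Jin', sa_inner m.Tsa, ← m.JT, k1]
  have t2 : ⟪star (star b * a) Ω, h Ω⟫ = ⟪y Ω, R (h (S (z Ω)))⟫ := by
    have k1 := m.h1 (star h * star a) (mul_mem (star_mem hh) (star_mem ha))
    rw [star_mul, star_star, star_star, mul_apply_eq_comp, mul_apply_eq_comp, sa] at k1
    rw [star_mul, star_star, mul_apply_eq_comp, adj_inner, eb, ← m.JT, m.Jin'', ← sa_inner m.Tsa,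
      ← m.JT, k1, sa_inner m.Ssa, adj_inner, sa_inner m.Rsa]
  have e1 := hrn (star b * a) (mul_mem (star_mem hb) ha)
  rw [← e0, t1, t2] at e1
  rw [← inner_conj_symm, ← inner_conj_symm _ (y Ω)]
  congr 1
  change ⟪y Ω, (2 : ℝ) • T (J (x' (J (T (z Ω)))))⟫
    = ⟪y Ω, c • S (h (R (z Ω))) + c⁻¹ • R (h (S (z Ω)))⟫
  rw [inner_add_right, ← Complex.coe_smul, ← Complex.coe_smul, ← Complex.coe_smul,
    inner_smul_right, inner_smul_right, inner_smul_right]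
  push_cast
  exact e1

end MD
end MT

namespace MT
open Filter Topology MeasureTheory Set

namespace MD
variable {A : VonNeumannAlgebra H} {Ω : H} {R S T : H →L[ℂ] H} {J : H → H}

theorem core1 (m : MD A Ω R S T J) {x' y' : H →L[ℂ] H} (hx : x' ∈ A.commutant) (hx1 : ‖x'‖ ≤ 1)
    (hy : y' ∈ A.commutant) {χ ζ : H} (ex : x' Ω = (R * S) χ) (ey : y' Ω = (R * S) ζ) :
    m.X x' (y' Ω) = y' (m.X x' Ω) := by
  have hH : ∀ v : ℝ, ∃ h ∈ A, ‖h‖ ≤ 1 ∧ (0 < v → ∀ k ∈ A,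
      2 * ⟪x' Ω, k Ω⟫ = ((v⁻¹ : ℝ) : ℂ) * ⟪star h Ω, k Ω⟫
        + (((v⁻¹ : ℝ) : ℂ))⁻¹ * ⟪star k Ω, h Ω⟫) := by
    intro v
    by_cases hv : 0 < v
    · obtain ⟨h, a, b, c⟩ := rn m.sep hx hx1 (inv_pos.2 hv)
      exact ⟨h, a, b, fun _ => c⟩
    · exact ⟨0, zero_mem A, by simp, fun h => absurd h hv⟩
  choose h hA hn hrn using hH
  have hop : ∀ v : ℝ, 0 < v → (2 : ℝ) • (T * m.X x' * T)
      = v⁻¹ • (S * h v * R) + v • (R * h v * S) := by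
    intro v hv
    have := m.op hx (hA v) (hrn v hv)
    rwa [inv_inv] at this
  obtain ⟨i1, i2⟩ := inversion m.Rsa m.sp m.S_cfc m.T_cfc (U := R * S) rfl (fun v _ => hn v) hop
  obtain ⟨j1, j2⟩ := FF_op m.Rsa m.sp
  rw [← m.RS_cfc] at j2
  have JU : ∀ x, J ((R * S) x) = (R * S) (J x) := by
    intro x
    rw [mul_apply_eq_comp, mul_apply_eq_comp, m.JR, m.JS, m.RS_comm]
  have XO : m.X x' Ω = (R * S) (J χ) := by
    rw [m.X_ap, m.JOm, ex, JU]
  have hF : ∀ v : ℝ, 0 < v → cfc (FF v) R (J χ) = v⁻¹ • h v Ω := by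
    intro v hv
    obtain ⟨K, k1, k2⟩ := FF_inv m.Rsa m.sp m.S_cfc m.T_cfc m.RS_cfc hv
    have e := m.vec (hA v) (hrn v hv)
    have e1 : (S + v ^ 2 • R) (v⁻¹ • h v Ω) = ((2 : ℝ) • (T * (R * S))) (J χ) := by
      rw [ex, JU] at e
      change S (v⁻¹ • h v Ω) + v ^ 2 • R (v⁻¹ • h v Ω) = (2 : ℝ) • T ((R * S) (J χ))
      rw [← Complex.coe_smul 2, Complex.ofReal_ofNat, ← e]
      simp only [← Complex.coe_smul, map_smul, smul_smul]
      congr 2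
      have : (v : ℂ) ≠ 0 := by exact_mod_cast hv.ne'
      push_cast
      field_simp
    rw [← k2, mul_apply_eq_comp, ← e1, ← mul_apply_eq_comp, k1]
    rfl
  have I1 := ContinuousLinearMap.integral_comp_comm (ContinuousLinearMap.apply ℂ H ζ) i1
  rw [i2] at I1
  have J1 := ContinuousLinearMap.integral_comp_comm
    (((R * S) * y').comp (ContinuousLinearMap.apply ℂ H (J χ))) j1
  rw [j2] at J1
  have E : ∫ v in Ioi (0 : ℝ), (ContinuousLinearMap.apply ℂ H ζ) (v⁻¹ • ((R * S) * h v * (R * S)))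
      = ∫ v in Ioi (0 : ℝ), (((R * S) * y').comp (ContinuousLinearMap.apply ℂ H (J χ)))
        (cfc (FF v) R) := by
    refine setIntegral_congr_fun measurableSet_Ioi ?_
    intro v hv
    change v⁻¹ • (R * S) (h v ((R * S) ζ)) = (R * S) (y' (cfc (FF v) R (J χ)))
    rw [hF v hv, ← ey, comm_apply (hA v) hy, ← Complex.coe_smul, ← Complex.coe_smul, map_smul,
      map_smul]
  rw [I1, J1] at E
  change Real.pi • (R * S) (m.X x' ((R * S) ζ)) = (R * S) (y' (Real.pi • ((R * S) (J χ)))) at E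
  rw [← ey, ← XO, ← Complex.coe_smul, ← Complex.coe_smul, map_smul, map_smul] at E
  have E2 := smul_right_injective H (by exact_mod_cast Real.pi_ne_zero : (Real.pi : ℂ) ≠ 0) E
  rw [mul_apply_eq_comp, mul_apply_eq_comp] at E2
  exact inj m.iS (inj m.iR E2)

end MD
end MT

namespace MT
open Filter Topology MeasureTheory Set

namespace MD
variable {A : VonNeumannAlgebra H} {Ω : H} {R S T : H →L[ℂ] H} {J : H → H}

theorem pstep (m : MD A Ω R S T J) {x' : H →L[ℂ] H} (hx : x' ∈ A.commutant) :
    ∃ y ∈ A.commutant, y Ω = (R * S) (x' Ω) ∧ star y Ω = (R * S) (star x' Ω) := by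
  obtain ⟨h, hh, eh⟩ := m.ex1 hx
  have hh2 : h ∈ A.commutant.commutant := by rwa [VonNeumannAlgebra.commutant_commutant]
  obtain ⟨y, hy, ey⟩ := m.symm.ex1 hh2
  refine ⟨y, hy, ?_, ?_⟩
  · rw [ey, eh, m.JT, m.JJ, m.TT_ap]; rfl
  · rw [m.symm.star_of hy ey, eh, ← m.JT, ← m.JR, ← m.TR, ← m.h2 _ hx, m.JT, m.JJ, m.TT_ap]; rfl

theorem ubound (n : ℕ) {t : ℝ} (h0 : 0 ≤ t) (h1 : t ≤ 1) : (1 - t) ^ n * t ≤ 1 / ((n : ℝ) + 1) := by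
  have hn : (0 : ℝ) < (n : ℝ) + 1 := by positivity
  rw [le_div_iff₀ hn]
  have a1 : 1 + (n : ℝ) * t ≤ (1 + t) ^ n := one_add_mul_le_pow (by linarith) n
  have a2 : (1 - t) ^ n * (1 + t) ^ n ≤ 1 := by
    rw [← mul_pow]; exact pow_le_one₀ (by nlinarith) (by nlinarith)
  have a3 : 0 ≤ (1 - t) ^ n := pow_nonneg (by linarith) n
  calc (1 - t) ^ n * t * ((n : ℝ) + 1) = (1 - t) ^ n * (n * t + t) := by ring
    _ ≤ (1 - t) ^ n * (1 + t) ^ n := by gcongr; linarith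
    _ ≤ 1 := a2

theorem tbd (m : MD A Ω R S T J) {x : ℝ} (hx : x ∈ spectrum ℝ R) :
    0 ≤ x * (2 - x) ∧ x * (2 - x) ≤ 1 := by
  obtain ⟨a, b⟩ := m.sp x hx
  constructor <;> nlinarith [sq_nonneg (x - 1)]

theorem V_cfc (m : MD A Ω R S T J) (n : ℕ) :
    (1 - R * S) ^ n = cfc (fun x : ℝ => (1 - x * (2 - x)) ^ n) R := by
  have hR := m.Rsa
  have h1 : 1 - R * S = cfc (fun x : ℝ => 1 - x * (2 - x)) R := by
    rw [cfc_sub (fun _ : ℝ => (1 : ℝ)) (fun x => x * (2 - x)) R, cfc_const_one ℝ R, m.RS_cfc]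
  rw [h1, cfc_pow (fun x : ℝ => 1 - x * (2 - x)) n R]

theorem V_tend (m : MD A Ω R S T J) (x : H) :
    Tendsto (fun n : ℕ => ((1 - R * S) ^ n) x) atTop (𝓝 0) := by
  have hR := m.Rsa
  have n1 : ∀ n : ℕ, ‖(1 - R * S) ^ n‖ ≤ 1 := by
    intro n
    rw [m.V_cfc]
    refine norm_cfc_le zero_le_one fun t ht => ?_
    obtain ⟨a, b⟩ := m.tbd ht
    rw [Real.norm_of_nonneg (pow_nonneg (by linarith) n)]
    exact pow_le_one₀ (by linarith) (by linarith)
  have n2 : ∀ n : ℕ, ‖(1 - R * S) ^ n * (R * S)‖ ≤ 1 / ((n : ℝ) + 1) := by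
    intro n
    rw [m.V_cfc, m.RS_cfc, cfc_mul3 (k := fun x : ℝ => (1 - x * (2 - x)) ^ n * (x * (2 - x)))
      (by fun_prop) (by fun_prop) fun _ _ => rfl]
    refine norm_cfc_le (by positivity) fun t ht => ?_
    obtain ⟨a, b⟩ := m.tbd ht
    rw [Real.norm_of_nonneg (mul_nonneg (pow_nonneg (by linarith) n) a)]
    exact ubound n a b
  have hd : DenseRange (R * S : H →L[ℂ] H) := by
    refine dense_of_inj ?_ ?_
    · rw [m.RS_cfc]; exact cfc_predicate _ _
    · intro y hy
      exact m.iS _ (m.iR _ hy)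
  rw [Metric.tendsto_atTop]
  intro ε hε
  obtain ⟨z, hz⟩ := hd.exists_dist_lt x (half_pos hε)
  rw [dist_eq_norm] at hz
  have t0 : Tendsto (fun n : ℕ => 1 / ((n : ℝ) + 1) * ‖z‖) atTop (𝓝 0) := by
    simpa using (tendsto_one_div_add_atTop_nhds_zero_nat (𝕜 := ℝ)).mul_const ‖z‖
  obtain ⟨N, hN⟩ := (t0.eventually (gt_mem_nhds (half_pos hε))).exists_forall_of_atTop
  refine ⟨N, fun n hn => ?_⟩
  rw [dist_zero_right]
  have e : ((1 - R * S) ^ n) x = ((1 - R * S) ^ n) (x - (R * S) z)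
      + ((1 - R * S) ^ n * (R * S)) z := by
    rw [map_sub, mul_apply_eq_comp ((1 - R * S) ^ n)]; abel
  rw [e]
  calc _ ≤ ‖((1 - R * S) ^ n) (x - (R * S) z)‖ + ‖((1 - R * S) ^ n * (R * S)) z‖ := norm_add_le _ _
    _ ≤ 1 * ‖x - (R * S) z‖ + 1 / ((n : ℝ) + 1) * ‖z‖ := by
        gcongr
        · exact ContinuousLinearMap.le_of_opNorm_le _ (n1 n) _
        · exact ContinuousLinearMap.le_of_opNorm_le _ (n2 n) _
    _ < ε := by have := hN n hn; linarith

theorem approx (m : MD A Ω R S T J) {y' : H →L[ℂ] H} (hy : y' ∈ A.commutant) :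
    ∃ y : ℕ → (H →L[ℂ] H), (∀ n, y n ∈ A.commutant) ∧ (∀ n, ∃ ζ, y n Ω = (R * S) ζ) ∧
      Tendsto (fun n => y n Ω) atTop (𝓝 (y' Ω)) ∧
      Tendsto (fun n => star (y n) Ω) atTop (𝓝 (star y' Ω)) := by
  have key : ∀ n : ℕ, ∃ u ∈ A.commutant, (R * S) (u Ω) = y' Ω - ((1 - R * S) ^ n) (y' Ω) ∧
      (R * S) (star u Ω) = star y' Ω - ((1 - R * S) ^ n) (star y' Ω) := by
    intro n
    induction n with
    | zero => exact ⟨0, zero_mem _, by simp, by simp⟩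
    | succ n ih =>
      obtain ⟨u, hu, e1, e2⟩ := ih
      obtain ⟨p, hp, p1, p2⟩ := m.pstep hu
      refine ⟨y' + u - p, sub_mem (add_mem hy hu) hp, ?_, ?_⟩
      · rw [sub_apply, add_apply, p1, map_sub, map_add, e1, pow_succ', mul_apply_eq_comp (1 - R * S),
          map_sub, sub_apply (1 : H →L[ℂ] H)]
        change _ = y' Ω - (((1 - R * S) ^ n) (y' Ω) - _)
        abel
      · rw [star_sub, star_add, sub_apply, add_apply, p2, map_sub, map_add, e2, pow_succ',
          mul_apply_eq_comp (1 - R * S), map_sub, sub_apply (1 : H →L[ℂ] H)]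
        change _ = star y' Ω - (((1 - R * S) ^ n) (star y' Ω) - _)
        abel
  choose u hu e1 e2 using key
  choose p hp p1 p2 using fun n => m.pstep (hu n)
  refine ⟨p, hp, fun n => ⟨_, p1 n⟩, ?_, ?_⟩
  · simp only [p1, e1]
    simpa using (m.V_tend (y' Ω)).const_sub (y' Ω)
  · simp only [p2, e2]
    simpa using (m.V_tend (star y' Ω)).const_sub (star y' Ω)

theorem core2 (m : MD A Ω R S T J) {x' y' : H →L[ℂ] H} (hx : x' ∈ A.commutant)
    (hy : y' ∈ A.commutant) {χ ζ : H} (ex : x' Ω = (R * S) χ) (ey : y' Ω = (R * S) ζ) :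
    m.X x' (y' Ω) = y' (m.X x' Ω) := by
  set n : ℝ := ‖x'‖ + 1
  have hn : 0 < n := by positivity
  have hn0 : (n : ℂ) ≠ 0 := by exact_mod_cast hn.ne'
  have e := m.core1 (smul_memA ((n : ℂ)⁻¹) hx) (by
    rw [norm_smul, norm_inv, Complex.norm_real, Real.norm_of_nonneg hn.le, inv_mul_le_iff₀ hn]
    simp [n]) hy (χ := (n : ℂ)⁻¹ • χ) (by rw [smul_apply, ex, map_smul]) ey
  simp only [X_ap, smul_apply, m.Jsmul, map_smul] at e
  refine smul_right_injective H (?_ : (starRingEnd ℂ) (n : ℂ)⁻¹ ≠ 0) e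
  simpa using hn0

theorem core3 (m : MD A Ω R S T J) {x' y' : H →L[ℂ] H} (hx : x' ∈ A.commutant)
    (hy : y' ∈ A.commutant) {χ : H} (ex : x' Ω = (R * S) χ) :
    m.X x' (y' Ω) = y' (m.X x' Ω) := by
  obtain ⟨y, hyn, hz, t1, t2⟩ := m.approx hy
  apply inner_ext_cyc m.cyc
  intro a ha
  have l1 : Tendsto (fun n => ⟪m.X x' (y n Ω), a Ω⟫) atTop (𝓝 ⟪m.X x' (y' Ω), a Ω⟫) :=
    (((m.X x').continuous.tendsto _).comp t1).inner tendsto_const_nhds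
  have l2 : Tendsto (fun n => ⟪m.X x' Ω, a (star (y n) Ω)⟫) atTop
      (𝓝 ⟪m.X x' Ω, a (star y' Ω)⟫) :=
    tendsto_const_nhds.inner ((a.continuous.tendsto _).comp t2)
  have s : ∀ z ∈ A.commutant, ⟪m.X x' Ω, a (star z Ω)⟫ = ⟪z (m.X x' Ω), a Ω⟫ := by
    intro z hz
    rw [comm_apply ha (star_mem hz), adj_inner']
  rw [← s y' hy]
  refine tendsto_nhds_unique l1 (l2.congr fun n => ?_)
  obtain ⟨ζ, hζ⟩ := hz n
  rw [s _ (hyn n), m.core2 hx (hyn n) ex hζ]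

theorem core4 (m : MD A Ω R S T J) {x' : H →L[ℂ] H} (hx : x' ∈ A.commutant) {χ : H}
    (ex : x' Ω = (R * S) χ) {b : H →L[ℂ] H} (hb : b ∈ A.commutant) (w : H) :
    x' (m.X b w) = m.X b (x' w) := by
  have h1 : ∀ w, m.X x' (b w) = b (m.X x' w) := by
    refine congrFun (ext_cyc m.sep (f := fun w => m.X x' (b w)) (g := fun w => b (m.X x' w))
      (by fun_prop) (by fun_prop) ?_)
    intro z hz
    change m.X x' (b (z Ω)) = b (m.X x' (z Ω))
    rw [m.core3 hx hz ex]
    exact m.core3 hx (mul_mem hb hz) ex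
  have := congrArg J (h1 (J w))
  simpa only [X_ap, m.JJ] using this

theorem core5 (m : MD A Ω R S T J) {x' : H →L[ℂ] H} (hx : x' ∈ A.commutant)
    {b : H →L[ℂ] H} (hb : b ∈ A.commutant) (w : H) :
    x' (m.X b w) = m.X b (x' w) := by
  obtain ⟨x, hxn, hz, t1, t2⟩ := m.approx hx
  refine congrFun (ext_cyc m.cyc (f := fun w => x' (m.X b w)) (g := fun w => m.X b (x' w))
      (by fun_prop) (by fun_prop) ?_) w
  intro a ha
  apply inner_ext_cyc m.cyc
  intro k hk
  have s1 : ∀ z ∈ A.commutant, ⟪z (m.X b (a Ω)), k Ω⟫ = ⟪m.X b (a Ω), k (star z Ω)⟫ := by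
    intro z hz
    rw [comm_apply hk (star_mem hz), adj_inner']
  have s2 : ∀ z ∈ A.commutant, ⟪m.X b (z (a Ω)), k Ω⟫ = ⟪m.X b (a (z Ω)), k Ω⟫ := by
    intro z hz
    rw [comm_apply ha hz]
  change ⟪x' (m.X b (a Ω)), k Ω⟫ = ⟪m.X b (x' (a Ω)), k Ω⟫
  rw [s1 _ hx, s2 _ hx]
  have l1 : Tendsto (fun n => ⟪m.X b (a (x n Ω)), k Ω⟫) atTop (𝓝 ⟪m.X b (a (x' Ω)), k Ω⟫) :=
    (((m.X b * a).continuous.tendsto _).comp t1).inner tendsto_const_nhds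
  have l2 : Tendsto (fun n => ⟪m.X b (a Ω), k (star (x n) Ω)⟫) atTop
      (𝓝 ⟪m.X b (a Ω), k (star x' Ω)⟫) :=
    tendsto_const_nhds.inner ((k.continuous.tendsto _).comp t2)
  refine tendsto_nhds_unique l2 (l1.congr fun n => ?_)
  obtain ⟨ζ, hζ⟩ := hz n
  rw [← s1 _ (hxn n), ← s2 _ (hxn n), m.core4 (hxn n) hζ hb]

theorem main (m : MD A Ω R S T J) {b : H →L[ℂ] H} (hb : b ∈ A.commutant) : m.X b ∈ A :=
  mem_of_comm fun _ hy w => (m.core5 hy hb w).symm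

end MD
end MT

/-- **Existence of a modular conjugation.**
If `Ω` is cyclic and separating for the von Neumann algebra `A`, then there exists an
antiunitary involution `J` on `H` (an additive, conjugate-linear, bijective map with
`⟪J x, J y⟫ = ⟪y, x⟫` and `J ∘ J = id`) conjugating `A` onto its commutant and the
commutant onto `A`. -/
theorem exists_modular_conjugation
    (A : VonNeumannAlgebra H) (Ω : H)
    (hcyc : IsCyclicVector (A : Set (H →L[ℂ] H)) Ω)
    (hsep : IsCyclicVector (A.commutant : Set (H →L[ℂ] H)) Ω) :
    ∃ J : H → H,
      Function.Bijective J ∧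
      (∀ x y : H, J (x + y) = J x + J y) ∧
      (∀ (c : ℂ) (x : H), J (c • x) = (starRingEnd ℂ c) • J x) ∧
      (∀ x y : H, ⟪J x, J y⟫ = ⟪y, x⟫) ∧
      (∀ x : H, J (J x) = x) ∧
      (∀ a ∈ A, ∃ a' ∈ A.commutant, ∀ x : H, J (a (J x)) = a' x) ∧
      (∀ a' ∈ A.commutant, ∃ a ∈ A, ∀ x : H, J (a' (J x)) = a x) := by
  obtain ⟨R, S, T, J, m⟩ := MT.exists_MD hcyc hsep
  refine ⟨J, Function.bijective_iff_has_inverse.2 ⟨J, m.JJ, m.JJ⟩, m.Jadd, m.Jsmul, m.Jin, m.JJ,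
    ?_, ?_⟩
  · intro a ha
    refine ⟨m.symm.X a, m.symm.main ?_, fun x => rfl⟩
    rwa [VonNeumannAlgebra.commutant_commutant]
  · intro a ha
    exact ⟨m.X a, m.main ha, fun x => rfl⟩
end
end

section
/- Let H be a complex Hilbert space, 𝒜 a von Neumann algebra on H, and Ω ∈ H a vector that is cyclic and separating for 𝒜. Then the set of vectors x ∈ H such that x = a Ω for some a ∈ 𝒜 and simultaneously x = a' Ω for some a' in the commutant 𝒜' is dense in H; that is, 𝒜Ω ∩ 𝒜'Ω is dense in H. -/
noncomputable section

variable {H : Type*} [NormedAddCommGroup H] [InnerProductSpace ℂ H] [CompleteSpace H]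

set_option linter.unusedSectionVars false
set_option linter.deprecated false
section helpers
attribute [local instance] InnerProductSpace.complexToReal

/-- real subspace `{h Ω : h = h* ∈ A}` -/
def saV (A : VonNeumannAlgebra H) (Ω : H) : Submodule ℝ H where
  carrier := {x | ∃ h ∈ A, IsSelfAdjoint h ∧ h Ω = x}
  zero_mem' := ⟨0, zero_mem A, IsSelfAdjoint.zero _, by simp⟩
  add_mem' := by
    rintro _ _ ⟨h, hA, hs, rfl⟩ ⟨k, kA, ks, rfl⟩
    exact ⟨h + k, add_mem hA kA, hs.add ks, by simp⟩
  smul_mem' := by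
    rintro c _ ⟨h, hA, hs, rfl⟩
    refine ⟨(c : ℂ) • h, A.toStarSubalgebra.smul_mem hA _, ?_, ?_⟩
    · rw [isSelfAdjoint_iff, star_smul, hs.star_eq]; simp
    · simp

abbrev clK (A : VonNeumannAlgebra H) (Ω : H) : Submodule ℝ H := (saV A Ω).topologicalClosure

instance (A : VonNeumannAlgebra H) (Ω : H) : CompleteSpace (clK A Ω) :=
  (Submodule.isClosed_topologicalClosure _).completeSpace_coe

theorem saV_le (A : VonNeumannAlgebra H) (Ω : H) : saV A Ω ≤ clK A Ω :=
  Submodule.le_topologicalClosure _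

theorem rinner (x y : H) : inner ℝ x y = (inner ℂ x y).re := rfl

theorem sa_inner {h : H →L[ℂ] H} (hs : IsSelfAdjoint h) (x y : H) :
    inner ℂ (h x) y = inner ℂ x (h y) := by
  have := ContinuousLinearMap.adjoint_inner_left h y x
  rwa [ContinuousLinearMap.isSelfAdjoint_iff'.mp hs] at this

theorem cyc_decomp (A : VonNeumannAlgebra H) (Ω : H) {a : H →L[ℂ] H} (ha : a ∈ A) :
    ∃ x ∈ saV A Ω, ∃ y ∈ saV A Ω, a Ω = x + Complex.I • y := by
  have hst : star a ∈ A := star_mem ha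
  refine ⟨_, ⟨(1/2 : ℂ) • (a + star a), A.toStarSubalgebra.smul_mem (add_mem ha hst) _, ?_, rfl⟩,
    _, ⟨(-Complex.I/2 : ℂ) • (a - star a), A.toStarSubalgebra.smul_mem (sub_mem ha hst) _, ?_, rfl⟩, ?_⟩
  · rw [isSelfAdjoint_iff, star_smul, star_add, star_star, add_comm]; simp
  · rw [isSelfAdjoint_iff, star_smul, star_sub, star_star, ← neg_sub a, smul_neg, ← neg_smul]
    congr 1; simp; ring
  · simp only [ContinuousLinearMap.smul_apply, ContinuousLinearMap.add_apply,
      ContinuousLinearMap.sub_apply, smul_smul]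
    have : Complex.I * (-Complex.I/2) = 1/2 := by
      rw [mul_div_assoc', mul_neg, Complex.I_mul_I]; norm_num
    rw [this]; module

theorem zero_of_orth (A : VonNeumannAlgebra H) (Ω : H)
    (hcyc : IsCyclicVector (A : Set (H →L[ℂ] H)) Ω) (η : H)
    (h1 : ∀ x ∈ saV A Ω, inner ℝ η x = 0)
    (h2 : ∀ x ∈ saV A Ω, inner ℝ η (Complex.I • x) = 0) : η = 0 := by
  have hcl : IsClosed {x : H | inner ℝ η x = 0} := isClosed_eq (by fun_prop) continuous_const
  have : ∀ x : H, inner ℝ η x = 0 := by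
    intro x
    refine hcl.closure_subset_iff.mpr ?_ (hcyc x)
    rintro _ ⟨a, ha, rfl⟩
    obtain ⟨x, hx, y, hy, h⟩ := cyc_decomp A Ω ha
    simp [h, inner_add_right, h1 x hx, h2 y hy]
  exact inner_self_eq_zero.mp (this η)

theorem comm_apply {A : VonNeumannAlgebra H} {a b : H →L[ℂ] H} (ha : a ∈ A) (hb : b ∈ A.commutant)
    (x : H) : a (b x) = b (a x) :=
  congrArg (fun f : H →L[ℂ] H => f x) (VonNeumannAlgebra.mem_commutant_iff.mp hb a ha)

theorem orth_sa (A : VonNeumannAlgebra H) (Ω : H) : ∀ x ∈ saV A Ω, ∀ y ∈ saV A.commutant Ω,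
    inner ℝ (Complex.I • x) y = 0 := by
  rintro _ ⟨a, ha, hs, rfl⟩ _ ⟨b, hb, bs, rfl⟩
  have : (starRingEnd ℂ) (inner ℂ (a Ω) (b Ω)) = inner ℂ (a Ω) (b Ω) := by
    rw [inner_conj_symm, sa_inner bs, ← comm_apply ha hb, sa_inner hs]
  have h2 : (inner ℂ (a Ω) (b Ω)).im = 0 := Complex.conj_eq_iff_im.mp this
  rw [rinner, inner_smul_left]
  simp [h2]

theorem I_orth (x y : H) : inner ℝ (Complex.I • x) y = - inner ℝ x (Complex.I • y) := by
  rw [rinner, rinner, inner_smul_left, inner_smul_right]; simp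

/-- orthogonality to the dense part extends to the closure -/
theorem orth_ext (V : Submodule ℝ H) (z : H) (h : ∀ x ∈ V, inner ℝ z x = 0) :
    ∀ x ∈ V.topologicalClosure, inner ℝ z x = 0 := by
  intro x hx
  have hcl : IsClosed {x : H | inner ℝ z x = 0} := isClosed_eq (by fun_prop) continuous_const
  exact hcl.closure_subset_iff.mpr h hx

theorem orth_cl (A : VonNeumannAlgebra H) (Ω : H) : ∀ x ∈ clK A Ω, ∀ y ∈ clK A.commutant Ω,
    inner ℝ (Complex.I • x) y = 0 := by
  intro x hx
  refine orth_ext _ _ ?_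
  intro y hy
  rw [I_orth, real_inner_comm, neg_eq_zero]
  refine orth_ext _ _ ?_ x hx
  intro x hx
  rw [I_orth, neg_eq_zero, real_inner_comm]
  exact orth_sa A Ω x hx y hy

theorem coercive {μ : ℂ} (z : H) : inner ℝ (μ • z) z = μ.re * ‖z‖ ^ 2 := by
  rw [rinner, inner_smul_left, inner_self_eq_norm_sq_to_K]
  have : ((‖z‖ : ℂ) ^ 2) = ((‖z‖ ^ 2 : ℝ) : ℂ) := by push_cast; rfl
  simp only [Complex.coe_algebraMap, this, Complex.mul_re, Complex.ofReal_re, Complex.ofReal_im]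
  simp

/-- density transfer -/
theorem dens (A : VonNeumannAlgebra H) (Ω : H)
    (hcyc : IsCyclicVector (A : Set (H →L[ℂ] H)) Ω) {μ : ℂ} (hμ : 0 < μ.re)
    (V W : Set H) (hV : (clK A Ω : Set H) ⊆ closure V)
    (hW : ∀ ξ ∈ V, ∃ β ∈ W, β ∈ clK A.commutant Ω ∧
      ∀ ζ ∈ clK A.commutant Ω, inner ℝ (ξ - μ • β) ζ = 0) :
    (clK A.commutant Ω : Set H) ⊆ closure W := by
  set K := clK A Ω with hK
  set K' := clK A.commutant Ω with hK'
  set L := (K.map (K'.starProjection : H →ₗ[ℝ] H)).topologicalClosure with hL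
  have hLc : CompleteSpace L := (Submodule.isClosed_topologicalClosure _).completeSpace_coe
  have hLK : L ≤ K' := by
    refine Submodule.topologicalClosure_minimal _ ?_ (Submodule.isClosed_topologicalClosure _)
    rintro _ ⟨x, _, rfl⟩
    exact Submodule.starProjection_apply_mem _ _
  have hKL : K' ≤ L := by
    intro ζ hζ
    have h1 : ζ - L.starProjection ζ ∈ K' :=
      sub_mem hζ (hLK (Submodule.starProjection_apply_mem _ _))
    have h2 := Submodule.sub_starProjection_mem_orthogonal (K := L) ζ
    have h3 : ζ - L.starProjection ζ = 0 := by
      refine zero_of_orth A Ω hcyc _ ?_ ?_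
      · intro x hx
        have := (Submodule.mem_orthogonal' _ _).mp h2 (K'.starProjection x)
          (Submodule.le_topologicalClosure _ ⟨x, saV_le _ _ hx, rfl⟩)
        rwa [← Submodule.inner_starProjection_left_eq_right,
          Submodule.starProjection_eq_self_iff.mpr h1] at this
      · intro x hx
        rw [real_inner_comm]
        exact orth_cl A Ω x (saV_le _ _ hx) _ h1
    rw [sub_eq_zero.mp h3]
    exact Submodule.starProjection_apply_mem _ _
  intro ζ hζ
  have hcl : closure (K'.starProjection '' V) ⊇ (L : Set H) := by
    rw [hL, Submodule.topologicalClosure_coe]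
    refine closure_minimal ?_ isClosed_closure
    rintro _ ⟨x, hx, rfl⟩
    exact image_closure_subset_closure_image (K'.starProjection.continuous) ⟨x, hV hx, rfl⟩
  rw [Metric.mem_closure_iff]
  intro ε hε
  obtain ⟨_, ⟨ξ, hξ, rfl⟩, hd⟩ := Metric.mem_closure_iff.mp
    (hcl (hKL (Submodule.starProjection_apply_mem K' (μ • ζ)))) (μ.re * ε) (by positivity)
  obtain ⟨β, hβW, hβK, hβ⟩ := hW ξ hξ
  refine ⟨β, hβW, ?_⟩
  rw [dist_eq_norm] at hd ⊢
  have hz : ζ - β ∈ K' := sub_mem hζ hβK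
  have h1 : inner ℝ (μ • (ζ - β)) (ζ - β)
      = inner ℝ (K'.starProjection (μ • ζ) - K'.starProjection ξ) (ζ - β) := by
    have := hβ _ hz
    rw [← map_sub, Submodule.inner_starProjection_left_eq_right,
      Submodule.starProjection_eq_self_iff.mpr hz]
    have e : μ • (ζ - β) = (μ • ζ - ξ) + (ξ - μ • β) := by rw [smul_sub]; abel
    rw [e, inner_add_left, this, add_zero]
  rw [coercive] at h1
  have h2 := real_inner_le_norm (K'.starProjection (μ • ζ) - K'.starProjection ξ) (ζ - β)
  by_contra! hcon
  have h3 : 0 < ‖ζ - β‖ := hε.trans_le hcon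
  have : μ.re * ‖ζ - β‖ < μ.re * ε := by
    have : μ.re * ‖ζ - β‖ ≤ ‖K'.starProjection (μ • ζ) - K'.starProjection ξ‖ := by
      refine le_of_mul_le_mul_right ?_ h3
      nlinarith
    linarith
  exact absurd (lt_of_mul_lt_mul_left this hμ.le) (not_lt.mpr hcon)

theorem mem_of_comm {A : VonNeumannAlgebra H} {a : H →L[ℂ] H}
    (h : ∀ b ∈ A.commutant, ∀ x, b (a x) = a (b x)) : a ∈ A := by
  rw [← VonNeumannAlgebra.commutant_commutant A, VonNeumannAlgebra.mem_commutant_iff]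
  intro b hb
  ext x
  exact h b hb x

/-- diagonal operator -/
def dg (y : H →L[ℂ] H) : WithLp 2 (H × H) →ₗ[ℂ] WithLp 2 (H × H) where
  toFun v := WithLp.toLp 2 (y v.fst, y v.snd)
  map_add' u v := by simp [← WithLp.toLp_add]
  map_smul' c v := by simp [← WithLp.toLp_smul]

theorem dg_apply (y : H →L[ℂ] H) (v : WithLp 2 (H × H)) :
    dg y v = WithLp.toLp 2 (y v.fst, y v.snd) := rfl

theorem dg_adj (y : H →L[ℂ] H) (u v : WithLp 2 (H × H)) :
    inner ℂ u (dg y v) = inner ℂ (dg (star y) u) v := by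
  simp [WithLp.prod_inner_apply, dg_apply, ContinuousLinearMap.star_eq_adjoint,
    ContinuousLinearMap.adjoint_inner_left]

theorem dg_cont (y : H →L[ℂ] H) : Continuous (dg y) := by
  have : (dg y : WithLp 2 (H × H) → WithLp 2 (H × H)) = fun v => WithLp.toLp 2 (y v.fst, y v.snd) := rfl
  rw [this]; fun_prop

/-- the graph -/
def gr (A : VonNeumannAlgebra H) (Ω θ : H) : Submodule ℂ (WithLp 2 (H × H)) where
  carrier := {v | ∃ y ∈ A.commutant, v = WithLp.toLp 2 (y Ω, y θ)}
  zero_mem' := ⟨0, zero_mem _, by simp; rfl⟩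
  add_mem' := by
    rintro _ _ ⟨h, hA, rfl⟩ ⟨k, kA, rfl⟩
    exact ⟨h + k, add_mem hA kA, by simp [← WithLp.toLp_add]⟩
  smul_mem' := by
    rintro c _ ⟨h, hA, rfl⟩
    exact ⟨c • h, A.commutant.toStarSubalgebra.smul_mem hA _, by simp [← WithLp.toLp_smul]⟩

theorem core (A : VonNeumannAlgebra H) (Ω θ : H)
    (hsep : IsCyclicVector (A.commutant : Set (H →L[ℂ] H)) Ω)
    (h1 : ∀ x ∈ saV A Ω, inner ℝ θ x = 0)
    (h2 : ∀ x ∈ saV A.commutant Ω, inner ℝ θ (Complex.I • x) = 0) : θ = 0 := by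
  -- symmetry
  have hsym : ∀ y ∈ A.commutant, inner ℂ θ (y Ω) = inner ℂ Ω (y θ) := by
    intro y hy
    have key : ∀ x ∈ saV A.commutant Ω, inner ℂ θ x = inner ℂ x θ := by
      intro x hx
      have := h2 x hx
      rw [rinner, inner_smul_right] at this
      have h3 : (inner ℂ θ x).im = 0 := by simpa using this
      rw [← inner_conj_symm x θ]
      exact (Complex.conj_eq_iff_im.mpr h3).symm
    have hR := key _ ⟨(1/2 : ℂ) • (y + star y), A.commutant.toStarSubalgebra.smul_mem
      (add_mem hy (star_mem hy)) _, by
        rw [isSelfAdjoint_iff, star_smul, star_add, star_star, add_comm]; simp, rfl⟩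
    have hI := key _ ⟨(-Complex.I/2 : ℂ) • (y - star y), A.commutant.toStarSubalgebra.smul_mem
      (sub_mem hy (star_mem hy)) _, by
        rw [isSelfAdjoint_iff, star_smul, star_sub, star_star, ← neg_sub y, smul_neg, ← neg_smul]
        congr 1; simp; ring, rfl⟩
    have e1 : inner ℂ Ω (y θ) = inner ℂ (star y Ω) θ := by
      rw [ContinuousLinearMap.star_eq_adjoint, ContinuousLinearMap.adjoint_inner_left]
    rw [e1]
    simp only [ContinuousLinearMap.smul_apply, ContinuousLinearMap.add_apply, 
      ContinuousLinearMap.sub_apply, inner_smul_left, inner_smul_right, inner_add_left,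
      inner_add_right, inner_sub_left, inner_sub_right] at hR hI
    have c2 : (starRingEnd ℂ) 2 = 2 := map_ofNat _ 2
    simp [c2] at hR hI
    have hI' : inner ℂ θ (y Ω) - inner ℂ θ (star y Ω) = -(inner ℂ (y Ω) θ - inner ℂ (star y Ω) θ) := by
      have hne : (-Complex.I/2 : ℂ) ≠ 0 := by simp
      apply mul_left_cancel₀ hne
      linear_combination hI
    linear_combination hR / 2 + hI' / 2
  set G := (gr A Ω θ).topologicalClosure with hG
  have hGc : CompleteSpace G := (Submodule.isClosed_topologicalClosure _).completeSpace_coe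
  have hGinv : ∀ y ∈ A.commutant, ∀ v ∈ G, dg y v ∈ G := by
    intro y hy v hv
    have : Set.MapsTo (dg y) (gr A Ω θ : Set (WithLp 2 (H × H))) (gr A Ω θ) := by
      rintro _ ⟨z, hz, rfl⟩
      exact ⟨y * z, mul_mem hy hz, rfl⟩
    exact this.closure (dg_cont y) hv
  set P := G.starProjection with hP
  have hPc : ∀ y ∈ A.commutant, ∀ v, P (dg y v) = dg y (P v) := by
    intro y hy v
    refine Submodule.eq_starProjection_of_mem_orthogonal
      (hGinv y hy _ (Submodule.starProjection_apply_mem _ _)) ?_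
    rw [← map_sub, Submodule.mem_orthogonal]
    intro u hu
    rw [dg_adj]
    exact (Submodule.mem_orthogonal _ _).mp (Submodule.sub_starProjection_mem_orthogonal v) _
      (hGinv _ (star_mem hy) _ hu)
  -- orthogonality of the rotated graph
  have hrot : ∀ y ∈ A.commutant, WithLp.toLp 2 (-(y θ), y Ω) ∈ Gᗮ := by
    intro y hy
    rw [hG, Submodule.orthogonal_closure, Submodule.mem_orthogonal]
    rintro _ ⟨z, hz, rfl⟩
    have := hsym (star z * y) (mul_mem (star_mem hz) hy)
    simp only [ContinuousLinearMap.mul_apply, ContinuousLinearMap.star_eq_adjoint,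
      ContinuousLinearMap.adjoint_inner_right] at this
    simp [WithLp.prod_inner_apply, this]
  let in1 : H →L[ℂ] WithLp 2 (H × H) :=
    ⟨⟨⟨fun v => WithLp.toLp 2 (v, 0), fun u v => by simp [← WithLp.toLp_add]⟩,
      fun c v => by simp [← WithLp.toLp_smul]⟩, by
        change Continuous (fun v : H => WithLp.toLp 2 (v, (0 : H))); fun_prop⟩
  let in2 : H →L[ℂ] WithLp 2 (H × H) :=
    ⟨⟨⟨fun v => WithLp.toLp 2 (0, v), fun u v => by simp [← WithLp.toLp_add]⟩,
      fun c v => by simp [← WithLp.toLp_smul]⟩, by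
        change Continuous (fun v : H => WithLp.toLp 2 ((0 : H), v)); fun_prop⟩
  have in1_def : ∀ v, in1 v = WithLp.toLp 2 (v, 0) := fun _ => rfl
  have in2_def : ∀ v, in2 v = WithLp.toLp 2 (0, v) := fun _ => rfl
  let b : H →L[ℂ] H := (WithLp.fstL 2 ℂ H H) ∘L P ∘L in2
  have hbdef : ∀ v, b v = (P (in2 v)).fst := fun _ => rfl
  have hbA : b ∈ A := by
    refine mem_of_comm ?_
    intro y hy x
    rw [hbdef, hbdef]
    have : in2 (y x) = dg y (in2 x) := by simp [in2_def, dg_apply]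
    rw [this, hPc y hy]
    rfl
  have hsum : inner ℝ θ ((b + star b) Ω) = 0 :=
    h1 _ ⟨b + star b, add_mem hbA (star_mem hbA), by
      rw [isSelfAdjoint_iff, star_add, star_star, add_comm], rfl⟩
  have hg1 : P (in1 Ω) + P (in2 θ) = in1 Ω + in2 θ := by
    rw [← map_add]
    refine Submodule.starProjection_eq_self_iff.mpr (Submodule.le_topologicalClosure _ ?_)
    exact ⟨1, one_mem _, by simp [in1_def, in2_def, ← WithLp.toLp_add]⟩
  have hg2 : P (in2 Ω) = P (in1 θ) := by
    rw [← sub_eq_zero, ← map_sub]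
    refine (Submodule.starProjection_apply_eq_zero_iff _).mpr ?_
    have := hrot 1 (one_mem _)
    have e : in2 Ω - in1 θ = WithLp.toLp 2 (-((1 : H →L[ℂ] H) θ), (1 : H →L[ℂ] H) Ω) := by
      simp [in1_def, in2_def, ← WithLp.toLp_sub]
    rw [e]; exact this
  have hin : ∀ (x : H) (v : WithLp 2 (H × H)), inner ℂ x v.fst = inner ℂ (in1 x) v := by
    intro x v; simp [WithLp.prod_inner_apply, in1_def]
  have hidem : ∀ v, inner ℂ v (P v) = ((‖P v‖ ^ 2 : ℝ) : ℂ) := by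
    intro v
    have : P (P v) = P v :=
      Submodule.starProjection_eq_self_iff.mpr (Submodule.starProjection_apply_mem _ _)
    rw [← this, ← Submodule.inner_starProjection_left_eq_right, ← hP, inner_self_eq_norm_sq_to_K, this]
    push_cast; rfl
  have hA1 : (inner ℂ θ (b Ω)).re = ‖P (in1 θ)‖ ^ 2 := by
    rw [hbdef, hg2, hin, hidem, Complex.ofReal_re]
  have hA2 : (inner ℂ θ ((star b) Ω)).re = ‖in1 Ω - P (in1 Ω)‖ ^ 2 := by
    rw [ContinuousLinearMap.star_eq_adjoint, ContinuousLinearMap.adjoint_inner_right,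
      ← inner_conj_symm, Complex.conj_re, hbdef, hin, eq_sub_of_add_eq' hg1, inner_sub_right,
      inner_add_right, hidem]
    have e0 : inner ℂ (in1 Ω) (in2 θ) = 0 := by simp [WithLp.prod_inner_apply, in1_def, in2_def]
    have e1 := Submodule.norm_sq_eq_add_norm_sq_starProjection (in1 Ω) G
    rw [Submodule.starProjection_orthogonal_val, ← hP] at e1
    rw [e0, inner_self_eq_norm_sq_to_K]
    have : ((‖in1 Ω‖ : ℂ) ^ 2) = ((‖in1 Ω‖ ^ 2 : ℝ) : ℂ) := by push_cast; rfl
    simp only [Complex.coe_algebraMap, this, Complex.sub_re, Complex.add_re, Complex.ofReal_re,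
      Complex.zero_re]
    linarith
  rw [rinner, ContinuousLinearMap.add_apply, inner_add_right, Complex.add_re, hA1, hA2] at hsum
  have hz : ‖in1 Ω - P (in1 Ω)‖ ^ 2 = 0 := by
    nlinarith [sq_nonneg ‖P (in1 θ)‖, sq_nonneg ‖in1 Ω - P (in1 Ω)‖]
  have hz' : in1 Ω = P (in1 Ω) := sub_eq_zero.mp (norm_eq_zero.mp (by simpa using hz))
  have hmem : in1 Ω ∈ G := by
    rw [hz']; exact Submodule.starProjection_apply_mem _ _
  have hfin : ∀ y ∈ A.commutant, inner ℂ θ (y Ω) = 0 := by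
    intro y hy
    have := (Submodule.mem_orthogonal _ _).mp (hrot y hy) _ hmem
    rw [hsym y hy]
    simpa [WithLp.prod_inner_apply, in1_def] using this
  have hcl : IsClosed {x : H | inner ℂ θ x = 0} := isClosed_eq (by fun_prop) continuous_const
  have : inner ℂ θ θ = 0 := by
    refine hcl.closure_subset_iff.mpr ?_ (hsep θ)
    rintro _ ⟨a, ha, rfl⟩
    exact hfin a ha
  exact inner_self_eq_zero.mp this

theorem orth_mem (A : VonNeumannAlgebra H) (Ω ξ : H)
    (hsep : IsCyclicVector (A.commutant : Set (H →L[ℂ] H)) Ω)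
    (h : ∀ x ∈ saV A.commutant Ω, inner ℝ ξ x = 0) : Complex.I • ξ ∈ clK A Ω := by
  set η := Complex.I • ξ with hη
  have h0 : η - (clK A Ω).starProjection η = 0 := by
    refine core A Ω _ hsep ?_ ?_
    · intro x hx
      exact (Submodule.mem_orthogonal' _ _).mp (Submodule.sub_starProjection_mem_orthogonal _) _
        (saV_le _ _ hx)
    · intro x hx
      rw [inner_sub_left]
      have e1 := orth_cl A Ω _ (Submodule.starProjection_apply_mem (clK A Ω) η) _ (saV_le _ _ hx)
      rw [I_orth, neg_eq_zero] at e1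
      rw [e1, hη, rinner, inner_smul_left, inner_smul_right, ← mul_assoc, Complex.conj_I]
      have := h x hx
      rw [rinner] at this
      simp [this]
  rw [sub_eq_zero.mp h0]
  exact Submodule.starProjection_apply_mem _ _

theorem cfc_mem' (A : VonNeumannAlgebra H) {x : H →L[ℂ] H} (hx : x ∈ A) (f : ℝ → ℝ) :
    cfc f x ∈ A := by
  refine mem_of_comm ?_
  intro b hb v
  have : Commute x b := VonNeumannAlgebra.mem_commutant_iff.mp hb x hx
  have := this.cfc_real f
  exact (congrArg (fun g : H →L[ℂ] H => g v) this.eq).symm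

theorem sakai_sup (A : VonNeumannAlgebra H) (Ω : H) {l : ℂ} (hl : 0 < l.re)
    {a : H →L[ℂ] H} (ha : a ∈ A.commutant) {x : H →L[ℂ] H} (hx : x ∈ A)
    (hxs : IsSelfAdjoint x) {δ : ℝ} (hδ : 0 < δ) :
    ∃ h ∈ A, IsSelfAdjoint h ∧ ‖h‖ ≤ ‖a‖ / l.re ∧
      inner ℝ (x Ω) (a Ω) ≤ inner ℝ (x Ω) (l • h Ω) + δ := by
  set N := ‖a‖ * ‖Ω‖ ^ 2 + 1 with hN
  have hNpos : 0 < N := by positivity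
  set ε := δ / N with hε
  have hεpos : 0 < ε := by positivity
  set f : ℝ → ℝ := fun t => t / (|t| + ε) with hf
  have hfc : Continuous f := by
    refine Continuous.div continuous_id (by fun_prop) ?_
    intro t; positivity
  set s : ℝ → ℝ := fun t => √(max t 0) + √(max (-t) 0) with hs
  set r : ℝ → ℝ := fun t => √(max t 0) - √(max (-t) 0) with hr
  have hsc : Continuous s := by fun_prop
  have hrc : Continuous r := by fun_prop
  have hsq1 : ∀ t : ℝ, √(max t 0) ^ 2 = max t 0 := fun t => Real.sq_sqrt (le_max_right _ _)
  have hsq2 : ∀ t : ℝ, √(max (-t) 0) ^ 2 = max (-t) 0 := fun t => Real.sq_sqrt (le_max_right _ _)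
  have hprod : ∀ t : ℝ, √(max t 0) * √(max (-t) 0) = 0 := by
    intro t
    rcases le_total t 0 with h | h
    · simp [max_eq_right h]
    · simp [max_eq_right (neg_nonpos.mpr h)]
  have hmm : ∀ t : ℝ, max t 0 - max (-t) 0 = t ∧ max t 0 + max (-t) 0 = |t| := by
    intro t
    rcases le_total t 0 with h | h
    · simp [max_eq_right h, max_eq_left (neg_nonneg.mpr h), abs_of_nonpos h]
    · simp [max_eq_left h, max_eq_right (neg_nonpos.mpr h), abs_of_nonneg h]
  have hsr : ∀ t, s t * r t = t := fun t => by
    simp only [hs, hr]; linear_combination hsq1 t - hsq2 t + (hmm t).1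
  have hss : ∀ t, s t * s t = |t| := fun t => by
    simp only [hs]; linear_combination hsq1 t + hsq2 t + (hmm t).2 + 2 * hprod t
  have hrr : ∀ t, r t * r t = |t| := fun t => by
    simp only [hr]; linear_combination hsq1 t + hsq2 t + (hmm t).2 - 2 * hprod t
  set S := cfc s x with hS
  set R := cfc r x with hR
  set F := cfc f x with hF
  set B := cfc (fun t : ℝ => |t|) x with hB
  have hSR : S * R = x := by
    rw [hS, hR, ← cfc_mul s r x hsc.continuousOn hrc.continuousOn]
    simp only [hsr]; exact cfc_id' ℝ x
  have hSS : S * S = B := by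
    rw [hS, ← cfc_mul s s x hsc.continuousOn hsc.continuousOn]; simp only [hss, hB]
  have hRR : R * R = B := by
    rw [hR, ← cfc_mul r r x hrc.continuousOn hrc.continuousOn]; simp only [hrr, hB]
  have hxF : x * F = cfc (fun t => t * f t) x := by
    rw [cfc_mul (fun t => t) f x continuous_id.continuousOn hfc.continuousOn, cfc_id' ℝ x]
  have hFx : F * x = x * F := ((Commute.refl x).cfc_real f).eq
  have hSs : IsSelfAdjoint S := cfc_predicate s x
  have hRs : IsSelfAdjoint R := cfc_predicate r x
  have hFs : IsSelfAdjoint F := cfc_predicate f x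
  have hSA : S ∈ A := cfc_mem' A hx s
  have hFA : F ∈ A := cfc_mem' A hx f
  have hFn : ‖F‖ ≤ 1 := by
    refine norm_cfc_le zero_le_one ?_
    intro t _
    rw [Real.norm_eq_abs, hf, abs_div, abs_of_pos (show 0 < |t| + ε by positivity),
      div_le_one (by positivity)]
    linarith
  have hdiff : ‖B - x * F‖ ≤ ε := by
    rw [hxF, hB, ← cfc_sub (fun t : ℝ => |t|) (fun t => t * f t) x continuous_abs.continuousOn
      (continuous_id.mul hfc).continuousOn]
    refine norm_cfc_le hεpos.le ?_
    intro t _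
    have hp : 0 < |t| + ε := by positivity
    have : |t| - t * f t = ε * (|t| / (|t| + ε)) := by
      simp only [hf]; field_simp; rw [← sq_abs t]; ring
    rw [this, Real.norm_eq_abs, abs_of_nonneg (by positivity)]
    refine mul_le_of_le_one_right hεpos.le ((div_le_one hp).mpr (by linarith))
  have hnS : ‖S Ω‖ ^ 2 = (inner ℂ Ω (B Ω)).re := by
    rw [← hSS, ContinuousLinearMap.mul_apply, ← sa_inner hSs]
    exact (inner_self_eq_norm_sq (𝕜 := ℂ) (S Ω)).symm
  have hnR : ‖R Ω‖ ^ 2 = (inner ℂ Ω (B Ω)).re := by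
    rw [← hRR, ContinuousLinearMap.mul_apply, ← sa_inner hRs]
    exact (inner_self_eq_norm_sq (𝕜 := ℂ) (R Ω)).symm
  have hle1 : inner ℝ (x Ω) (a Ω) ≤ ‖a‖ * (inner ℂ Ω (B Ω)).re := by
    have e : inner ℝ (x Ω) (a Ω) = inner ℝ (R Ω) (a (S Ω)) := by
      rw [rinner, rinner, ← hSR, ContinuousLinearMap.mul_apply, sa_inner hSs, comm_apply hSA ha]
    rw [e]
    have e2 : ‖R Ω‖ = ‖S Ω‖ := by
      rw [← sq_eq_sq₀ (norm_nonneg _) (norm_nonneg _), hnS, hnR]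
    calc _ ≤ ‖R Ω‖ * ‖a (S Ω)‖ := real_inner_le_norm _ _
      _ ≤ ‖R Ω‖ * (‖a‖ * ‖S Ω‖) := by gcongr; exact a.le_opNorm _
      _ = ‖a‖ * ‖S Ω‖ ^ 2 := by rw [e2]; ring
      _ = _ := by rw [hnS]
  have hle2 : (inner ℂ Ω (B Ω)).re ≤ (inner ℂ Ω (x (F Ω))).re + ε * ‖Ω‖ ^ 2 := by
    have e : inner ℂ Ω (B Ω) = inner ℂ Ω (x (F Ω)) + inner ℂ Ω ((B - x * F) Ω) := by
      simp [inner_sub_right]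
    rw [e, Complex.add_re]
    gcongr
    calc _ ≤ ‖inner ℂ Ω ((B - x * F) Ω)‖ := Complex.re_le_norm _
      _ ≤ ‖Ω‖ * ‖(B - x * F) Ω‖ := norm_inner_le_norm _ _
      _ ≤ ‖Ω‖ * (ε * ‖Ω‖) := by
        gcongr
        exact ((B - x * F).le_opNorm _).trans (by gcongr)
      _ = _ := by ring
  have him : (inner ℂ Ω (x (F Ω))).im = 0 := by
    apply Complex.conj_eq_iff_im.mp
    rw [inner_conj_symm, sa_inner hxs, sa_inner hFs]
    exact congrArg (fun g : H →L[ℂ] H => inner ℂ Ω (g Ω)) hFx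
  refine ⟨((‖a‖ / l.re : ℝ) : ℂ) • F, A.toStarSubalgebra.smul_mem hFA _, ?_, ?_, ?_⟩
  · rw [isSelfAdjoint_iff, star_smul, hFs.star_eq]; simp
  · rw [norm_smul, Complex.norm_real, Real.norm_of_nonneg (by positivity)]
    exact mul_le_of_le_one_right (by positivity) hFn
  · have e : inner ℝ (x Ω) (l • (((‖a‖ / l.re : ℝ) : ℂ) • F) Ω)
        = ‖a‖ * (inner ℂ Ω (x (F Ω))).re := by
      rw [rinner, ContinuousLinearMap.smul_apply, inner_smul_right, inner_smul_right, sa_inner hxs,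
        Complex.mul_re, Complex.re_ofReal_mul, Complex.im_ofReal_mul, him]
      field_simp
      ring
    rw [e]
    have h3 : ‖a‖ * (ε * ‖Ω‖ ^ 2) ≤ δ := by
      have : δ = ε * N := by rw [hε]; field_simp
      rw [this, hN]; nlinarith
    have := mul_le_mul_of_nonneg_left hle2 (norm_nonneg a)
    linarith

open Filter Topology in
theorem ball_closed (A : VonNeumannAlgebra H) (Ω : H)
    (hsep : IsCyclicVector (A.commutant : Set (H →L[ℂ] H)) Ω) {c : ℝ} :
    IsClosed {z : H | ∃ h ∈ A, IsSelfAdjoint h ∧ ‖h‖ ≤ c ∧ h Ω = z} := by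
  refine isSeqClosed_iff_isClosed.mp ?_
  intro z ξ hz hlim
  choose h hA hs hn hΩ using hz
  have hc0 : 0 ≤ c := (norm_nonneg _).trans (hn 0)
  have hcau : ∀ v, CauchySeq (fun n => h n v) := by
    intro v
    rw [Metric.cauchySeq_iff']
    intro ε hε
    obtain ⟨_, ⟨b, hb, rfl⟩, hd⟩ := Metric.mem_closure_iff.mp (hsep v) (ε / (3 * (c + 1))) (by positivity)
    have hcb : CauchySeq (fun n => h n (b Ω)) := by
      have : Tendsto (fun n => b (z n)) atTop (𝓝 (b ξ)) := (b.continuous.tendsto ξ).comp hlim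
      have e : (fun n => h n (b Ω)) = fun n => b (z n) := by
        funext n; rw [comm_apply (hA n) hb, hΩ]
      rw [e]; exact this.cauchySeq
    obtain ⟨M, hM⟩ := Metric.cauchySeq_iff'.mp hcb (ε / 3) (by positivity)
    refine ⟨M, fun n hnM => ?_⟩
    have h1 := hM n hnM
    have hb' : ∀ n, dist (h n v) (h n (b Ω)) ≤ ε / 3 := by
      intro n
      rw [dist_eq_norm, ← map_sub]
      rw [dist_eq_norm] at hd
      calc _ ≤ ‖h n‖ * ‖v - b Ω‖ := (h n).le_opNorm _
        _ ≤ (c + 1) * (ε / (3 * (c + 1))) := by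
          gcongr
          linarith [hn n]
        _ = ε / 3 := by field_simp
    have h2 := dist_triangle4 (h n v) (h n (b Ω)) (h M (b Ω)) (h M v)
    have h3 := hb' n
    have h4 := hb' M
    rw [dist_comm] at h4
    linarith
  choose f hf using fun v => cauchySeq_tendsto_of_complete (hcau v)
  let L : H →L[ℂ] H := continuousLinearMapOfTendsto (l := atTop) h (f := f) (tendsto_pi_nhds.mpr hf)
  have hL : ∀ v, Tendsto (fun n => h n v) atTop (𝓝 (L v)) := hf
  refine ⟨L, ?_, ?_, ?_, ?_⟩
  · refine mem_of_comm ?_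
    intro b hb v
    have h1 : Tendsto (fun n => b (h n v)) atTop (𝓝 (b (L v))) := (b.continuous.tendsto _).comp (hL v)
    have e : (fun n => b (h n v)) = fun n => h n (b v) := by
      funext n; rw [comm_apply (hA n) hb]
    rw [e] at h1
    exact tendsto_nhds_unique h1 (hL (b v))
  · rw [ContinuousLinearMap.isSelfAdjoint_iff_isSymmetric]
    intro v w
    have h1 : Tendsto (fun n => inner ℂ (h n v) w) atTop (𝓝 (inner ℂ (L v) w)) :=
      (hL v).inner tendsto_const_nhds
    have h2 : Tendsto (fun n => inner ℂ v (h n w)) atTop (𝓝 (inner ℂ v (L w))) :=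
      tendsto_const_nhds.inner (hL w)
    have e : (fun n => inner ℂ (h n v) w) = fun n => inner ℂ v (h n w) := by
      funext n; rw [sa_inner (hs n)]
    rw [e] at h1
    exact tendsto_nhds_unique h1 h2
  · refine L.opNorm_le_bound hc0 ?_
    intro v
    refine le_of_tendsto (hL v).norm (Eventually.of_forall fun n => ?_)
    exact ((h n).le_opNorm _).trans (by gcongr; exact hn n)
  · have := hL Ω
    simp only [hΩ] at this
    exact tendsto_nhds_unique this hlim

theorem sakai (A : VonNeumannAlgebra H) (Ω : H)
    (hsep : IsCyclicVector (A.commutant : Set (H →L[ℂ] H)) Ω) {l : ℂ} (hl : 0 < l.re)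
    {a : H →L[ℂ] H} (ha : a ∈ A.commutant) :
    ∃ h ∈ A, IsSelfAdjoint h ∧ ∀ ζ ∈ clK A Ω, inner ℝ (a Ω - l • h Ω) ζ = 0 := by
  set c := ‖a‖ / l.re with hc
  set C := {z : H | ∃ h ∈ A, IsSelfAdjoint h ∧ ‖h‖ ≤ c ∧ h Ω = z} with hC
  have hc0 : 0 ≤ c := by positivity
  have hCcl : IsClosed C := ball_closed A Ω hsep
  set K := clK A Ω with hK
  have hCK : C ⊆ K := by
    rintro z ⟨h, hA, hs, -, rfl⟩
    exact saV_le _ _ ⟨h, hA, hs, rfl⟩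
  let ml : H →L[ℝ] H := ((l • ContinuousLinearMap.id ℂ H : H →L[ℂ] H)).restrictScalars ℝ
  have hml : ∀ v, ml v = l • v := fun v => rfl
  let T : K →L[ℝ] H := K.starProjection ∘L ml ∘L K.subtypeL
  have hT : ∀ v : K, T v = K.starProjection (l • (v : H)) := fun v => rfl
  have hTb : ∀ v : K, ‖v‖ ≤ (⟨1 / l.re, by positivity⟩ : NNReal) * ‖T v‖ := by
    intro v
    have h1 := coercive (μ := l) (v : H)
    have h2 : inner ℝ (T v) (v : H) = inner ℝ (l • (v : H)) (v : H) := by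
      rw [hT, Submodule.inner_starProjection_left_eq_right,
        Submodule.starProjection_eq_self_iff.mpr v.2]
    have h3 := real_inner_le_norm (T v) (v : H)
    change ‖(v : H)‖ ≤ 1 / l.re * ‖T v‖
    rw [one_div, ← div_eq_inv_mul, le_div_iff₀ hl]
    rcases (norm_nonneg (v : H)).eq_or_lt with h0 | h0
    · rw [← h0]; simp
    · refine le_of_mul_le_mul_right ?_ h0
      nlinarith
  have hemb := (T.antilipschitz_of_bound hTb).isClosedEmbedding T.uniformContinuous
  set D : Set H := T '' (Subtype.val ⁻¹' C) with hD
  have hDcl : IsClosed D := hemb.isClosedMap _ (hCcl.preimage continuous_subtype_val)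
  have hCconv : Convex ℝ C := by
    rintro _ ⟨h, hA, hs, hn, rfl⟩ _ ⟨k, kA, ks, kn, rfl⟩ p q hp hq hpq
    refine ⟨(p : ℂ) • h + (q : ℂ) • k, add_mem (A.toStarSubalgebra.smul_mem hA _)
      (A.toStarSubalgebra.smul_mem kA _), ?_, ?_, by simp⟩
    · rw [isSelfAdjoint_iff, star_add, star_smul, star_smul, hs.star_eq, ks.star_eq]; simp
    · refine (norm_add_le _ _).trans ?_
      rw [norm_smul, norm_smul, Complex.norm_real, Complex.norm_real, Real.norm_of_nonneg hp,
        Real.norm_of_nonneg hq]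
      calc p * ‖h‖ + q * ‖k‖ ≤ p * c + q * c := by gcongr
        _ = c := by rw [← add_mul, hpq, one_mul]
  have hDconv : Convex ℝ D :=
    (hCconv.linear_preimage K.subtype).linear_image (T : K →ₗ[ℝ] H)
  by_cases hmem : K.starProjection (a Ω) ∈ D
  · obtain ⟨⟨_, hvK⟩, ⟨h, hA, hs, -, rfl⟩, hv⟩ := hmem
    refine ⟨h, hA, hs, ?_⟩
    intro ζ hζ
    rw [hT] at hv
    have : K.starProjection (a Ω - l • h Ω) = 0 := by rw [map_sub, ← hv, sub_self]
    exact (Submodule.mem_orthogonal' _ _).mp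
      ((Submodule.starProjection_apply_eq_zero_iff _).mp this) ζ hζ
  · exfalso
    obtain ⟨φ, u, hφ1, hφ2⟩ := geometric_hahn_banach_closed_point hDconv hDcl hmem
    set z := K.starProjection ((InnerProductSpace.toDual ℝ H).symm φ) with hz
    have hzφ : ∀ v, φ (K.starProjection v) = inner ℝ z v := by
      intro v
      rw [hz, Submodule.inner_starProjection_left_eq_right, InnerProductSpace.toDual_symm_apply]
    set δ := φ (K.starProjection (a Ω)) - u with hδ
    have hδpos : 0 < δ := sub_pos.mpr hφ2
    set Q := ‖a Ω‖ + ‖l‖ * (c * ‖Ω‖) + 1 with hQ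
    have hQpos : 0 < Q := by positivity
    have hzK : z ∈ K := Submodule.starProjection_apply_mem _ _
    obtain ⟨_, ⟨x, hx, hxs, rfl⟩, hd⟩ := Metric.mem_closure_iff.mp hzK (δ / (2 * Q)) (by positivity)
    obtain ⟨h, hA, hs, hn, hle⟩ := sakai_sup A Ω hl ha hx hxs (half_pos hδpos)
    have hhC : h Ω ∈ C := ⟨h, hA, hs, hn, rfl⟩
    have h1 := hφ1 _ ⟨⟨h Ω, hCK hhC⟩, hhC, rfl⟩
    rw [hT, hzφ] at h1
    have h2 : φ (K.starProjection (a Ω)) = inner ℝ z (a Ω) := hzφ _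
    have h3 : inner ℝ z (a Ω - l • h Ω) = inner ℝ (x Ω) (a Ω - l • h Ω)
        + inner ℝ (z - x Ω) (a Ω - l • h Ω) := by rw [← inner_add_left]; simp
    have h4 : inner ℝ (z - x Ω) (a Ω - l • h Ω) ≤ δ / 2 := by
      refine (real_inner_le_norm _ _).trans ?_
      rw [dist_eq_norm] at hd
      have : ‖a Ω - l • h Ω‖ ≤ Q := by
        refine (norm_sub_le _ _).trans ?_
        rw [norm_smul]
        have : ‖l‖ * ‖h Ω‖ ≤ ‖l‖ * (c * ‖Ω‖) := by
          gcongr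
          exact (h.le_opNorm _).trans (by gcongr)
        linarith
      calc _ ≤ (δ / (2 * Q)) * Q := by gcongr
        _ = δ / 2 := by field_simp
    rw [inner_sub_right, inner_sub_right] at h3
    simp only at h1
    linarith

theorem rel (A : VonNeumannAlgebra H) (Ω : H)
    (hsep : IsCyclicVector (A.commutant : Set (H →L[ℂ] H)) Ω) {α ξ η β : H}
    (hξ : ∀ ζ ∈ clK A Ω, inner ℝ (α - (1 + Complex.I) • ξ) ζ = 0)
    (hη : ∀ ζ ∈ clK A Ω, inner ℝ (α - (1 - Complex.I) • η) ζ = 0)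
    (hηK : η ∈ clK A Ω) (hβK : β ∈ clK A.commutant Ω)
    (hβ : ∀ ζ ∈ clK A.commutant Ω, inner ℝ (ξ - (1 + Complex.I) • β) ζ = 0) :
    η = Complex.I • (ξ - (1 + Complex.I) • β) := by
  have h1 : Complex.I • (ξ - (1 + Complex.I) • β) ∈ clK A Ω :=
    orth_mem A Ω _ hsep fun x hx => hβ x (saV_le _ _ hx)
  set η' := Complex.I • (ξ - (1 + Complex.I) • β) with hη'
  have h2 : α - (1 - Complex.I) • η' = (α - (1 + Complex.I) • ξ) + (2 : ℝ) • (Complex.I • β) := by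
    have e1 : (1 - Complex.I) * Complex.I = 1 + Complex.I := by
      linear_combination - Complex.I_mul_I
    have e2 : (1 + Complex.I) * (1 + Complex.I) = 2 * Complex.I := by
      linear_combination Complex.I_mul_I
    rw [hη', smul_smul, e1, smul_sub, smul_smul, e2, ← smul_smul]
    have : (2 : ℂ) • Complex.I • β = (2 : ℝ) • Complex.I • β := by
      rw [two_smul, two_smul]
    rw [this]; abel
  have h3 : inner ℝ ((1 - Complex.I) • (η - η')) (η - η') = 0 := by
    have hm : η - η' ∈ clK A Ω := sub_mem hηK h1
    have e : (1 - Complex.I) • (η - η') = (α - (1 - Complex.I) • η') - (α - (1 - Complex.I) • η) := by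
      rw [smul_sub]; abel
    have e3 : inner ℝ (Complex.I • β) (η - η') = 0 := by
      rw [I_orth, real_inner_comm, orth_cl A Ω _ hm _ hβK, neg_zero]
    rw [e, inner_sub_left, hη _ hm, h2, inner_add_left, hξ _ hm, real_inner_smul_left, e3]
    simp
  rw [coercive] at h3
  have : ‖η - η'‖ = 0 := by simpa using h3
  exact sub_eq_zero.mp (norm_eq_zero.mp this)

theorem main_aux
    (A : VonNeumannAlgebra H) (Ω : H)
    (hcyc : IsCyclicVector (A : Set (H →L[ℂ] H)) Ω)
    (hsep : IsCyclicVector (A.commutant : Set (H →L[ℂ] H)) Ω) :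
    Dense ({x : H | ∃ a ∈ A, a Ω = x} ∩ {x : H | ∃ a' ∈ A.commutant, a' Ω = x}) := by
  let D : Submodule ℂ H :=
    { carrier := {x : H | ∃ a ∈ A, a Ω = x} ∩ {x : H | ∃ a' ∈ A.commutant, a' Ω = x}
      zero_mem' := ⟨⟨0, zero_mem _, by simp⟩, ⟨0, zero_mem _, by simp⟩⟩
      add_mem' := by
        rintro x y ⟨⟨a, ha, ha'⟩, ⟨b, hb, hb'⟩⟩ ⟨⟨a2, ha2, ha2'⟩, ⟨b2, hb2, hb2'⟩⟩
        exact ⟨⟨a + a2, add_mem ha ha2, by simp [ha', ha2']⟩,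
          ⟨b + b2, add_mem hb hb2, by simp [hb', hb2']⟩⟩
      smul_mem' := by
        rintro c x ⟨⟨a, ha, ha'⟩, ⟨b, hb, hb'⟩⟩
        exact ⟨⟨c • a, A.toStarSubalgebra.smul_mem ha _, by simp [ha']⟩,
          ⟨c • b, A.commutant.toStarSubalgebra.smul_mem hb _, by simp [hb']⟩⟩ }
  have hre : 0 < (1 + Complex.I : ℂ).re := by simp
  have hre' : 0 < (1 - Complex.I : ℂ).re := by simp
  have hcc : A.commutant.commutant = A := VonNeumannAlgebra.commutant_commutant A
  let W : Set H := {z | ∃ h ∈ A, h Ω = z ∧ ∃ a ∈ A.commutant,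
    ∀ ζ ∈ clK A Ω, inner ℝ (a Ω - (1 + Complex.I) • h Ω) ζ = 0}
  have hW : (clK A Ω : Set H) ⊆ closure W := by
    have := dens A.commutant Ω hsep hre (saV A.commutant Ω) W (le_of_eq rfl) ?_
    · rwa [hcc] at this
    · rintro _ ⟨a, ha, has, rfl⟩
      obtain ⟨h, hA, hs, hh⟩ := sakai A Ω hsep hre ha
      rw [hcc]
      exact ⟨h Ω, ⟨h, hA, rfl, a, ha, hh⟩, saV_le _ _ ⟨h, hA, hs, rfl⟩, hh⟩
  have hD : (clK A.commutant Ω : Set H) ⊆ closure (D : Set H) := by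
    refine dens A Ω hcyc hre W D hW ?_
    rintro _ ⟨h, hA, rfl, a, ha, hh⟩
    obtain ⟨k, kA, ks, hk⟩ := sakai A Ω hsep hre' ha
    obtain ⟨b, hb, bs, hbb⟩ := sakai A.commutant Ω (by rwa [hcc]) hre (a := h) (by rwa [hcc])
    have hbK : b Ω ∈ clK A.commutant Ω := saV_le _ _ ⟨b, hb, bs, rfl⟩
    have hr := rel A Ω hsep hh hk (saV_le _ _ ⟨k, kA, ks, rfl⟩) hbK hbb
    refine ⟨b Ω, ⟨⟨(1 + Complex.I)⁻¹ • (h + Complex.I • k), A.toStarSubalgebra.smul_mem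
      (add_mem hA (A.toStarSubalgebra.smul_mem kA _)) _, ?_⟩, ⟨b, hb, rfl⟩⟩, hbK, hbb⟩
    have hne : (1 + Complex.I : ℂ) ≠ 0 := by
      intro h0; rw [h0] at hre; simp at hre
    simp only [ContinuousLinearMap.smul_apply, ContinuousLinearMap.add_apply]
    rw [inv_smul_eq_iff₀ hne, hr, smul_smul, Complex.I_mul_I, neg_one_smul]
    abel
  have hDtop : ∀ x : H, x ∈ D.topologicalClosure := by
    intro x
    refine closure_minimal ?_ (Submodule.isClosed_topologicalClosure D) (hsep x)
    rintro _ ⟨a, ha, rfl⟩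
    obtain ⟨y, hy, z, hz, e⟩ := cyc_decomp A.commutant Ω (a := a) ha
    rw [e]
    exact add_mem (hD (saV_le _ _ hy)) (Submodule.smul_mem _ _ (hD (saV_le _ _ hz)))
  exact hDtop

end helpers

/-- If `Ω` is cyclic and separating for the von Neumann algebra `A`, then the set of
vectors lying simultaneously in `A Ω` and in `A' Ω` is dense in `H`. -/
theorem dense_inter_of_cyclic_separating
    (A : VonNeumannAlgebra H) (Ω : H)
    (hcyc : IsCyclicVector (A : Set (H →L[ℂ] H)) Ω)
    (hsep : IsCyclicVector (A.commutant : Set (H →L[ℂ] H)) Ω) :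
    Dense ({x : H | ∃ a ∈ A, a Ω = x} ∩ {x : H | ∃ a' ∈ A.commutant, a' Ω = x}) := by
  exact main_aux A Ω hcyc hsep
end
end

section
/- Let H be a complex Hilbert space, 𝒜 a von Neumann algebra on H, and Ω ∈ H a vector that is cyclic and separating for 𝒜. If (a_n) is a sequence of elements of 𝒜 such that a_n Ω → 0 in H and the sequence of vectors a_n* Ω converges to some ψ ∈ H, then ψ = 0. (Equivalently: the conjugate-linear operator S₀ defined on the dense domain 𝒜Ω by S₀(a Ω) = a* Ω is closable.) -/
noncomputable section

variable {H : Type*} [NormedAddCommGroup H] [InnerProductSpace ℂ H] [CompleteSpace H]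

/-- **Closability of the Tomita operator.**
Let `Ω` be cyclic and separating for the von Neumann algebra `A`. If `(aₙ)` is a sequence
in `A` with `aₙ Ω → 0` and `aₙ* Ω → ψ`, then `ψ = 0`. -/
theorem tomita_operator_closable
    (A : VonNeumannAlgebra H) (Ω : H)
    (hcyc : IsCyclicVector (A : Set (H →L[ℂ] H)) Ω)
    (hsep : IsCyclicVector (A.commutant : Set (H →L[ℂ] H)) Ω)
    (a : ℕ → (H →L[ℂ] H)) (ha : ∀ n, a n ∈ A) (ψ : H)
    (h0 : Filter.Tendsto (fun n => a n Ω) Filter.atTop (nhds 0))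
    (hψ : Filter.Tendsto (fun n => (ContinuousLinearMap.adjoint (a n)) Ω)
      Filter.atTop (nhds ψ)) :
    ψ = 0 := by
  have key : ∀ x ∈ {x : H | ∃ b ∈ (A.commutant : Set (H →L[ℂ] H)), b Ω = x},
      inner ℂ x ψ = 0 := by
    rintro x ⟨b, hb, rfl⟩
    have hb' := VonNeumannAlgebra.mem_commutant_iff.mp hb
    have h1 : Filter.Tendsto
        (fun n => inner ℂ (b Ω) ((ContinuousLinearMap.adjoint (a n)) Ω))
        Filter.atTop (nhds (inner ℂ (b Ω) ψ)) := tendsto_const_nhds.inner hψ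
    have h2 : Filter.Tendsto (fun n => inner ℂ (b (a n Ω)) Ω)
        Filter.atTop (nhds (inner ℂ (b 0) Ω)) :=
      ((b.continuous.tendsto 0).comp h0).inner tendsto_const_nhds
    have h3 : (fun n => inner ℂ (b Ω) ((ContinuousLinearMap.adjoint (a n)) Ω))
        = fun n => inner ℂ (b (a n Ω)) Ω := by
      funext n
      rw [ContinuousLinearMap.adjoint_inner_right]
      have h4 : a n (b Ω) = b (a n Ω) := DFunLike.congr_fun (hb' (a n) (ha n)) Ω
      rw [h4]
    rw [h3] at h1
    have h5 := tendsto_nhds_unique h1 h2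
    simpa using h5
  have hall : ∀ x : H, inner ℂ x ψ = 0 := by
    have hc : IsClosed {x : H | inner ℂ x ψ = 0} :=
      isClosed_eq (continuous_id.inner continuous_const) continuous_const
    intro x
    exact closure_minimal key hc (hsep x)
  exact inner_self_eq_zero.mp (hall ψ)
end
end

section
/- Let H be a complex Hilbert space, 𝒜 a von Neumann algebra on H, and Ω ∈ H a vector that is cyclic and separating for 𝒜. Let 𝒮 ⊆ 𝒜 be a subset with the property that for every a ∈ 𝒜 there exists a sequence (a_n) in 𝒮 with a_n Ω → a Ω and a_n* Ω → a* Ω in H. Then every bounded operator O on H that commutes with every element of 𝒮 also commutes with every element of 𝒜; consequently the double commutant of 𝒮 equals 𝒜. -/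
noncomputable section

variable {H : Type*} [NormedAddCommGroup H] [InnerProductSpace ℂ H] [CompleteSpace H]

/-- Let `Ω` be cyclic and separating for the von Neumann algebra `A`, and let `S ⊆ A`
be such that every `a ∈ A` is approximated by a sequence `(aₙ)` in `S` with
`aₙ Ω → a Ω` and `aₙ* Ω → a* Ω`. Then every bounded operator commuting with every element
of `S` commutes with every element of `A`; consequently the double commutant of `S` is `A`. -/
theorem generating_of_dense_in_graph_topology
    (A : VonNeumannAlgebra H) (Ω : H)
    (hcyc : IsCyclicVector (A : Set (H →L[ℂ] H)) Ω)
    (hsep : IsCyclicVector (A.commutant : Set (H →L[ℂ] H)) Ω)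
    (S : Set (H →L[ℂ] H)) (hS : S ⊆ (A : Set (H →L[ℂ] H)))
    (happrox : ∀ a ∈ A, ∃ seq : ℕ → (H →L[ℂ] H), (∀ n, seq n ∈ S) ∧
      Filter.Tendsto (fun n => seq n Ω) Filter.atTop (nhds (a Ω)) ∧
      Filter.Tendsto (fun n => (ContinuousLinearMap.adjoint (seq n)) Ω)
        Filter.atTop (nhds ((ContinuousLinearMap.adjoint a) Ω))) :
    (∀ O : H →L[ℂ] H, (∀ s ∈ S, O * s = s * O) → ∀ a ∈ A, O * a = a * O) ∧
      Set.centralizer (Set.centralizer S) = (A : Set (H →L[ℂ] H)) := by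
  have key : ∀ O : H →L[ℂ] H, (∀ s ∈ S, O * s = s * O) → ∀ a ∈ A, O * a = a * O := by
    intro O hO a ha
    obtain ⟨q, hqS, hq, hq'⟩ := happrox a ha
    have comm : ∀ g ∈ A, ∀ c ∈ A.commutant, ∀ x, g (c x) = c (g x) := by
      intro g hg c hc x
      exact congrArg (fun T : H →L[ℂ] H => T x) (VonNeumannAlgebra.mem_commutant_iff.1 hc g hg)
    have adjmem : ∀ g ∈ A, ContinuousLinearMap.adjoint g ∈ A := by
      intro g hg
      exact star_mem (s := A) hg
    have pair : ∀ c ∈ A.commutant, ∀ b ∈ A.commutant,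
        inner ℂ (b Ω) (O (a (c Ω))) = inner ℂ (b Ω) (a (O (c Ω))) := by
      intro c hc b hb
      have h1 : Filter.Tendsto (fun n => inner ℂ (b Ω) (O (c (q n Ω)))) Filter.atTop
          (nhds (inner ℂ (b Ω) (O (c (a Ω))))) :=
        tendsto_const_nhds.inner ((O.continuous.tendsto _).comp ((c.continuous.tendsto _).comp hq))
      have h2 : Filter.Tendsto
          (fun n => inner ℂ (b ((ContinuousLinearMap.adjoint (q n)) Ω)) (O (c Ω))) Filter.atTop
          (nhds (inner ℂ (b ((ContinuousLinearMap.adjoint a) Ω)) (O (c Ω)))) :=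
        ((b.continuous.tendsto _).comp hq').inner tendsto_const_nhds
      have e : ∀ n, inner ℂ (b Ω) (O (c (q n Ω)))
          = inner ℂ (b ((ContinuousLinearMap.adjoint (q n)) Ω)) (O (c Ω)) := by
        intro n
        have hn := hS (hqS n)
        rw [← comm _ hn c hc, ← comm _ (adjmem _ hn) b hb,
          ContinuousLinearMap.adjoint_inner_left]
        exact congrArg (fun T : H →L[ℂ] H => inner ℂ (b Ω) (T (c Ω))) (hO _ (hqS n))
      have h3 := tendsto_nhds_unique (h1.congr e) h2
      rwa [← comm _ ha c hc, ← comm _ (adjmem _ ha) b hb,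
          ContinuousLinearMap.adjoint_inner_left] at h3
    have hc : ∀ c ∈ A.commutant, (O * a) (c Ω) = (a * O) (c Ω) := by
      intro c hc
      refine hsep.eq_of_inner_right (𝕜 := ℂ) ?_
      rintro _ ⟨b, hb, rfl⟩
      exact pair c hc b hb
    refine ContinuousLinearMap.coeFn_injective ?_
    refine Continuous.ext_on hsep (O * a).continuous (a * O).continuous ?_
    rintro _ ⟨c, hcm, rfl⟩
    exact hc c hcm
  refine ⟨key, ?_⟩
  have hcent : Set.centralizer S = Set.centralizer (A : Set (H →L[ℂ] H)) := by
    apply Set.Subset.antisymm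
    · intro O hO a ha
      exact (key O (fun s hs => (hO s hs).symm) a ha).symm
    · exact Set.centralizer_subset hS
  rw [hcent, A.centralizer_centralizer]
end
end
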